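/- Let u be a monotone traveling wave solution of the balanced Allen-Cahn equation in the plane. Then u is even in x after a translation: there exists x₀ ∈ ℝ such that u(x₀ + x, y) = u(x₀ − x, y) for all (x, y) ∈ ℝ², and moreover ∂u/∂x(x, y) < 0 whenever x > x₀. -/

import Mathlib

open Real Filter MeasureTheory Metric

noncomputable def pdx (u : ℝ → ℝ → ℝ) (x y : ℝ) : ℝ := deriv (fun t => u t y) x

noncomputable def pdy (u : ℝ → ℝ → ℝ) (x y : ℝ) : ℝ := deriv (fun t => u x t) y

noncomputable def pdxx (u : ℝ → ℝ → ℝ) (x y : ℝ) : ℝ := deriv (fun t => pdx u t y) x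

noncomputable def pdyy (u : ℝ → ℝ → ℝ) (x y : ℝ) : ℝ := deriv (fun t => pdy u x t) y

/-- `F` is a balanced double-well potential. -/
def BalancedDoubleWell (F : ℝ → ℝ) : Prop :=
  ContDiff ℝ 3 F ∧ deriv F (-1) = 0 ∧ deriv F 1 = 0 ∧
  0 < deriv (deriv F) (-1) ∧ 0 < deriv (deriv F) 1 ∧
  (∀ s ∈ Set.Ioo (-1 : ℝ) 0, 0 < deriv F s) ∧
  (∀ s ∈ Set.Ioo (0 : ℝ) 1, deriv F s < 0) ∧
  F (-1) = 0 ∧ F 1 = 0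

/-- `u` is a `C³` solution of `Δu + c uᵧ = F'(u)` on `ℝ²` with `|u| ≤ 1`
which is monotone in `y`. -/
def IsSolution (F : ℝ → ℝ) (c : ℝ) (u : ℝ → ℝ → ℝ) : Prop :=
  ContDiff ℝ 3 (fun p : ℝ × ℝ => u p.1 p.2) ∧
  (∀ x y : ℝ, pdxx u x y + pdyy u x y + c * pdy u x y = deriv F (u x y)) ∧
  (∀ x y : ℝ, |u x y| ≤ 1) ∧
  (∀ x y : ℝ, 0 < pdy u x y)

/-- A monotone traveling wave solution connecting `-1` to `1`. -/
def IsTravelingWave (F : ℝ → ℝ) (c : ℝ) (u : ℝ → ℝ → ℝ) : Prop :=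
  IsSolution F c u ∧
  (∀ x : ℝ, Tendsto (fun y => u x y) atTop (nhds 1)) ∧
  (∀ x : ℝ, Tendsto (fun y => u x y) atBot (nhds (-1)))

/-! ### Partial derivatives -/

section Calculus

variable {u : ℝ → ℝ → ℝ}

lemma hasDerivAt_fst_of_hasFDerivAt {f : ℝ × ℝ → ℝ} {f' : ℝ × ℝ →L[ℝ] ℝ} {x y : ℝ}
    (h : HasFDerivAt f f' (x, y)) : HasDerivAt (fun t => f (t, y)) (f' (1, 0)) x :=
  h.comp_hasDerivAt x ((hasDerivAt_id x).prodMk (hasDerivAt_const x y))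

lemma hasDerivAt_snd_of_hasFDerivAt {f : ℝ × ℝ → ℝ} {f' : ℝ × ℝ →L[ℝ] ℝ} {x y : ℝ}
    (h : HasFDerivAt f f' (x, y)) : HasDerivAt (fun t => f (x, t)) (f' (0, 1)) y :=
  h.comp_hasDerivAt y ((hasDerivAt_const y x).prodMk (hasDerivAt_id y))

lemma pdx_eq_fderiv (h : Differentiable ℝ (fun p : ℝ × ℝ => u p.1 p.2)) (x y : ℝ) :
    pdx u x y = fderiv ℝ (fun p : ℝ × ℝ => u p.1 p.2) (x, y) (1, 0) :=
  (hasDerivAt_fst_of_hasFDerivAt (h (x, y)).hasFDerivAt).deriv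

lemma pdy_eq_fderiv (h : Differentiable ℝ (fun p : ℝ × ℝ => u p.1 p.2)) (x y : ℝ) :
    pdy u x y = fderiv ℝ (fun p : ℝ × ℝ => u p.1 p.2) (x, y) (0, 1) :=
  (hasDerivAt_snd_of_hasFDerivAt (h (x, y)).hasFDerivAt).deriv

lemma hasDerivAt_pdx (h : Differentiable ℝ (fun p : ℝ × ℝ => u p.1 p.2)) (x y : ℝ) :
    HasDerivAt (fun t => u t y) (pdx u x y) x := by
  rw [pdx_eq_fderiv h]
  exact hasDerivAt_fst_of_hasFDerivAt (h (x, y)).hasFDerivAt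

lemma hasDerivAt_pdy (h : Differentiable ℝ (fun p : ℝ × ℝ => u p.1 p.2)) (x y : ℝ) :
    HasDerivAt (fun t => u x t) (pdy u x y) y := by
  rw [pdy_eq_fderiv h]
  exact hasDerivAt_snd_of_hasFDerivAt (h (x, y)).hasFDerivAt

lemma contDiff_pdx {n m : WithTop ℕ∞} (h : ContDiff ℝ n (fun p : ℝ × ℝ => u p.1 p.2))
    (hnm : m + 1 ≤ n) : ContDiff ℝ m (fun p : ℝ × ℝ => pdx u p.1 p.2) := by
  have h1 : Differentiable ℝ (fun p : ℝ × ℝ => u p.1 p.2) :=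
    h.differentiable (by rintro rfl; simp at hnm)
  simp_rw [pdx_eq_fderiv h1]
  exact (h.fderiv_right hnm).clm_apply contDiff_const

lemma contDiff_pdy {n m : WithTop ℕ∞} (h : ContDiff ℝ n (fun p : ℝ × ℝ => u p.1 p.2))
    (hnm : m + 1 ≤ n) : ContDiff ℝ m (fun p : ℝ × ℝ => pdy u p.1 p.2) := by
  have h1 : Differentiable ℝ (fun p : ℝ × ℝ => u p.1 p.2) :=
    h.differentiable (by rintro rfl; simp at hnm)
  simp_rw [pdy_eq_fderiv h1]
  exact (h.fderiv_right hnm).clm_apply contDiff_const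

lemma pdx_pdy_comm (h : ContDiff ℝ 2 (fun p : ℝ × ℝ => u p.1 p.2)) :
    pdx (pdy u) = pdy (pdx u) := by
  funext x y
  have h1 : Differentiable ℝ (fun p : ℝ × ℝ => u p.1 p.2) := h.differentiable (by simp)
  have hx := (contDiff_pdx (m := 1) h (by norm_num)).differentiable (by simp)
  have hy := (contDiff_pdy (m := 1) h (by norm_num)).differentiable (by simp)
  have h2 : DifferentiableAt ℝ (fderiv ℝ (fun p : ℝ × ℝ => u p.1 p.2)) (x, y) :=
    ((h.fderiv_right (m := 1) (by norm_num)).differentiable (by simp)) _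
  have hs := (h.contDiffAt (x := (x, y))).isSymmSndFDerivAt (by simp)
  rw [pdx_eq_fderiv hy, pdy_eq_fderiv hx]
  simp_rw [pdx_eq_fderiv h1, pdy_eq_fderiv h1]
  rw [fderiv_clm_apply h2 (differentiableAt_const _),
    fderiv_clm_apply h2 (differentiableAt_const _)]
  simpa using hs (1, 0) (0, 1)

/-- Second derivative test: at a local minimum the second derivative is nonnegative. -/
lemma second_deriv_nonneg_of_isLocalMin {f f' : ℝ → ℝ} {x s : ℝ}
    (hf : ∀ t, HasDerivAt f (f' t) t) (hf' : HasDerivAt f' s x) (hmin : IsLocalMin f x) :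
    0 ≤ s := by
  by_contra hs
  push Not at hs
  have hd : deriv f = f' := funext fun t => (hf t).deriv
  have h1 : deriv (deriv f) x < 0 := by rwa [hd, hf'.deriv]
  have h0 : deriv f x = 0 := hmin.deriv_eq_zero
  have hmax := isLocalMax_of_deriv_deriv_neg h1 h0 (hf x).continuousAt
  have hc : f =ᶠ[nhds x] fun _ => f x := by
    filter_upwards [hmin, hmax] with t h2 h3 using le_antisymm h3 h2
  have : deriv (deriv f) x = 0 := by
    rw [hc.deriv.deriv_eq]; simp
  linarith

lemma abs_sub_le_of_hasDerivAt {f f' : ℝ → ℝ} {a b C : ℝ} (hab : a ≤ b)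
    (hf : ∀ t, HasDerivAt f (f' t) t) (hC : ∀ t ∈ Set.Icc a b, |f' t| ≤ C) :
    |f b - f a| ≤ C * (b - a) := by
  have := Convex.norm_image_sub_le_of_norm_hasDerivWithin_le (f := f) (f' := f') (s := Set.Icc a b)
    (fun t _ => (hf t).hasDerivWithinAt) (C := C) hC (convex_Icc a b)
    (Set.left_mem_Icc.2 hab) (Set.right_mem_Icc.2 hab)
  rwa [Real.norm_eq_abs, Real.norm_eq_abs, abs_of_nonneg (sub_nonneg.2 hab)] at this

end Calculus

/-! ### Interior gradient estimates -/

section GradientBound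

variable {v : ℝ → ℝ → ℝ}

/-- One-sided interior gradient bound for functions with bounded Laplacian on a unit square. -/
lemma pdx_le_of_laplacian_bound (hv : ContDiff ℝ 2 (fun p : ℝ × ℝ => v p.1 p.2)) {A x₀ y₀ : ℝ}
    (hA : 0 < A)
    (hb : ∀ x y, |x - x₀| ≤ 1 → |y - y₀| ≤ 1 → |v x y| ≤ A ∧ |pdxx v x y + pdyy v x y| ≤ A) :
    pdx v x₀ y₀ ≤ 4 * A := by
  have hd : Differentiable ℝ (fun p : ℝ × ℝ => v p.1 p.2) := hv.differentiable (by simp)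
  have hdx := (contDiff_pdx (m := 1) hv (by norm_num)).differentiable (by simp)
  have hdy := (contDiff_pdy (m := 1) hv (by norm_num)).differentiable (by simp)
  set Θ : ℝ → ℝ → ℝ := fun t y =>
    A * ((y - y₀) ^ 2 + 2 * t * (2 - t)) - (v (x₀ + t) y - v (x₀ - t) y) / 2 with hΘ
  have hcont : Continuous (fun p : ℝ × ℝ => Θ p.1 p.2) := by
    have h1 : Continuous (fun p : ℝ × ℝ => v (x₀ + p.1) p.2) :=
      hv.continuous.comp (f := fun p : ℝ × ℝ => (x₀ + p.1, p.2)) (by fun_prop)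
    have h2 : Continuous (fun p : ℝ × ℝ => v (x₀ - p.1) p.2) :=
      hv.continuous.comp (f := fun p : ℝ × ℝ => (x₀ - p.1, p.2)) (by fun_prop)
    simp only [hΘ]; fun_prop
  have hK : IsCompact (Set.Icc (0:ℝ) 1 ×ˢ Set.Icc (y₀ - 1) (y₀ + 1)) :=
    isCompact_Icc.prod isCompact_Icc
  obtain ⟨⟨s, z⟩, ⟨⟨hs0, hs1⟩, ⟨hz0, hz1⟩⟩, hmin⟩ := hK.exists_isMinOn
    ⟨(0, y₀), by constructor <;> simp⟩ hcont.continuousOn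
  simp only at hs0 hs1 hz0 hz1
  have hge : 0 ≤ Θ s z := by
    by_contra hneg
    push Not at hneg
    have habs : ∀ t y, 0 ≤ t → t ≤ 1 → |y - y₀| ≤ 1 → (v (x₀ + t) y - v (x₀ - t) y) / 2 ≤ A := by
      intro t y h0 h1 hy
      have e1 := (hb (x₀ + t) y (by rw [add_sub_cancel_left, abs_of_nonneg h0]; exact h1) hy).1
      have e2 := (hb (x₀ - t) y (by
        rw [sub_sub_cancel_left, abs_neg, abs_of_nonneg h0]; exact h1) hy).1
      linarith [(abs_le.1 e1).2, (abs_le.1 e2).1]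
    have hzabs : |z - y₀| ≤ 1 := abs_le.2 ⟨by linarith, by linarith⟩
    have h1 := habs s z hs0 hs1 hzabs
    have hs0' : 0 < s := by
      rcases hs0.eq_or_lt with h | h
      · subst h; simp only [hΘ] at hneg
        simp only [add_zero, sub_zero, sub_self, zero_div, mul_zero, zero_mul] at hneg
        nlinarith [mul_nonneg hA.le (sq_nonneg (z - y₀))]
      · exact h
    have hs1' : s < 1 := by
      rcases hs1.eq_or_lt with h | h
      · subst h; simp only [hΘ] at hneg
        nlinarith [mul_nonneg hA.le (sq_nonneg (z - y₀))]
      · exact h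
    have h2t : 0 ≤ A * (2 * s * (2 - s)) := by
      apply mul_nonneg hA.le; nlinarith
    have hz0' : y₀ - 1 < z := by
      rcases hz0.eq_or_lt with h | h
      · subst h; simp only [hΘ] at hneg; nlinarith
      · exact h
    have hz1' : z < y₀ + 1 := by
      rcases hz1.eq_or_lt with h | h
      · subst h; simp only [hΘ] at hneg; nlinarith
      · exact h
    have hlt : IsLocalMin (fun t => Θ t z) s := by
      filter_upwards [Ioo_mem_nhds hs0' hs1'] with t ht
      exact hmin (a := (t, z)) ⟨⟨ht.1.le, ht.2.le⟩, ⟨hz0, hz1⟩⟩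
    have hly : IsLocalMin (fun y => Θ s y) z := by
      filter_upwards [Ioo_mem_nhds hz0' hz1'] with y hy
      exact hmin (a := (s, y)) ⟨⟨hs0, hs1⟩, ⟨hy.1.le, hy.2.le⟩⟩
    have hplus : ∀ {g : ℝ → ℝ} {g' t : ℝ}, HasDerivAt g g' (x₀ + t) →
        HasDerivAt (fun t => g (x₀ + t)) g' t := fun {g g' t} h => by
      simpa using h.comp_const_add x₀ t
    have hminus : ∀ {g : ℝ → ℝ} {g' t : ℝ}, HasDerivAt g g' (x₀ - t) →
        HasDerivAt (fun t => g (x₀ - t)) (-g') t := fun {g g' t} h => by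
      simpa using h.comp_const_sub x₀ t
    have d1 : ∀ t, HasDerivAt (fun t => Θ t z)
        (A * (4 - 4 * t) - (pdx v (x₀ + t) z + pdx v (x₀ - t) z) / 2) t := by
      intro t
      have := ((((((hasDerivAt_id t).const_mul 2).mul ((hasDerivAt_id t).const_sub 2)).const_add
        ((z - y₀) ^ 2)).const_mul A).sub (((hplus (hasDerivAt_pdx hd (x₀ + t) z)).sub
          (hminus (hasDerivAt_pdx hd (x₀ - t) z))).div_const 2))
      refine (this.congr_deriv ?_)
      simp only [id]; ring
    have d2 : HasDerivAt (fun t => A * (4 - 4 * t) - (pdx v (x₀ + t) z + pdx v (x₀ - t) z) / 2)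
        (-4 * A - (pdxx v (x₀ + s) z - pdxx v (x₀ - s) z) / 2) s := by
      have := ((((hasDerivAt_id s).const_mul 4).const_sub 4).const_mul A).sub
        (((hplus (hasDerivAt_pdx hdx (x₀ + s) z)).add
          (hminus (hasDerivAt_pdx hdx (x₀ - s) z))).div_const 2)
      refine (this.congr_deriv ?_)
      simp only [pdxx, pdx]; ring
    have d3 : ∀ y, HasDerivAt (fun y => Θ s y)
        (A * (2 * (y - y₀)) - (pdy v (x₀ + s) y - pdy v (x₀ - s) y) / 2) y := by
      intro y
      have := (((((hasDerivAt_id y).sub_const y₀).pow 2).add_const (2 * s * (2 - s))).const_mul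
        A).sub (((hasDerivAt_pdy hd (x₀ + s) y).sub (hasDerivAt_pdy hd (x₀ - s) y)).div_const 2)
      refine (this.congr_deriv ?_)
      simp
    have d4 : HasDerivAt (fun y => A * (2 * (y - y₀)) -
        (pdy v (x₀ + s) y - pdy v (x₀ - s) y) / 2)
        (2 * A - (pdyy v (x₀ + s) z - pdyy v (x₀ - s) z) / 2) z := by
      have := ((((hasDerivAt_id z).sub_const y₀).const_mul 2).const_mul A).sub
        (((hasDerivAt_pdy hdy (x₀ + s) z).sub (hasDerivAt_pdy hdy (x₀ - s) z)).div_const 2)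
      refine (this.congr_deriv ?_)
      simp only [pdyy, pdy]; ring
    have e1 := second_deriv_nonneg_of_isLocalMin d1 d2 hlt
    have e2 := second_deriv_nonneg_of_isLocalMin d3 d4 hly
    have e3 := (hb (x₀ + s) z (by rw [add_sub_cancel_left, abs_of_nonneg hs0]; exact hs1) hzabs).2
    have e4 := (hb (x₀ - s) z (by
        rw [sub_sub_cancel_left, abs_neg, abs_of_nonneg hs0]; exact hs1) hzabs).2
    linarith [(abs_le.1 e3).1, (abs_le.1 e4).2]
  have hall : ∀ t ∈ Set.Icc (0:ℝ) 1, (v (x₀ + t) y₀ - v (x₀ - t) y₀) / 2 ≤ 4 * A * t := by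
    intro t ht
    have := hge.trans (hmin (a := (t, y₀)) ⟨ht, by simp⟩)
    simp only [hΘ] at this
    nlinarith [mul_nonneg hA.le (sq_nonneg t)]
  by_contra hlt
  push Not at hlt
  have hder : HasDerivAt (fun t => 4 * A * t - (v (x₀ + t) y₀ - v (x₀ - t) y₀) / 2)
      (4 * A - pdx v x₀ y₀) 0 := by
    have a1 : HasDerivAt (fun t => v (x₀ + t) y₀) (pdx v x₀ y₀) 0 := by
      simpa using (HasDerivAt.comp_const_add (f := fun x => v x y₀) x₀ 0
        (by simpa using hasDerivAt_pdx hd x₀ y₀))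
    have a2 : HasDerivAt (fun t => v (x₀ - t) y₀) (-pdx v x₀ y₀) 0 := by
      simpa using (HasDerivAt.comp_const_sub (f := fun x => v x y₀) x₀ 0
        (by simpa using hasDerivAt_pdx hd x₀ y₀))
    refine ((((hasDerivAt_id (0:ℝ)).const_mul (4 * A)).sub
      ((a1.sub a2).div_const 2))).congr_deriv ?_
    ring
  have hslope := hder.tendsto_slope_zero_right
  have : 0 ≤ 4 * A - pdx v x₀ y₀ := by
    refine ge_of_tendsto hslope ?_
    filter_upwards [Ioc_mem_nhdsGT (zero_lt_one' ℝ)] with t ht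
    have := hall t ⟨ht.1.le, ht.2⟩
    simp only [zero_add, add_zero, sub_zero, sub_self, zero_div, mul_zero, smul_eq_mul]
    exact mul_nonneg (inv_nonneg.2 ht.1.le) (by linarith)
  linarith

lemma abs_pdx_le_of_laplacian_bound (hv : ContDiff ℝ 2 (fun p : ℝ × ℝ => v p.1 p.2))
    {A x₀ y₀ : ℝ} (hA : 0 < A)
    (hb : ∀ x y, |x - x₀| ≤ 1 → |y - y₀| ≤ 1 → |v x y| ≤ A ∧ |pdxx v x y + pdyy v x y| ≤ A) :
    |pdx v x₀ y₀| ≤ 4 * A := by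
  refine abs_le.2 ⟨?_, pdx_le_of_laplacian_bound hv hA hb⟩
  have hx : ∀ w : ℝ → ℝ → ℝ, pdx (fun x y => -w x y) = fun x y => -pdx w x y := fun w => by
    funext x y; simp only [pdx]; exact deriv.fun_neg
  have hy : ∀ w : ℝ → ℝ → ℝ, pdy (fun x y => -w x y) = fun x y => -pdy w x y := fun w => by
    funext x y; simp only [pdy]; exact deriv.fun_neg
  have hxx : pdxx (fun x y => -v x y) = fun x y => -pdxx v x y := by
    change pdx (pdx _) = fun x y => - pdx (pdx v) x y
    rw [hx, hx]
  have hyy : pdyy (fun x y => -v x y) = fun x y => -pdyy v x y := by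
    change pdy (pdy _) = fun x y => - pdy (pdy v) x y
    rw [hy, hy]
  have := pdx_le_of_laplacian_bound (v := fun x y => -v x y) hv.neg hA (x₀ := x₀) (y₀ := y₀)
    (fun x y h1 h2 => by
      rw [hxx, hyy, abs_neg, ← neg_add, abs_neg]
      exact hb x y h1 h2)
  rw [hx] at this
  linarith

lemma abs_pdy_le_of_laplacian_bound (hv : ContDiff ℝ 2 (fun p : ℝ × ℝ => v p.1 p.2))
    {A x₀ y₀ : ℝ} (hA : 0 < A)
    (hb : ∀ x y, |x - x₀| ≤ 1 → |y - y₀| ≤ 1 → |v x y| ≤ A ∧ |pdxx v x y + pdyy v x y| ≤ A) :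
    |pdy v x₀ y₀| ≤ 4 * A :=
  abs_pdx_le_of_laplacian_bound (v := fun x y => v y x) (x₀ := y₀) (y₀ := x₀)
    (hv.comp (f := fun p : ℝ × ℝ => (p.2, p.1)) (contDiff_snd.prodMk contDiff_fst)) hA
    (fun x y h1 h2 => ⟨(hb y x h2 h1).1, by rw [add_comm]; exact (hb y x h2 h1).2⟩)

/-- Interior gradient estimate for the operator `Δ + c ∂_y` on a unit square. -/
lemma exists_gradient_bound {c : ℝ} (hc : 0 < c) : ∃ C : ℝ, 0 < C ∧
    ∀ v : ℝ → ℝ → ℝ, ContDiff ℝ 2 (fun p : ℝ × ℝ => v p.1 p.2) → ∀ A x₀ y₀ : ℝ, 0 < A →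
    (∀ x y, |x - x₀| ≤ 1 → |y - y₀| ≤ 1 →
      |v x y| ≤ A ∧ |pdxx v x y + pdyy v x y + c * pdy v x y| ≤ A) →
    |pdx v x₀ y₀| ≤ C * A ∧ |pdy v x₀ y₀| ≤ C * A := by
  set k : ℝ := Real.exp (c / 2) * (1 + c ^ 2 / 4) with hk
  have hkpos : 0 < k := by positivity
  refine ⟨4 * k + c / 2, by positivity, fun v hv A x₀ y₀ hA hb => ?_⟩
  have hd : Differentiable ℝ (fun p : ℝ × ℝ => v p.1 p.2) := hv.differentiable (by simp)
  have hdy := (contDiff_pdy (m := 1) hv (by norm_num)).differentiable (by simp)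
  set E : ℝ → ℝ := fun y => Real.exp (c / 2 * (y - y₀)) with hE
  have hEd : ∀ y, HasDerivAt E (c / 2 * E y) y := fun y => by
    have := ((((hasDerivAt_id y).sub_const y₀).const_mul (c / 2)).exp)
    refine this.congr_deriv ?_
    simp [hE]; ring
  set w : ℝ → ℝ → ℝ := fun x y => E y * v x y with hw
  have hwc : ContDiff ℝ 2 (fun p : ℝ × ℝ => w p.1 p.2) := by
    simp only [hw, hE]
    exact (Real.contDiff_exp.comp (contDiff_const.mul (contDiff_snd.sub contDiff_const))).mul hv
  have hwx : pdx w = fun x y => E y * pdx v x y := by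
    funext x y; exact ((hasDerivAt_pdx hd x y).const_mul (E y)).deriv
  have hwxx : pdxx w = fun x y => E y * pdxx v x y := by
    funext x y
    have hdx := (contDiff_pdx (m := 1) hv (by norm_num)).differentiable (by simp)
    simp only [pdxx, hwx]
    exact ((hasDerivAt_pdx hdx x y).const_mul (E y)).deriv
  have hwy : pdy w = fun x y => c / 2 * E y * v x y + E y * pdy v x y := by
    funext x y; exact ((hEd y).mul (hasDerivAt_pdy hd x y)).deriv
  have hwyy : pdyy w = fun x y => E y * (pdyy v x y + c * pdy v x y + c ^ 2 / 4 * v x y) := by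
    funext x y
    simp only [pdyy, hwy]
    refine (((((hEd y).const_mul (c / 2)).mul (hasDerivAt_pdy hd x y)).add
      ((hEd y).mul (hasDerivAt_pdy hdy x y))).congr_deriv ?_).deriv
    simp only [pdy]; ring
  have hEb : ∀ y, |y - y₀| ≤ 1 → E y ≤ Real.exp (c / 2) := fun y hy => by
    apply Real.exp_le_exp.2
    nlinarith [(abs_le.1 hy).2]
  have hbw : ∀ x y, |x - x₀| ≤ 1 → |y - y₀| ≤ 1 →
      |w x y| ≤ k * A ∧ |pdxx w x y + pdyy w x y| ≤ k * A := by
    intro x y hx hy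
    obtain ⟨h1, h2⟩ := hb x y hx hy
    have hEp : 0 < E y := Real.exp_pos _
    constructor
    · simp only [hw, abs_mul, abs_of_pos hEp, hk]
      have : E y * |v x y| ≤ Real.exp (c / 2) * A := by gcongr; exact hEb y hy
      have : 0 ≤ Real.exp (c / 2) * (c ^ 2 / 4) * A := by positivity
      nlinarith
    · have e : pdxx w x y + pdyy w x y =
          E y * ((pdxx v x y + pdyy v x y + c * pdy v x y) + c ^ 2 / 4 * v x y) := by
        rw [hwxx, hwyy]; ring
      rw [e, abs_mul, abs_of_pos hEp, hk, mul_assoc]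
      gcongr
      · exact hEb y hy
      · refine (abs_add_le _ _).trans ?_
        rw [abs_mul, abs_of_nonneg (by positivity : (0:ℝ) ≤ c ^ 2 / 4), one_add_mul]
        gcongr
  have hE0 : E y₀ = 1 := by simp [hE]
  have gx := abs_pdx_le_of_laplacian_bound hwc (mul_pos hkpos hA) hbw
  have gy := abs_pdy_le_of_laplacian_bound hwc (mul_pos hkpos hA) hbw
  rw [hwx] at gx
  rw [hwy] at gy
  simp only [hE0, one_mul, mul_one] at gx gy
  have h0 := (hb x₀ y₀ (by simp) (by simp)).1
  constructor
  · nlinarith [mul_pos hc hA]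
  · have h3 : |c / 2 * v x₀ y₀| ≤ c / 2 * A := by
      rw [abs_mul, abs_of_pos (half_pos hc)]; gcongr
    have h4 : |pdy v x₀ y₀| ≤ |c / 2 * v x₀ y₀ + pdy v x₀ y₀| + |c / 2 * v x₀ y₀| := by
      have := abs_sub (c / 2 * v x₀ y₀ + pdy v x₀ y₀) (c / 2 * v x₀ y₀)
      rwa [add_sub_cancel_left] at this
    nlinarith

end GradientBound

/-! ### The double-well potential -/

section Potential

/-- The speed `√(2F)` of the heteroclinic connection. -/
noncomputable def wellSpeed (F : ℝ → ℝ) (s : ℝ) : ℝ := √(2 * F s)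

/-- The primitive of `√(2F)` vanishing at `-1`. -/
noncomputable def wellEnergy (F : ℝ → ℝ) (s : ℝ) : ℝ := ∫ t in (-1)..s, wellSpeed F t

lemma exists_slope_lower_bound {G : ℝ → ℝ} (hG : ContDiff ℝ 1 G) {a : ℝ} (ha : 0 < deriv G a) :
    ∃ μ > 0, ∃ δ > 0, ∀ s t, a - δ ≤ s → s ≤ t → t ≤ a + δ → μ * (t - s) ≤ G t - G s := by
  have hc : Continuous (deriv G) := hG.continuous_deriv le_rfl
  have h1 : ∀ᶠ s in nhds a, deriv G a / 2 < deriv G s :=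
    hc.continuousAt.eventually (lt_mem_nhds (by linarith))
  obtain ⟨δ, hδ, h2⟩ := Metric.eventually_nhds_iff.1 h1
  refine ⟨deriv G a / 2, by linarith, δ / 2, by linarith, fun s t hs hst ht => ?_⟩
  refine Convex.mul_sub_le_image_sub_of_le_deriv (convex_Icc (a - δ / 2) (a + δ / 2))
    hG.continuous.continuousOn (hG.differentiable (by simp)).differentiableOn
    (fun x hx => (h2 ?_).le) s ⟨hs, by linarith⟩ t ⟨by linarith, ht⟩ hst
  rw [interior_Icc] at hx
  rw [Real.dist_eq, abs_lt]
  constructor <;> linarith [hx.1, hx.2]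

namespace BalancedDoubleWell

variable {F : ℝ → ℝ}

lemma differentiable (hF : BalancedDoubleWell F) : Differentiable ℝ F :=
  hF.1.differentiable (by simp)

lemma contDiff_deriv (hF : BalancedDoubleWell F) : ContDiff ℝ 2 (deriv F) :=
  ((contDiff_succ_iff_deriv (n := 2)).1 hF.1).2.2

lemma hasDerivAt (hF : BalancedDoubleWell F) (s : ℝ) : HasDerivAt F (deriv F s) s :=
  (hF.differentiable s).hasDerivAt

lemma hasDerivAt_deriv (hF : BalancedDoubleWell F) (s : ℝ) :
    HasDerivAt (deriv F) (deriv (deriv F) s) s :=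
  (hF.contDiff_deriv.differentiable (by simp) s).hasDerivAt

lemma continuous_deriv_deriv (hF : BalancedDoubleWell F) : Continuous (deriv (deriv F)) :=
  hF.contDiff_deriv.continuous_deriv (by norm_num)

lemma pos (hF : BalancedDoubleWell F) {s : ℝ} (h1 : -1 < s) (h2 : s < 1) : 0 < F s := by
  obtain ⟨hd, -, -, -, -, hp, hn, h3, h4⟩ := hF
  have hc : Continuous F := hd.continuous
  rcases le_total s 0 with h | h
  · have := strictMonoOn_of_deriv_pos (convex_Icc (-1 : ℝ) 0) hc.continuousOn
      (fun x hx => hp x (by rwa [interior_Icc] at hx))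
    linarith [this ⟨le_rfl, by norm_num⟩ ⟨h1.le, h⟩ h1]
  · have := strictAntiOn_of_deriv_neg (convex_Icc (0 : ℝ) 1) hc.continuousOn
      (fun x hx => hn x (by rwa [interior_Icc] at hx))
    linarith [this ⟨h, h2.le⟩ ⟨by norm_num, le_rfl⟩ h2]

lemma nonneg (hF : BalancedDoubleWell F) {s : ℝ} (h1 : -1 ≤ s) (h2 : s ≤ 1) : 0 ≤ F s := by
  rcases h1.eq_or_lt with rfl | h1
  · exact hF.2.2.2.2.2.2.2.1.ge
  rcases h2.eq_or_lt with rfl | h2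
  · exact hF.2.2.2.2.2.2.2.2.ge
  exact (hF.pos h1 h2).le

/-- Uniform monotonicity of `F'` in both wells. -/
lemma exists_well (hF : BalancedDoubleWell F) : ∃ μ > 0, ∃ δ > 0, δ < 1 ∧
    (∀ s t, -1 ≤ s → s ≤ t → t ≤ -1 + δ → μ * (t - s) ≤ deriv F t - deriv F s) ∧
    (∀ s t, 1 - δ ≤ s → s ≤ t → t ≤ 1 → μ * (t - s) ≤ deriv F t - deriv F s) := by
  have hd : ContDiff ℝ 1 (deriv F) := hF.contDiff_deriv.of_le (by norm_num)
  obtain ⟨μ₁, hμ₁, δ₁, hδ₁, h1⟩ := exists_slope_lower_bound hd hF.2.2.2.1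
  obtain ⟨μ₂, hμ₂, δ₂, hδ₂, h2⟩ := exists_slope_lower_bound hd hF.2.2.2.2.1
  refine ⟨min μ₁ μ₂, lt_min hμ₁ hμ₂, min (1 / 2) (min δ₁ δ₂), by positivity,
    (min_le_left _ _).trans_lt (by norm_num), fun s t hs hst ht => ?_, fun s t hs hst ht => ?_⟩
  · have h3 : min (1 / 2) (min δ₁ δ₂) ≤ δ₁ := (min_le_right _ _).trans (min_le_left _ _)
    exact (mul_le_mul_of_nonneg_right (min_le_left _ _) (by linarith)).trans
      (h1 s t (by linarith) hst (by linarith))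
  · have h3 : min (1 / 2) (min δ₁ δ₂) ≤ δ₂ := (min_le_right _ _).trans (min_le_right _ _)
    exact (mul_le_mul_of_nonneg_right (min_le_right _ _) (by linarith)).trans
      (h2 s t (by linarith) hst (by linarith))

lemma exists_bound (hF : BalancedDoubleWell F) : ∃ M > 0, ∀ s, |s| ≤ 1 →
    |F s| ≤ M ∧ |deriv F s| ≤ M ∧ |deriv (deriv F) s| ≤ M := by
  have hk : IsCompact (Set.Icc (-1 : ℝ) 1) := isCompact_Icc
  obtain ⟨A, hA⟩ := hk.exists_bound_of_continuousOn hF.differentiable.continuous.continuousOn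
  obtain ⟨B, hB⟩ := hk.exists_bound_of_continuousOn hF.contDiff_deriv.continuous.continuousOn
  obtain ⟨D, hD⟩ := hk.exists_bound_of_continuousOn hF.continuous_deriv_deriv.continuousOn
  refine ⟨|A| + |B| + |D| + 1, by positivity, fun s hs => ?_⟩
  have hs' := abs_le.1 hs
  have h1 := hA s hs'
  have h2 := hB s hs'
  have h3 := hD s hs'
  rw [Real.norm_eq_abs] at h1 h2 h3
  have := abs_nonneg A
  have := abs_nonneg B
  have := abs_nonneg D
  refine ⟨?_, ?_, ?_⟩ <;> linarith [le_abs_self A, le_abs_self B, le_abs_self D]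

lemma abs_deriv_sub_le (hF : BalancedDoubleWell F) {M : ℝ}
    (hM : ∀ s, |s| ≤ 1 → |deriv (deriv F) s| ≤ M) {s t : ℝ} (hs : |s| ≤ 1) (ht : |t| ≤ 1) :
    |deriv F t - deriv F s| ≤ M * |t - s| :=
  Convex.norm_image_sub_le_of_norm_hasDerivWithin_le (s := Set.Icc (-1 : ℝ) 1)
    (fun x _ => (hF.hasDerivAt_deriv x).hasDerivWithinAt) (fun x hx => hM x (abs_le.2 hx))
    (convex_Icc _ _) (abs_le.1 hs) (abs_le.1 ht)

lemma continuous_wellSpeed (hF : BalancedDoubleWell F) : Continuous (wellSpeed F) :=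
  (continuous_const.mul hF.differentiable.continuous).sqrt

lemma wellSpeed_sq (hF : BalancedDoubleWell F) {s : ℝ} (hs : |s| ≤ 1) :
    wellSpeed F s ^ 2 = 2 * F s :=
  Real.sq_sqrt (by have := hF.nonneg (abs_le.1 hs).1 (abs_le.1 hs).2; linarith)

lemma wellSpeed_pos (hF : BalancedDoubleWell F) {s : ℝ} (h1 : -1 < s) (h2 : s < 1) :
    0 < wellSpeed F s :=
  Real.sqrt_pos.2 (by have := hF.pos h1 h2; linarith)

end BalancedDoubleWell

lemma wellSpeed_nonneg (F : ℝ → ℝ) (s : ℝ) : 0 ≤ wellSpeed F s := Real.sqrt_nonneg _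

namespace BalancedDoubleWell

variable {F : ℝ → ℝ}

lemma wellSpeed_neg_one (hF : BalancedDoubleWell F) : wellSpeed F (-1) = 0 := by
  simp [wellSpeed, hF.2.2.2.2.2.2.2.1]

lemma exists_le_wellSpeed (hF : BalancedDoubleWell F) {δ : ℝ} (hδ : 0 < δ) :
    ∃ m > 0, ∀ s, -1 + δ ≤ s → s ≤ 1 - δ → m ≤ wellSpeed F s := by
  by_cases hne : (Set.Icc (-1 + δ) (1 - δ)).Nonempty
  · obtain ⟨s, hs, hmin⟩ := isCompact_Icc.exists_isMinOn hne hF.continuous_wellSpeed.continuousOn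
    exact ⟨wellSpeed F s, hF.wellSpeed_pos (by linarith [hs.1]) (by linarith [hs.2]),
      fun t h1 h2 => hmin ⟨h1, h2⟩⟩
  · exact ⟨1, one_pos, fun s h1 h2 => (hne ⟨s, h1, h2⟩).elim⟩

lemma hasDerivAt_wellEnergy (hF : BalancedDoubleWell F) (s : ℝ) :
    HasDerivAt (wellEnergy F) (wellSpeed F s) s :=
  intervalIntegral.integral_hasDerivAt_right (hF.continuous_wellSpeed.intervalIntegrable _ _)
    (hF.continuous_wellSpeed.stronglyMeasurableAtFilter _ _) hF.continuous_wellSpeed.continuousAt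

lemma monotone_wellEnergy (hF : BalancedDoubleWell F) : Monotone (wellEnergy F) :=
  monotone_of_deriv_nonneg (fun s => (hF.hasDerivAt_wellEnergy s).differentiableAt) fun s => by
    rw [(hF.hasDerivAt_wellEnergy s).deriv]; exact wellSpeed_nonneg F s

lemma continuous_wellEnergy (hF : BalancedDoubleWell F) : Continuous (wellEnergy F) :=
  continuous_iff_continuousAt.2 fun s => (hF.hasDerivAt_wellEnergy s).continuousAt

lemma exists_abs_deriv_le_wellSpeed (hF : BalancedDoubleWell F) :
    ∃ Λ > 0, ∀ s, |s| ≤ 1 → |deriv F s| ≤ Λ * wellSpeed F s := by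
  obtain ⟨μ, hμ, δ, hδ, hδ1, hl, hr⟩ := hF.exists_well
  obtain ⟨M, hM, hb⟩ := hF.exists_bound
  obtain ⟨m, hm, hmid⟩ := hF.exists_le_wellSpeed hδ
  have hL := fun s hs t ht => hF.abs_deriv_sub_le (fun s hs => (hb s hs).2.2)
    (s := s) (t := t) hs ht
  have hsq : 0 < √μ := Real.sqrt_pos.2 hμ
  refine ⟨M / √μ + M / m, by positivity, fun s hs => ?_⟩
  have hs' := abs_le.1 hs
  have hp := wellSpeed_nonneg F s
  have well : ∀ d, 0 ≤ d → |deriv F s| ≤ M * d → μ / 2 * d ^ 2 ≤ F s →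
      |deriv F s| ≤ (M / √μ + M / m) * wellSpeed F s := by
    intro d hd h1 h2
    have h3 : √μ * d ≤ wellSpeed F s := by
      apply Real.le_sqrt_of_sq_le
      rw [mul_pow, Real.sq_sqrt hμ.le]; linarith
    calc |deriv F s| ≤ M * d := h1
      _ = M / √μ * (√μ * d) := by field_simp
      _ ≤ M / √μ * wellSpeed F s := by gcongr
      _ ≤ _ := by rw [add_mul]; exact le_add_of_nonneg_right (by positivity)
  rcases le_or_gt s (-1 + δ) with h | h
  · refine well (s + 1) (by linarith [hs'.1]) ?_ ?_
    · have := hL (-1) (by norm_num) s hs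
      rwa [hF.2.1, sub_zero, sub_neg_eq_add, abs_of_nonneg (a := s + 1) (by linarith [hs'.1])]
        at this
    · have hmono : MonotoneOn (fun t => F t - μ / 2 * (t + 1) ^ 2) (Set.Icc (-1) (-1 + δ)) := by
        have hd : ∀ t, HasDerivAt (fun t => F t - μ / 2 * (t + 1) ^ 2)
            (deriv F t - μ / 2 * (2 * (t + 1))) t := fun t => by
          have := (((hasDerivAt_id t).add_const (1 : ℝ)).pow 2).const_mul (μ / 2)
          exact ((hF.hasDerivAt t).sub this).congr_deriv (by simp)
        refine monotoneOn_of_deriv_nonneg (convex_Icc _ _)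
          (fun t _ => (hd t).continuousAt.continuousWithinAt)
          (fun t _ => (hd t).differentiableAt.differentiableWithinAt) fun t ht => ?_
        rw [interior_Icc] at ht
        rw [(hd t).deriv]
        have := hl (-1) t le_rfl ht.1.le ht.2.le
        rw [hF.2.1] at this
        linarith
      have := hmono ⟨le_rfl, by linarith⟩ ⟨hs'.1, h⟩ hs'.1
      simp only [hF.2.2.2.2.2.2.2.1] at this
      norm_num at this
      linarith
  rcases le_or_gt (1 - δ) s with h' | h'
  · refine well (1 - s) (by linarith [hs'.2]) ?_ ?_
    · have := hL s hs 1 (by norm_num)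
      rwa [hF.2.2.1, zero_sub, abs_neg, abs_of_nonneg (a := 1 - s) (by linarith [hs'.2])]
        at this
    · have hmono : AntitoneOn (fun t => F t - μ / 2 * (1 - t) ^ 2) (Set.Icc (1 - δ) 1) := by
        have hd : ∀ t, HasDerivAt (fun t => F t - μ / 2 * (1 - t) ^ 2)
            (deriv F t - μ / 2 * (2 * (1 - t) * (-1))) t := fun t => by
          have := (((hasDerivAt_id t).const_sub (1 : ℝ)).pow 2).const_mul (μ / 2)
          exact ((hF.hasDerivAt t).sub this).congr_deriv (by simp)
        refine antitoneOn_of_deriv_nonpos (convex_Icc _ _)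
          (fun t _ => (hd t).continuousAt.continuousWithinAt)
          (fun t _ => (hd t).differentiableAt.differentiableWithinAt) fun t ht => ?_
        rw [interior_Icc] at ht
        rw [(hd t).deriv]
        have := hr t 1 ht.1.le ht.2.le le_rfl
        rw [hF.2.2.1] at this
        linarith
      have := hmono ⟨h', hs'.2⟩ ⟨by linarith, le_rfl⟩ hs'.2
      simp only [hF.2.2.2.2.2.2.2.2] at this
      norm_num at this
      linarith
  · have h1 := hmid s h.le h'.le
    calc |deriv F s| ≤ M := (hb s hs).2.1
      _ = M / m * m := by field_simp
      _ ≤ M / m * wellSpeed F s := by gcongr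
      _ ≤ _ := by rw [add_mul]; exact le_add_of_nonneg_left (by positivity)

/-- `√(2F)` is Lipschitz on `[-1, 1]`. -/
lemma exists_lipschitz_wellSpeed (hF : BalancedDoubleWell F) :
    ∃ Λ > 0, ∀ s t, |s| ≤ 1 → |t| ≤ 1 → |wellSpeed F s - wellSpeed F t| ≤ Λ * |s - t| := by
  obtain ⟨Λ, hΛ, h⟩ := hF.exists_abs_deriv_le_wellSpeed
  refine ⟨Λ, hΛ, ?_⟩
  have key : ∀ s t, |s| ≤ 1 → |t| ≤ 1 → s < t →
      |wellSpeed F s - wellSpeed F t| ≤ Λ * |s - t| := by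
    intro s t hs ht hst
    have hs' := abs_le.1 hs
    have ht' := abs_le.1 ht
    obtain ⟨r, hr, hslope⟩ := exists_hasDerivAt_eq_slope (wellSpeed F)
      (fun r => 2 * deriv F r / (2 * √(2 * F r))) hst hF.continuous_wellSpeed.continuousOn
      (fun r hr => ((hF.hasDerivAt r).const_mul 2).sqrt
        (by have := hF.pos (hs'.1.trans_lt hr.1) (hr.2.trans_le ht'.2); positivity))
    have hr1 : |r| ≤ 1 := abs_le.2 ⟨by linarith [hr.1], by linarith [hr.2]⟩
    have hp := hF.wellSpeed_pos (hs'.1.trans_lt hr.1) (hr.2.trans_le ht'.2)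
    have h1 : |(wellSpeed F t - wellSpeed F s) / (t - s)| ≤ Λ := by
      rw [← hslope, show √(2 * F r) = wellSpeed F r from rfl, mul_div_mul_left _ _ two_ne_zero,
        abs_div, abs_of_pos hp, div_le_iff₀ hp]
      exact h r hr1
    rw [abs_div, div_le_iff₀ (abs_pos.2 (sub_ne_zero.2 hst.ne'))] at h1
    rwa [abs_sub_comm, abs_sub_comm s t]
  intro s t hs ht
  rcases lt_trichotomy s t with hst | rfl | hst
  · exact key s t hs ht hst
  · simp
  · rw [abs_sub_comm, abs_sub_comm s t]; exact key t s ht hs hst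

end BalancedDoubleWell

end Potential

/-! ### Regularity and a priori bounds -/

section Bounds

variable {F : ℝ → ℝ} {c : ℝ} {u : ℝ → ℝ → ℝ}

lemma pdx_comp_neg (u : ℝ → ℝ → ℝ) :
    pdx (fun x y => u (-x) y) = fun x y => -pdx u (-x) y := by
  funext x y
  exact deriv_comp_neg (fun t => u t y) x

namespace IsTravelingWave

lemma contDiff (hu : IsTravelingWave F c u) : ContDiff ℝ 3 (fun p : ℝ × ℝ => u p.1 p.2) := hu.1.1

lemma contDiff_two (hu : IsTravelingWave F c u) : ContDiff ℝ 2 (fun p : ℝ × ℝ => u p.1 p.2) :=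
  hu.contDiff.of_le (by norm_num)

lemma contDiff_pdx (hu : IsTravelingWave F c u) :
    ContDiff ℝ 2 (fun p : ℝ × ℝ => pdx u p.1 p.2) :=
  _root_.contDiff_pdx hu.contDiff (by norm_num)

lemma contDiff_pdy (hu : IsTravelingWave F c u) :
    ContDiff ℝ 2 (fun p : ℝ × ℝ => pdy u p.1 p.2) :=
  _root_.contDiff_pdy hu.contDiff (by norm_num)

lemma contDiff_pdx_pdx (hu : IsTravelingWave F c u) :
    ContDiff ℝ 1 (fun p : ℝ × ℝ => pdx (pdx u) p.1 p.2) :=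
  _root_.contDiff_pdx hu.contDiff_pdx (by norm_num)

lemma contDiff_pdy_pdy (hu : IsTravelingWave F c u) :
    ContDiff ℝ 1 (fun p : ℝ × ℝ => pdy (pdy u) p.1 p.2) :=
  _root_.contDiff_pdy hu.contDiff_pdy (by norm_num)

lemma differentiable (hu : IsTravelingWave F c u) :
    Differentiable ℝ (fun p : ℝ × ℝ => u p.1 p.2) := hu.contDiff.differentiable (by simp)

lemma hasDerivAt_fst (hu : IsTravelingWave F c u) (x y : ℝ) :
    HasDerivAt (fun t => u t y) (pdx u x y) x := hasDerivAt_pdx hu.differentiable x y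

lemma hasDerivAt_snd (hu : IsTravelingWave F c u) (x y : ℝ) :
    HasDerivAt (fun t => u x t) (pdy u x y) y := hasDerivAt_pdy hu.differentiable x y

lemma hasDerivAt_pdx_fst (hu : IsTravelingWave F c u) (x y : ℝ) :
    HasDerivAt (fun t => pdx u t y) (pdx (pdx u) x y) x :=
  hasDerivAt_pdx (hu.contDiff_pdx.differentiable (by simp)) x y

lemma pdy_pdx (hu : IsTravelingWave F c u) : pdy (pdx u) = pdx (pdy u) :=
  (pdx_pdy_comm hu.contDiff_two).symm

lemma hasDerivAt_pdx_snd (hu : IsTravelingWave F c u) (x y : ℝ) :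
    HasDerivAt (fun t => pdx u x t) (pdx (pdy u) x y) y := by
  rw [← hu.pdy_pdx]
  exact hasDerivAt_pdy (hu.contDiff_pdx.differentiable (by simp)) x y

lemma hasDerivAt_pdy_fst (hu : IsTravelingWave F c u) (x y : ℝ) :
    HasDerivAt (fun t => pdy u t y) (pdx (pdy u) x y) x :=
  hasDerivAt_pdx (hu.contDiff_pdy.differentiable (by simp)) x y

lemma hasDerivAt_pdy_snd (hu : IsTravelingWave F c u) (x y : ℝ) :
    HasDerivAt (fun t => pdy u x t) (pdy (pdy u) x y) y :=
  hasDerivAt_pdy (hu.contDiff_pdy.differentiable (by simp)) x y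

lemma equation (hu : IsTravelingWave F c u) (x y : ℝ) :
    pdx (pdx u) x y + pdy (pdy u) x y + c * pdy u x y = deriv F (u x y) := hu.1.2.1 x y

lemma abs_le_one (hu : IsTravelingWave F c u) (x y : ℝ) : |u x y| ≤ 1 := hu.1.2.2.1 x y

lemma pdy_pos (hu : IsTravelingWave F c u) (x y : ℝ) : 0 < pdy u x y := hu.1.2.2.2 x y

lemma strictMono (hu : IsTravelingWave F c u) (x : ℝ) : StrictMono (u x) :=
  strictMono_of_deriv_pos (hu.pdy_pos x)

lemma neg_one_lt (hu : IsTravelingWave F c u) (x y : ℝ) : -1 < u x y :=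
  (abs_le.1 (hu.abs_le_one x (y - 1))).1.trans_lt (hu.strictMono x (by linarith))

lemma lt_one (hu : IsTravelingWave F c u) (x y : ℝ) : u x y < 1 :=
  (hu.strictMono x (show y < y + 1 by linarith)).trans_le (abs_le.1 (hu.abs_le_one x (y + 1))).2

lemma continuous (hu : IsTravelingWave F c u) : Continuous (fun p : ℝ × ℝ => u p.1 p.2) :=
  hu.contDiff.continuous

/-- The reflection of a traveling wave is a traveling wave. -/
lemma reflect (hu : IsTravelingWave F c u) : IsTravelingWave F c (fun x y => u (-x) y) := by
  refine ⟨⟨?_, fun x y => ?_, fun x y => hu.abs_le_one _ _, fun x y => ?_⟩,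
    fun x => hu.2.1 (-x), fun x => hu.2.2 (-x)⟩
  · exact hu.contDiff.comp (contDiff_fst.neg.prodMk contDiff_snd)
  · have h := hu.equation (-x) y
    have h1 : pdxx (fun x y => u (-x) y) x y = pdx (pdx u) (-x) y := by
      change pdx (pdx _) x y = _
      rw [pdx_comp_neg]
      change deriv (fun t => -(pdx u (-t) y)) x = _
      rw [deriv.fun_neg, deriv_comp_neg (fun t => pdx u t y) x, neg_neg]
      rfl
    rw [h1]
    exact h
  · exact hu.pdy_pos (-x) y

/-- The equation satisfied by `∂ₓu`. -/
lemma equation_pdx (hF : BalancedDoubleWell F) (hu : IsTravelingWave F c u) (x y : ℝ) :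
    pdxx (pdx u) x y + pdyy (pdx u) x y + c * pdy (pdx u) x y =
      deriv (deriv F) (u x y) * pdx u x y := by
  have h1 : HasDerivAt (fun t => pdx (pdx u) t y) (pdxx (pdx u) x y) x :=
    hasDerivAt_pdx (hu.contDiff_pdx_pdx.differentiable (by simp)) x y
  have h2 : HasDerivAt (fun t => pdy (pdy u) t y) (pdyy (pdx u) x y) x := by
    have := hasDerivAt_pdx (hu.contDiff_pdy_pdy.differentiable (by simp)) x y
    rw [pdx_pdy_comm hu.contDiff_pdy, ← hu.pdy_pdx] at this
    exact this
  have h3 : HasDerivAt (fun t => pdy u t y) (pdy (pdx u) x y) x := by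
    rw [hu.pdy_pdx]; exact hu.hasDerivAt_pdy_fst x y
  have h4 := (h1.add h2).add (h3.const_mul c)
  have h5 := (hF.hasDerivAt_deriv (u x y)).comp x (hu.hasDerivAt_fst x y)
  refine h4.unique (h5.congr_of_eventuallyEq (Eventually.of_forall fun t => ?_))
  exact hu.equation t y

/-- The equation satisfied by `∂ᵧu`. -/
lemma equation_pdy (hF : BalancedDoubleWell F) (hu : IsTravelingWave F c u) (x y : ℝ) :
    pdxx (pdy u) x y + pdyy (pdy u) x y + c * pdy (pdy u) x y =
      deriv (deriv F) (u x y) * pdy u x y := by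
  have h1 : HasDerivAt (fun t => pdx (pdx u) x t) (pdxx (pdy u) x y) y := by
    have := hasDerivAt_pdy (hu.contDiff_pdx_pdx.differentiable (by simp)) x y
    rw [← pdx_pdy_comm hu.contDiff_pdx, hu.pdy_pdx] at this
    exact this
  have h2 : HasDerivAt (fun t => pdy (pdy u) x t) (pdyy (pdy u) x y) y :=
    hasDerivAt_pdy (hu.contDiff_pdy_pdy.differentiable (by simp)) x y
  have h4 := (h1.add h2).add ((hu.hasDerivAt_pdy_snd x y).const_mul c)
  have h5 := (hF.hasDerivAt_deriv (u x y)).comp y (hu.hasDerivAt_snd x y)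
  refine h4.unique (h5.congr_of_eventuallyEq (Eventually.of_forall fun t => ?_))
  exact hu.equation x t

/-- Interior estimate for the derivatives of `∂ᵧu`. -/
lemma exists_local_bound (hF : BalancedDoubleWell F) (hc : 0 < c) (hu : IsTravelingWave F c u) :
    ∃ C > 0, ∀ A x₀ y₀, 0 < A → (∀ x y, |x - x₀| ≤ 1 → |y - y₀| ≤ 1 → |pdy u x y| ≤ A) →
      |pdx (pdy u) x₀ y₀| ≤ C * A ∧ |pdy (pdy u) x₀ y₀| ≤ C * A := by
  obtain ⟨C, hC, hgrad⟩ := exists_gradient_bound hc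
  obtain ⟨M, hM, hb⟩ := hF.exists_bound
  refine ⟨C * (1 + M), by positivity, fun A x₀ y₀ hA h => ?_⟩
  rw [mul_assoc]
  refine hgrad (pdy u) hu.contDiff_pdy ((1 + M) * A) x₀ y₀ (by positivity)
    fun x y hx hy => ⟨?_, ?_⟩
  · nlinarith [h x y hx hy, mul_pos hM hA]
  · rw [hu.equation_pdy hF, abs_mul]
    have := mul_le_mul (hb _ (hu.abs_le_one x y)).2.2 (h x y hx hy) (abs_nonneg _) hM.le
    linarith

/-- Global bounds for the first and second derivatives. -/
lemma exists_bound (hF : BalancedDoubleWell F) (hc : 0 < c) (hu : IsTravelingWave F c u) :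
    ∃ K > 0, ∀ x y, |pdx u x y| ≤ K ∧ |pdy u x y| ≤ K ∧ |pdx (pdx u) x y| ≤ K ∧
      |pdx (pdy u) x y| ≤ K ∧ |pdy (pdy u) x y| ≤ K := by
  obtain ⟨C, hC, hgrad⟩ := exists_gradient_bound hc
  obtain ⟨M, hM, hb⟩ := hF.exists_bound
  obtain ⟨D, hD, hloc⟩ := hu.exists_local_bound hF hc
  have h1 : ∀ x y, |pdx u x y| ≤ C * (1 + M) ∧ |pdy u x y| ≤ C * (1 + M) := fun x₀ y₀ =>
    hgrad u hu.contDiff_two (1 + M) x₀ y₀ (by positivity) fun x y _ _ =>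
      ⟨by linarith [hu.abs_le_one x y], by
        have := (hb _ (hu.abs_le_one x y)).2.1
        rw [hu.1.2.1]; linarith⟩
  have hK1 : 0 < C * (1 + M) := by positivity
  set K₁ := C * (1 + M)
  have h2 : ∀ x y, |pdx (pdx u) x y| ≤ C * ((1 + M) * K₁) := fun x₀ y₀ =>
    (hgrad (pdx u) hu.contDiff_pdx ((1 + M) * K₁) x₀ y₀ (by positivity) fun x y _ _ =>
      ⟨by nlinarith [(h1 x y).1, mul_pos hM hK1], by
        have := mul_le_mul (hb _ (hu.abs_le_one x y)).2.2 (h1 x y).1 (abs_nonneg _) hM.le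
        rw [hu.equation_pdx hF, abs_mul]; linarith⟩).1
  have h3 := fun x y => hloc K₁ x y hK1 fun x y _ _ => (h1 x y).2
  have hK2 : 0 < C * ((1 + M) * K₁) := by positivity
  have hK3 : 0 < D * K₁ := by positivity
  refine ⟨K₁ + C * ((1 + M) * K₁) + D * K₁, by positivity, fun x y => ?_⟩
  refine ⟨?_, ?_, ?_, ?_, ?_⟩
  · linarith [(h1 x y).1]
  · linarith [(h1 x y).2]
  · linarith [h2 x y]
  · linarith [(h3 x y).1]
  · linarith [(h3 x y).2]

end IsTravelingWave

end Bounds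

/-! ### Integrals over rectangles and decay -/

section Analysis

/-- Landau-type inequality: a nonnegative function with second derivative bounded by `K`
satisfies `f'² ≤ 4 K f`. -/
lemma sq_deriv_le_of_nonneg {f f' f'' : ℝ → ℝ} {K : ℝ} (hK : 0 < K)
    (hf : ∀ t, HasDerivAt f (f' t) t) (hf' : ∀ t, HasDerivAt f' (f'' t) t)
    (hb : ∀ t, |f'' t| ≤ K) (h0 : ∀ t, 0 ≤ f t) (x : ℝ) : f' x ^ 2 ≤ 4 * K * f x := by
  have hL : ∀ t, |f' t - f' x| ≤ K * |t - x| := fun t =>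
    Convex.norm_image_sub_le_of_norm_hasDerivWithin_le (s := Set.univ)
      (fun t _ => (hf' t).hasDerivWithinAt) (fun t _ => hb t) convex_univ trivial trivial
  set h := -f' x / (2 * K) with hh
  have h1 : |f (x + h) - f' x * (x + h) - (f x - f' x * x)| ≤ K * |h| * |x + h - x| := by
    refine Convex.norm_image_sub_le_of_norm_hasDerivWithin_le (s := closedBall x |h|)
      (f := fun t => f t - f' x * t) (f' := fun t => f' t - f' x)
      (fun t _ => ?_) (fun t ht => ?_) (convex_closedBall _ _) (mem_closedBall_self (abs_nonneg _))
      (by simp)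
    · exact (((hf t).sub ((hasDerivAt_id t).const_mul (f' x))).congr_deriv
        (by simp)).hasDerivWithinAt
    · rw [mem_closedBall, Real.dist_eq] at ht
      exact (hL t).trans (by gcongr)
  rw [add_sub_cancel_left, mul_assoc, ← abs_mul, abs_mul_self] at h1
  have h2 := (abs_le.1 h1).2
  have h3 := h0 (x + h)
  have h4 : f' x = -(2 * K * h) := by rw [hh]; field_simp
  rw [h4] at h2 ⊢
  nlinarith

lemma setIntegral_Icc_prod {g : ℝ × ℝ → ℝ} (hg : Continuous g) {a b y₁ y₂ : ℝ} (hab : a ≤ b)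
    (hy : y₁ ≤ y₂) :
    ∫ p in Set.Icc (a, y₁) (b, y₂), g p = ∫ t in y₁..y₂, ∫ x in a..b, g (x, t) := by
  rw [← Set.Icc_prod_Icc, Measure.volume_eq_prod, ← setIntegral_prod_swap, setIntegral_prod,
    intervalIntegral.integral_of_le hy, integral_Icc_eq_integral_Ioc]
  · refine setIntegral_congr_fun measurableSet_Ioc fun t _ => ?_
    simp only [Prod.swap]
    rw [intervalIntegral.integral_of_le hab, integral_Icc_eq_integral_Ioc]
  · exact ((hg.comp continuous_swap).continuousOn).integrableOn_compact
      (isCompact_Icc.prod isCompact_Icc)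

lemma continuous_integral_slice {g : ℝ × ℝ → ℝ} (hg : Continuous g) (a b : ℝ) :
    Continuous fun t => ∫ x in a..b, g (x, t) :=
  intervalIntegral.continuous_parametric_intervalIntegral_of_continuous'
    (f := fun t x => g (x, t)) (hg.comp continuous_swap) a b

/-- Some horizontal slice of a unit strip carries at most the integral over the strip. -/
lemma exists_slice_le {g : ℝ × ℝ → ℝ} (hg : Continuous g) {a b : ℝ} (hab : a ≤ b) (y : ℝ) :
    ∃ y' ∈ Set.Icc y (y + 1),
      ∫ x in a..b, g (x, y') ≤ ∫ p in Set.Icc (a, y) (b, y + 1), g p := by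
  have hy : y ≤ y + 1 := by linarith
  have hcont := continuous_integral_slice hg a b
  rw [setIntegral_Icc_prod hg hab hy]
  obtain ⟨y', hy', hmin⟩ := isCompact_Icc.exists_isMinOn (Set.nonempty_Icc.2 hy) hcont.continuousOn
  refine ⟨y', hy', ?_⟩
  have := intervalIntegral.integral_mono_on hy (intervalIntegrable_const (μ := volume))
    (hcont.intervalIntegrable (μ := volume) y (y + 1)) (fun t ht => hmin ht)
  simpa using this

lemma exists_norm_tail_le {S : Set (ℝ × ℝ)} {g : ℝ × ℝ → ℝ} (hS : MeasurableSet S)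
    (hi : IntegrableOn g S) {ε : ℝ} (hε : 0 < ε) :
    ∃ R : ℝ, 0 < R ∧ ∫ p in S \ ball 0 R, g p < ε := by
  have h := tendsto_setIntegral_of_antitone (μ := (volume : Measure (ℝ × ℝ))) (f := g)
    (s := fun n : ℕ => S \ ball 0 (n : ℝ)) (fun n => hS.diff measurableSet_ball)
    (fun m n hmn => Set.sdiff_subset_sdiff_right (ball_subset_ball (by exact_mod_cast hmn)))
    ⟨0, hi.mono_set Set.sdiff_subset⟩
  have h0 : ⋂ n : ℕ, S \ ball (0 : ℝ × ℝ) (n : ℝ) = ∅ := by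
    refine Set.eq_empty_of_forall_notMem fun p hp => ?_
    obtain ⟨n, hn⟩ := exists_nat_gt ‖p‖
    exact (Set.mem_iInter.1 hp n).2 (by simpa using hn)
  rw [h0, setIntegral_empty] at h
  obtain ⟨n, hn1, hn2⟩ := ((h.eventually (gt_mem_nhds hε)).and (eventually_gt_atTop 0)).exists
  exact ⟨n, by exact_mod_cast hn2, hn1⟩

/-- A Lipschitz function with integrable square decays at infinity. -/
lemma exists_abs_le_of_integrableOn_sq {S : Set (ℝ × ℝ)} {g : ℝ × ℝ → ℝ} {K : ℝ} (hK : 0 < K)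
    (hS : MeasurableSet S) (hg : ∀ p q, |g p - g q| ≤ K * ‖p - q‖)
    (hi : IntegrableOn (fun p => g p ^ 2) S) {η : ℝ} (hη : 0 < η) :
    ∃ R : ℝ, ∀ p, R ≤ ‖p‖ → closedBall p 1 ⊆ S → |g p| ≤ η := by
  set r := min 1 (η / (2 * K)) with hr
  have hr0 : 0 < r := by positivity
  obtain ⟨R, hR, hR'⟩ := exists_norm_tail_le hS hi (ε := η ^ 2 * r ^ 2) (by positivity)
  refine ⟨R + 1, fun p hp hpS => ?_⟩
  by_contra hlt
  push Not at hlt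
  have hsub : closedBall p r ⊆ S \ ball 0 R := fun q hq => by
    have hq1 : q ∈ closedBall p 1 := closedBall_subset_closedBall (min_le_left _ _) hq
    refine ⟨hpS hq1, fun hq2 => ?_⟩
    rw [mem_ball_zero_iff] at hq2
    rw [mem_closedBall, dist_comm, dist_eq_norm] at hq1
    have := norm_sub_norm_le p q
    linarith
  have h1 : ∀ q ∈ closedBall p r, (η / 2) ^ 2 ≤ g q ^ 2 := fun q hq => by
    rw [mem_closedBall, dist_comm, dist_eq_norm] at hq
    have h2 : K * ‖p - q‖ ≤ η / 2 := by
      calc K * ‖p - q‖ ≤ K * (η / (2 * K)) := by gcongr; exact hq.trans (min_le_right _ _)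
        _ = η / 2 := by field_simp
    have h3 := hg p q
    have h4 := abs_sub_abs_le_abs_sub (g p) (g q)
    rw [← sq_abs (g q)]
    gcongr
    linarith
  have hi' : IntegrableOn (fun p => g p ^ 2) (S \ ball 0 R) := hi.mono_set Set.sdiff_subset
  have h2 : ∫ q in closedBall p r, g q ^ 2 ≤ ∫ q in S \ ball 0 R, g q ^ 2 :=
    setIntegral_mono_set hi' (Eventually.of_forall fun q => sq_nonneg _) hsub.eventuallyLE
  have h3 : (volume : Measure (ℝ × ℝ)).real (closedBall p r) = (2 * r) ^ 2 := by
    have : closedBall p r = closedBall p.1 r ×ˢ closedBall p.2 r :=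
      (closedBall_prod_same _ _ _).symm
    rw [this, Measure.volume_eq_prod, measureReal_prod_prod, Measure.real, Measure.real,
      Real.volume_closedBall, Real.volume_closedBall, ENNReal.toReal_ofReal (by positivity), sq]
  have h4 : (η / 2) ^ 2 * (volume : Measure (ℝ × ℝ)).real (closedBall p r) ≤
      ∫ q in closedBall p r, g q ^ 2 := by
    have := setIntegral_mono_on (μ := (volume : Measure (ℝ × ℝ))) (f := fun _ => (η / 2) ^ 2)
      (integrableOn_const (by exact measure_closedBall_lt_top.ne))
      (hi'.mono_set hsub) measurableSet_closedBall h1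
    rw [setIntegral_const, smul_eq_mul, mul_comm] at this
    exact this
  rw [h3] at h4
  nlinarith

/-- A Lipschitz function on the line is controlled at a point by the integral of its square
over an adjacent interval. -/
lemma abs_le_of_integral_sq_le {f : ℝ → ℝ} {K η x l : ℝ} (hK : 0 < K) (hη : 0 < η)
    (hc : Continuous f) (hf : ∀ s t, |f s - f t| ≤ K * |s - t|) (hl : η / (2 * K) ≤ l)
    (h : ∫ t in x..(x + l), f t ^ 2 < η ^ 3 / (8 * K)) : |f x| ≤ η := by
  by_contra hlt
  push Not at hlt
  set r := η / (2 * K) with hr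
  have hr0 : 0 < r := by positivity
  have h1 : ∀ t ∈ Set.Icc x (x + r), (η / 2) ^ 2 ≤ f t ^ 2 := fun t ht => by
    have h2 : K * |x - t| ≤ η / 2 := by
      rw [abs_sub_comm, abs_of_nonneg (by linarith [ht.1])]
      calc K * (t - x) ≤ K * r := by gcongr; linarith [ht.2]
        _ = η / 2 := by rw [hr]; field_simp
    have h4 := abs_sub_abs_le_abs_sub (f x) (f t)
    have h3 := hf x t
    rw [← sq_abs (f t)]
    gcongr
    linarith
  have hi : ∀ a b, IntervalIntegrable (fun t => f t ^ 2) volume a b := fun a b =>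
    (hc.pow 2).intervalIntegrable a b
  have h2 := intervalIntegral.integral_mono_on (show x ≤ x + r by linarith)
    (intervalIntegrable_const (μ := volume)) (hi x (x + r)) h1
  have h3 : ∫ t in x..(x + r), f t ^ 2 ≤ ∫ t in x..(x + l), f t ^ 2 :=
    intervalIntegral.integral_mono_interval le_rfl (by linarith) (by linarith)
      (Eventually.of_forall fun t => sq_nonneg _) (hi _ _)
  rw [intervalIntegral.integral_const, smul_eq_mul, add_sub_cancel_left] at h2
  have h4 : r * (η / 2) ^ 2 = η ^ 3 / (8 * K) := by rw [hr]; field_simp; ring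
  linarith

end Analysis

/-! ### The energy identity -/

section Energy

variable {F : ℝ → ℝ} {c : ℝ} {u : ℝ → ℝ → ℝ}

/-- The energy density of horizontal slices. -/
noncomputable def waveEnergy (F : ℝ → ℝ) (u : ℝ → ℝ → ℝ) (x y : ℝ) : ℝ :=
  pdx u x y ^ 2 / 2 - pdy u x y ^ 2 / 2 + F (u x y)

namespace IsTravelingWave

lemma contDiff_waveEnergy (hF : BalancedDoubleWell F) (hu : IsTravelingWave F c u) :
    ContDiff ℝ 1 (fun p : ℝ × ℝ => waveEnergy F u p.1 p.2) := by
  have h1 := hu.contDiff_pdx.of_le (show (1 : WithTop ℕ∞) ≤ 2 by norm_num)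
  have h2 := hu.contDiff_pdy.of_le (show (1 : WithTop ℕ∞) ≤ 2 by norm_num)
  have h3 : ContDiff ℝ 1 (fun p : ℝ × ℝ => F (u p.1 p.2)) :=
    (hF.1.comp hu.contDiff).of_le (by norm_num)
  exact (((h1.pow 2).div_const 2).sub ((h2.pow 2).div_const 2)).add h3

lemma continuous_waveEnergy_slice (hF : BalancedDoubleWell F) (hu : IsTravelingWave F c u) (y : ℝ) :
    Continuous (fun x => waveEnergy F u x y) :=
  (hu.contDiff_waveEnergy hF).continuous.comp (continuous_id.prodMk continuous_const)

lemma hasDerivAt_waveEnergy_snd (hF : BalancedDoubleWell F) (hu : IsTravelingWave F c u)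
    (x y : ℝ) : HasDerivAt (fun t => waveEnergy F u x t)
      (pdx (pdx u) x y * pdy u x y + pdx u x y * pdx (pdy u) x y + c * pdy u x y ^ 2) y := by
  have h1 := ((hu.hasDerivAt_pdx_snd x y).pow 2).div_const 2
  have h2 := ((hu.hasDerivAt_pdy_snd x y).pow 2).div_const 2
  have h3 := (hF.hasDerivAt (u x y)).comp y (hu.hasDerivAt_snd x y)
  refine ((h1.sub h2).add h3).congr_deriv ?_
  rw [← hu.equation x y]
  push_cast
  ring

/-- Integrated energy identity on a rectangle. -/
lemma energy_identity (hF : BalancedDoubleWell F) (hu : IsTravelingWave F c u) {a b y₁ y₂ : ℝ}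
    (hab : a ≤ b) (hy : y₁ ≤ y₂) :
    (∫ x in a..b, waveEnergy F u x y₂) - ∫ x in a..b, waveEnergy F u x y₁ =
      (∫ y in y₁..y₂, pdx u b y * pdy u b y) - (∫ y in y₁..y₂, pdx u a y * pdy u a y) +
        c * ∫ p in Set.Icc (a, y₁) (b, y₂), pdy u p.1 p.2 ^ 2 := by
  have hf : ContDiff ℝ 1 (fun p : ℝ × ℝ => -(pdx u p.1 p.2 * pdy u p.1 p.2)) :=
    ((hu.contDiff_pdx.mul hu.contDiff_pdy).neg).of_le (by norm_num)
  have hg := hu.contDiff_waveEnergy hF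
  have hdf := hf.differentiable (by simp)
  have hdg := hg.differentiable (by simp)
  have key : ∀ p : ℝ × ℝ,
      fderiv ℝ (fun p : ℝ × ℝ => -(pdx u p.1 p.2 * pdy u p.1 p.2)) p (1, 0) +
      fderiv ℝ (fun p : ℝ × ℝ => waveEnergy F u p.1 p.2) p (0, 1) = c * pdy u p.1 p.2 ^ 2 := by
    rintro ⟨x, y⟩
    have h1 := hasDerivAt_fst_of_hasFDerivAt (hdf (x, y)).hasFDerivAt
    have h2 := hasDerivAt_snd_of_hasFDerivAt (hdg (x, y)).hasFDerivAt
    rw [h1.unique ((hu.hasDerivAt_pdx_fst x y).mul (hu.hasDerivAt_pdy_fst x y)).neg,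
      h2.unique (hu.hasDerivAt_waveEnergy_snd hF x y)]
    ring
  have hc : Continuous fun p : ℝ × ℝ => c * pdy u p.1 p.2 ^ 2 :=
    continuous_const.mul (hu.contDiff_pdy.continuous.pow 2)
  have := integral_divergence_prod_Icc_of_hasFDerivAt_of_le _ _ _ _ (a, y₁) (b, y₂)
    ⟨hab, hy⟩ hf.continuous.continuousOn hg.continuous.continuousOn
    (fun p _ => (hdf p).hasFDerivAt) (fun p _ => (hdg p).hasFDerivAt)
    (by simp_rw [key]; exact hc.continuousOn.integrableOn_compact isCompact_Icc)
  simp_rw [key] at this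
  rw [integral_const_mul] at this
  simp only [intervalIntegral.integral_neg] at this
  linarith

lemma abs_flux_le (hu : IsTravelingWave F c u) {H h : ℝ → ℝ} {b y₁ y₂ : ℝ}
    (hH : ∀ s, HasDerivAt H (h s) s) (hh : Continuous h) (hy : y₁ ≤ y₂)
    (hb : ∀ y ∈ Set.Icc y₁ y₂, |pdx u b y| ≤ h (u b y)) :
    |∫ y in y₁..y₂, pdx u b y * pdy u b y| ≤ H (u b y₂) - H (u b y₁) := by
  have hcu : Continuous fun y => u b y := hu.continuous.comp (continuous_const.prodMk continuous_id)
  have hcy : Continuous fun y => pdy u b y :=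
    hu.contDiff_pdy.continuous.comp (continuous_const.prodMk continuous_id)
  have hi : IntervalIntegrable (fun y => h (u b y) * pdy u b y) volume y₁ y₂ :=
    ((hh.comp hcu).mul hcy).intervalIntegrable _ _
  have hd : ∀ y, HasDerivAt (fun y => H (u b y)) (h (u b y) * pdy u b y) y := fun y =>
    (hH (u b y)).comp y (hu.hasDerivAt_snd b y)
  rw [← intervalIntegral.integral_eq_sub_of_hasDerivAt (fun y _ => hd y) hi]
  rw [← Real.norm_eq_abs]
  refine intervalIntegral.norm_integral_le_of_norm_le hy (Eventually.of_forall fun y hy' => ?_) hi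
  rw [Real.norm_eq_abs, abs_mul, abs_of_pos (hu.pdy_pos b y)]
  exact mul_le_mul_of_nonneg_right (hb y ⟨hy'.1.le, hy'.2⟩) (hu.pdy_pos b y).le

lemma sq_pdx_le (hu : IsTravelingWave F c u) {K : ℝ} (hK : 0 < K)
    (hb : ∀ x y, |pdx (pdx u) x y| ≤ K) (x y : ℝ) :
    pdx u x y ^ 2 ≤ 4 * K * (1 + u x y) ∧ pdx u x y ^ 2 ≤ 4 * K * (1 - u x y) := by
  constructor
  · exact sq_deriv_le_of_nonneg hK (fun t => (hu.hasDerivAt_fst t y).const_add 1)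
      (fun t => hu.hasDerivAt_pdx_fst t y) (fun t => hb t y)
      (fun t => by linarith [hu.neg_one_lt t y]) x
  · have := sq_deriv_le_of_nonneg hK (fun t => (hu.hasDerivAt_fst t y).const_sub 1)
      (fun t => (hu.hasDerivAt_pdx_fst t y).neg) (fun t => by rw [abs_neg]; exact hb t y)
      (fun t => by linarith [hu.lt_one t y]) x
    simpa using this

lemma sq_pdy_le (hu : IsTravelingWave F c u) {K : ℝ} (hK : 0 < K)
    (hb : ∀ x y, |pdy (pdy u) x y| ≤ K) (x y : ℝ) :
    pdy u x y ^ 2 ≤ 4 * K * (1 + u x y) ∧ pdy u x y ^ 2 ≤ 4 * K * (1 - u x y) := by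
  constructor
  · exact sq_deriv_le_of_nonneg hK (fun t => (hu.hasDerivAt_snd x t).const_add 1)
      (fun t => hu.hasDerivAt_pdy_snd x t) (fun t => hb x t)
      (fun t => by linarith [hu.neg_one_lt x t]) y
  · have := sq_deriv_le_of_nonneg hK (fun t => (hu.hasDerivAt_snd x t).const_sub 1)
      (fun t => (hu.hasDerivAt_pdy_snd x t).neg) (fun t => by rw [abs_neg]; exact hb x t)
      (fun t => by linarith [hu.lt_one x t]) y
    simpa using this

lemma tendsto_energy (hF : BalancedDoubleWell F) (hc : 0 < c) (hu : IsTravelingWave F c u)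
    {l : Filter ℝ} [l.IsCountablyGenerated] {s : ℝ} (hs : s = 1 ∨ s = -1)
    (hl : ∀ x, Tendsto (u x) l (nhds s)) (a b : ℝ) :
    Tendsto (fun y => ∫ x in a..b, waveEnergy F u x y) l (nhds 0) := by
  obtain ⟨K, hK, hb⟩ := hu.exists_bound hF hc
  obtain ⟨M, hM, hbF⟩ := hF.exists_bound
  have hx := hu.sq_pdx_le hK fun x y => (hb x y).2.2.1
  have hy := hu.sq_pdy_le hK fun x y => (hb x y).2.2.2.2
  have hx1 : ∀ x y, pdx u x y ^ 2 ≤ 4 * K * |s - u x y| ∧ pdy u x y ^ 2 ≤ 4 * K * |s - u x y| := by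
    intro x y
    rcases hs with rfl | rfl
    · rw [abs_of_pos (by linarith [hu.lt_one x y])]
      exact ⟨(hx x y).2, (hy x y).2⟩
    · rw [abs_of_neg (by linarith [hu.neg_one_lt x y]), neg_sub, sub_neg_eq_add, add_comm]
      exact ⟨(hx x y).1, (hy x y).1⟩
  have hFs : F s = 0 := by
    rcases hs with rfl | rfl
    · exact hF.2.2.2.2.2.2.2.2
    · exact hF.2.2.2.2.2.2.2.1
  have h0 : (0 : ℝ) = ∫ x in a..b, (0 : ℝ) := by simp
  rw [h0]
  refine intervalIntegral.tendsto_integral_filter_of_dominated_convergence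
    (fun _ => 8 * K + M) (Eventually.of_forall fun y => ?_) (Eventually.of_forall fun y => ?_)
    intervalIntegrable_const (Eventually.of_forall fun x _ => ?_)
  · exact (hu.continuous_waveEnergy_slice hF y).aestronglyMeasurable
  · refine Eventually.of_forall fun x _ => ?_
    have h1 := (hx x y).1
    have h2 := (hy x y).1
    have h3 := abs_le.1 (hbF _ (hu.abs_le_one x y)).1
    have h4 := hu.lt_one x y
    rw [Real.norm_eq_abs, abs_le, waveEnergy]
    constructor <;> nlinarith [sq_nonneg (pdx u x y), sq_nonneg (pdy u x y)]
  · have hlim : Tendsto (fun y => 4 * K * |s - u x y| + |F (u x y)|) l (nhds 0) := by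
      have h1 : Tendsto (fun y => s - u x y) l (nhds (s - s)) := (hl x).const_sub s
      have h2 : Tendsto (fun y => F (u x y)) l (nhds (F s)) :=
        (hF.differentiable.continuous.tendsto s).comp (hl x)
      simpa [hFs] using (h1.abs.const_mul (4 * K)).add h2.abs
    refine squeeze_zero_norm (fun y => ?_) hlim
    have h1 := (hx1 x y).1
    have h2 := (hx1 x y).2
    have h3 := neg_abs_le (F (u x y))
    have h4 := le_abs_self (F (u x y))
    rw [Real.norm_eq_abs, abs_le, waveEnergy]
    constructor <;> nlinarith [sq_nonneg (pdx u x y), sq_nonneg (pdy u x y)]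

lemma tendsto_energy_atTop (hF : BalancedDoubleWell F) (hc : 0 < c) (hu : IsTravelingWave F c u)
    (a b : ℝ) : Tendsto (fun y => ∫ x in a..b, waveEnergy F u x y) atTop (nhds 0) :=
  hu.tendsto_energy hF hc (Or.inl rfl) hu.2.1 a b

lemma tendsto_energy_atBot (hF : BalancedDoubleWell F) (hc : 0 < c) (hu : IsTravelingWave F c u)
    (a b : ℝ) : Tendsto (fun y => ∫ x in a..b, waveEnergy F u x y) atBot (nhds 0) :=
  hu.tendsto_energy hF hc (Or.inr rfl) hu.2.2 a b

lemma integrableOn_sq_pdy (hu : IsTravelingWave F c u) {s : Set (ℝ × ℝ)} (hs : IsCompact s) :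
    IntegrableOn (fun p : ℝ × ℝ => pdy u p.1 p.2 ^ 2) s :=
  (hu.contDiff_pdy.continuous.pow 2).continuousOn.integrableOn_compact hs

lemma integral_sq_pdy_mono (hu : IsTravelingWave F c u) {s t : Set (ℝ × ℝ)} (ht : IsCompact t)
    (hst : s ⊆ t) : ∫ p in s, pdy u p.1 p.2 ^ 2 ≤ ∫ p in t, pdy u p.1 p.2 ^ 2 :=
  setIntegral_mono_set (hu.integrableOn_sq_pdy ht)
    (Eventually.of_forall fun _ => sq_nonneg _) (Eventually.of_forall hst)

/-- The energy of a slice plus the dissipation above it is controlled by the lateral fluxes. -/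
lemma energy_add_le (hF : BalancedDoubleWell F) (hc : 0 < c) (hu : IsTravelingWave F c u)
    {Ha ha Hb hb : ℝ → ℝ} {a b y₁ : ℝ} (hab : a ≤ b)
    (hHa : ∀ s, HasDerivAt Ha (ha s) s) (hha : Continuous ha)
    (hHb : ∀ s, HasDerivAt Hb (hb s) s) (hhb : Continuous hb)
    (hxa : ∀ y, y₁ ≤ y → |pdx u a y| ≤ ha (u a y)) (hxb : ∀ y, y₁ ≤ y → |pdx u b y| ≤ hb (u b y))
    {y₂ : ℝ} (hy : y₁ ≤ y₂) :
    (∫ x in a..b, waveEnergy F u x y₁) +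
      c * (∫ p in Set.Icc (a, y₁) (b, y₂), pdy u p.1 p.2 ^ 2) ≤
        (Ha 1 - Ha (u a y₁)) + (Hb 1 - Hb (u b y₁)) := by
  have hlim : ∀ (H h : ℝ → ℝ) (t : ℝ), (∀ s, HasDerivAt H (h s) s) →
      Tendsto (fun y => H (u t y)) atTop (nhds (H 1)) := fun H h t hH =>
    ((hH 1).continuousAt.tendsto).comp (hu.2.1 t)
  have h0 : Tendsto (fun y => (∫ x in a..b, waveEnergy F u x y) +
      ((Ha (u a y) - Ha (u a y₁)) + (Hb (u b y) - Hb (u b y₁)))) atTop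
      (nhds (0 + ((Ha 1 - Ha (u a y₁)) + (Hb 1 - Hb (u b y₁))))) :=
    (hu.tendsto_energy_atTop hF hc a b).add
      (((hlim Ha ha a hHa).sub_const _).add ((hlim Hb hb b hHb).sub_const _))
  rw [zero_add] at h0
  refine ge_of_tendsto h0 ?_
  filter_upwards [eventually_ge_atTop y₂] with y hyy
  have h1 := hu.energy_identity hF hab (hy.trans hyy)
  have h2 := abs_le.1 (hu.abs_flux_le hHa hha (hy.trans hyy) fun t ht => hxa t ht.1)
  have h3 := abs_le.1 (hu.abs_flux_le hHb hhb (hy.trans hyy) fun t ht => hxb t ht.1)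
  have h4 : ∫ p in Set.Icc (a, y₁) (b, y₂), pdy u p.1 p.2 ^ 2 ≤
      ∫ p in Set.Icc (a, y₁) (b, y), pdy u p.1 p.2 ^ 2 :=
    hu.integral_sq_pdy_mono isCompact_Icc
      (Set.Icc_subset_Icc_right (Prod.mk_le_mk.2 ⟨le_rfl, hyy⟩))
  have h5 := mul_le_mul_of_nonneg_left h4 hc.le
  linarith [h2.1, h2.2, h3.1, h3.2]

lemma energy_add_le_const (hF : BalancedDoubleWell F) (hc : 0 < c) (hu : IsTravelingWave F c u)
    {K : ℝ} (hK : ∀ x y, |pdx u x y| ≤ K) {a b y₁ y₂ : ℝ} (hab : a ≤ b) (hy : y₁ ≤ y₂) :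
    (∫ x in a..b, waveEnergy F u x y₁) +
      c * (∫ p in Set.Icc (a, y₁) (b, y₂), pdy u p.1 p.2 ^ 2) ≤ 4 * K := by
  have hd : ∀ s, HasDerivAt (fun s => K * s) K s := fun s => by
    simpa using (hasDerivAt_id s).const_mul K
  have h := hu.energy_add_le hF hc hab hd continuous_const hd continuous_const
    (fun y _ => hK a y) (fun y _ => hK b y) hy
  have hK0 : 0 ≤ K := (abs_nonneg _).trans (hK 0 0)
  nlinarith [hu.neg_one_lt a y₁, hu.neg_one_lt b y₁]

lemma integral_sq_pdy_le (hF : BalancedDoubleWell F) (hc : 0 < c) (hu : IsTravelingWave F c u)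
    {K : ℝ} (hK : ∀ x y, |pdx u x y| ≤ K) {a b y₁ y₂ : ℝ} (hab : a ≤ b) (hy : y₁ ≤ y₂) :
    c * (∫ p in Set.Icc (a, y₁) (b, y₂), pdy u p.1 p.2 ^ 2) ≤ 4 * K := by
  have h0 := (hu.tendsto_energy_atBot hF hc a b).const_sub (4 * K)
  rw [sub_zero] at h0
  refine ge_of_tendsto h0 ?_
  filter_upwards [eventually_le_atBot y₁] with y hyy
  have h1 := hu.energy_add_le_const hF hc hK hab (hyy.trans hy)
  have h4 : ∫ p in Set.Icc (a, y₁) (b, y₂), pdy u p.1 p.2 ^ 2 ≤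
      ∫ p in Set.Icc (a, y) (b, y₂), pdy u p.1 p.2 ^ 2 :=
    hu.integral_sq_pdy_mono isCompact_Icc
      (Set.Icc_subset_Icc_left (Prod.mk_le_mk.2 ⟨le_rfl, hyy⟩))
  have h5 := mul_le_mul_of_nonneg_left h4 hc.le
  linarith

lemma integrable_sq_pdy (hF : BalancedDoubleWell F) (hc : 0 < c) (hu : IsTravelingWave F c u) :
    Integrable (fun p : ℝ × ℝ => pdy u p.1 p.2 ^ 2) := by
  obtain ⟨K, hK, hb⟩ := hu.exists_bound hF hc
  refine (aecover_closedBall (x := (0 : ℝ × ℝ)) (r := fun n : ℕ => (n : ℝ))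
    tendsto_natCast_atTop_atTop).integrable_of_integral_bounded_of_nonneg_ae (4 * K / c)
    (fun n => hu.integrableOn_sq_pdy (isCompact_closedBall _ _))
    (Eventually.of_forall fun p => sq_nonneg _) (Eventually.of_forall fun n => ?_)
  have h : closedBall (0 : ℝ × ℝ) (n : ℝ) = Set.Icc (-(n : ℝ), -(n : ℝ)) ((n : ℝ), (n : ℝ)) := by
    have := (closedBall_prod_same (0 : ℝ) (0 : ℝ) (n : ℝ)).symm
    rw [show ((0 : ℝ), (0 : ℝ)) = 0 from rfl] at this
    rw [this, Real.closedBall_eq_Icc, Set.Icc_prod_Icc]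
    simp
  have hn : -(n : ℝ) ≤ n := by linarith [(Nat.cast_nonneg n : (0 : ℝ) ≤ n)]
  rw [h, le_div_iff₀ hc, mul_comm]
  exact hu.integral_sq_pdy_le hF hc (fun x y => (hb x y).1) hn hn

end IsTravelingWave

end Energy

/-! ### Decay at infinity -/

section Decay

variable {F : ℝ → ℝ} {c : ℝ} {u : ℝ → ℝ → ℝ}

lemma abs_sub_le_of_partial_bound {v : ℝ → ℝ → ℝ} {K : ℝ}
    (hv : Differentiable ℝ (fun p : ℝ × ℝ => v p.1 p.2))
    (hx : ∀ x y, |pdx v x y| ≤ K) (hy : ∀ x y, |pdy v x y| ≤ K) (p q : ℝ × ℝ) :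
    |v p.1 p.2 - v q.1 q.2| ≤ 2 * K * ‖p - q‖ := by
  have hK : 0 ≤ K := (abs_nonneg _).trans (hx 0 0)
  have h1 : |v p.1 p.2 - v q.1 p.2| ≤ K * |p.1 - q.1| :=
    Convex.norm_image_sub_le_of_norm_hasDerivWithin_le (s := Set.univ)
      (fun t _ => (hasDerivAt_pdx hv t p.2).hasDerivWithinAt) (fun t _ => hx t _) convex_univ
      trivial trivial
  have h2 : |v q.1 p.2 - v q.1 q.2| ≤ K * |p.2 - q.2| :=
    Convex.norm_image_sub_le_of_norm_hasDerivWithin_le (s := Set.univ)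
      (fun t _ => (hasDerivAt_pdy hv q.1 t).hasDerivWithinAt) (fun t _ => hy _ t) convex_univ
      trivial trivial
  have h3 : |p.1 - q.1| ≤ ‖p - q‖ := norm_fst_le (p - q)
  have h4 : |p.2 - q.2| ≤ ‖p - q‖ := norm_snd_le (p - q)
  have h5 := abs_sub_le (v p.1 p.2) (v q.1 p.2) (v q.1 q.2)
  nlinarith

lemma exists_le_of_integral_le {f : ℝ → ℝ} (hf : Continuous f) {a b C : ℝ} (hab : a < b)
    (h : ∫ x in a..b, f x ≤ C) : ∃ x ∈ Set.Icc a b, f x ≤ C / (b - a) := by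
  obtain ⟨x, hx, hmin⟩ :=
    isCompact_Icc.exists_isMinOn (Set.nonempty_Icc.2 hab.le) hf.continuousOn
  refine ⟨x, hx, ?_⟩
  have := intervalIntegral.integral_mono_on hab.le (intervalIntegrable_const (μ := volume))
    (hf.intervalIntegrable (μ := volume) a b) (fun t ht => hmin ht)
  rw [intervalIntegral.integral_const, smul_eq_mul] at this
  rw [le_div_iff₀ (sub_pos.2 hab)]
  linarith

namespace IsTravelingWave

/-- `∂ᵧu` and its derivatives decay at infinity. -/
lemma exists_pdy_le (hF : BalancedDoubleWell F) (hc : 0 < c) (hu : IsTravelingWave F c u)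
    {η : ℝ} (hη : 0 < η) : ∃ R : ℝ, ∀ x y, R ≤ ‖(x, y)‖ →
      |pdy u x y| ≤ η ∧ |pdx (pdy u) x y| ≤ η ∧ |pdy (pdy u) x y| ≤ η := by
  obtain ⟨K, hK, hb⟩ := hu.exists_bound hF hc
  obtain ⟨C, hC, hloc⟩ := hu.exists_local_bound hF hc
  set A := min η (η / C)
  have hA : 0 < A := by positivity
  obtain ⟨R, hR⟩ := exists_abs_le_of_integrableOn_sq (S := Set.univ)
    (g := fun p : ℝ × ℝ => pdy u p.1 p.2) (K := 2 * K) (by positivity) MeasurableSet.univ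
    (abs_sub_le_of_partial_bound (hu.contDiff_pdy.differentiable (by simp))
      (fun x y => (hb x y).2.2.2.1) (fun x y => (hb x y).2.2.2.2))
    (hu.integrable_sq_pdy hF hc).integrableOn hA
  refine ⟨R + 1, fun x y hxy => ?_⟩
  have h1 := hR (x, y) (by linarith) (Set.subset_univ _)
  have h2 := hloc A x y hA fun x' y' hx' hy' => hR (x', y') ?_ (Set.subset_univ _)
  · have h3 : C * A ≤ η := by
      calc C * A ≤ C * (η / C) := by gcongr; exact min_le_right _ _
        _ = η := by field_simp
    exact ⟨h1.trans (min_le_left _ _), h2.1.trans h3, h2.2.trans h3⟩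
  · have h4 : ‖(x, y) - (x', y')‖ ≤ 1 := by
      rw [Prod.mk_sub_mk, Prod.norm_mk, Real.norm_eq_abs, Real.norm_eq_abs, abs_sub_comm,
        abs_sub_comm y]
      exact max_le hx' hy'
    have := norm_sub_norm_le (x, y) (x', y')
    linarith

lemma continuous_slice_pdx (hu : IsTravelingWave F c u) (y : ℝ) :
    Continuous fun x => pdx u x y :=
  hu.contDiff_pdx.continuous.comp (continuous_id.prodMk continuous_const)

lemma continuous_slice_pdy (hu : IsTravelingWave F c u) (y : ℝ) :
    Continuous fun x => pdy u x y :=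
  hu.contDiff_pdy.continuous.comp (continuous_id.prodMk continuous_const)

lemma continuous_slice (hu : IsTravelingWave F c u) (y : ℝ) : Continuous fun x => u x y :=
  hu.continuous.comp (continuous_id.prodMk continuous_const)

lemma energy_le_const (hF : BalancedDoubleWell F) (hc : 0 < c) (hu : IsTravelingWave F c u)
    {K : ℝ} (hK : ∀ x y, |pdx u x y| ≤ K) {a b : ℝ} (y : ℝ) (hab : a ≤ b) :
    ∫ x in a..b, waveEnergy F u x y ≤ 4 * K := by
  have h := hu.energy_add_le_const hF hc hK hab (le_refl y)
  have h1 : 0 ≤ ∫ p in Set.Icc (a, y) (b, y), pdy u p.1 p.2 ^ 2 :=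
    integral_nonneg fun p => sq_nonneg _
  nlinarith [mul_nonneg hc.le h1]

/-- Asymptotic Modica-type inequality. -/
lemma exists_abs_pdx_le (hF : BalancedDoubleWell F) (hc : 0 < c) (hu : IsTravelingWave F c u)
    {θ : ℝ} (hθ : 0 < θ) : ∃ R : ℝ, ∀ x y, R ≤ ‖(x, y)‖ →
      |pdx u x y| ≤ wellSpeed F (u x y) + θ := by
  obtain ⟨K, hK, hb⟩ := hu.exists_bound hF hc
  set L := 32 * K / θ ^ 2 with hL
  have hL0 : 0 < L := by positivity
  set η := min (θ / 2) (θ ^ 2 / (4 * (L * K * (1 + c)))) with hη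
  have hη0 : 0 < η := by positivity
  have hη2 : L * (K * (1 + c) * η) ≤ θ ^ 2 / 4 := by
    calc L * (K * (1 + c) * η) ≤ L * (K * (1 + c) * (θ ^ 2 / (4 * (L * K * (1 + c))))) := by
          gcongr; exact min_le_right _ _
      _ = θ ^ 2 / 4 := by field_simp
  obtain ⟨R, hR⟩ := hu.exists_pdy_le hF hc hη0
  refine ⟨R + L, fun x y hxy => ?_⟩
  have hfar : ∀ t ∈ Set.Icc x (x + L), R ≤ ‖(t, y)‖ := fun t ht => by
    have h1 : ‖(x, y) - (t, y)‖ ≤ L := by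
      rw [Prod.mk_sub_mk, Prod.norm_mk, sub_self, norm_zero, Real.norm_eq_abs, abs_sub_comm,
        abs_of_nonneg (by linarith [ht.1])]
      exact max_le (by linarith [ht.2]) hL0.le
    linarith [norm_sub_norm_le (x, y) (t, y)]
  have hxL : x < x + L := by linarith
  obtain ⟨x', hx', hmin⟩ := exists_le_of_integral_le (hu.continuous_waveEnergy_slice hF y) hxL
    (hu.energy_le_const hF hc (fun x y => (hb x y).1) y hxL.le)
  rw [add_sub_cancel_left] at hmin
  have h4K : 4 * K / L = θ ^ 2 / 8 := by rw [hL]; field_simp; norm_num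
  rw [h4K, waveEnergy] at hmin
  have hyη := (hR x' y (hfar x' hx')).1
  have hη1 : η ≤ θ / 2 := min_le_left _ _
  have hysq : pdy u x' y ^ 2 ≤ (θ / 2) ^ 2 := by
    rw [← sq_abs]; gcongr; linarith
  have hF0 : 0 ≤ F (u x' y) := hF.nonneg (hu.neg_one_lt x' y).le (hu.lt_one x' y).le
  have hd : ∀ t, HasDerivAt (fun t => pdx u t y ^ 2 / 2 - F (u t y))
      (-(pdx u t y * (pdy (pdy u) t y + c * pdy u t y))) t := fun t => by
    refine ((((hu.hasDerivAt_pdx_fst t y).pow 2).div_const 2).sub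
      ((hF.hasDerivAt _).comp t (hu.hasDerivAt_fst t y))).congr_deriv ?_
    rw [← hu.equation t y]; push_cast; ring
  have hρ := abs_sub_le_of_hasDerivAt hx'.1 hd (C := K * (1 + c) * η) fun t ht => by
    have h1 := hR t y (hfar t ⟨ht.1, ht.2.trans hx'.2⟩)
    have h2 : |pdy (pdy u) t y + c * pdy u t y| ≤ (1 + c) * η := by
      refine (abs_add_le _ _).trans ?_
      rw [abs_mul, abs_of_pos hc]
      nlinarith [h1.1, h1.2.2]
    rw [abs_neg, abs_mul, mul_assoc]
    exact mul_le_mul (hb t y).1 h2 (abs_nonneg _) hK.le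
  have hlen : K * (1 + c) * η * (x' - x) ≤ θ ^ 2 / 4 := by
    refine le_trans ?_ hη2
    rw [mul_comm L]
    gcongr
    linarith [hx'.2]
  have hfin : pdx u x y ^ 2 ≤ 2 * F (u x y) + θ ^ 2 := by
    have := (abs_le.1 hρ).1
    nlinarith
  have hw := hF.wellSpeed_sq (hu.abs_le_one x y)
  have hw0 := wellSpeed_nonneg F (u x y)
  refine abs_le_of_sq_le_sq ?_ (by positivity)
  nlinarith [mul_nonneg hw0 hθ.le]

end IsTravelingWave

end Decay

/-! ### Horizontal limits -/

section HorizontalLimits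

variable {F : ℝ → ℝ} {c : ℝ} {u : ℝ → ℝ → ℝ}

lemma le_norm_mk_of_le_abs_fst {R x : ℝ} (y : ℝ) (h : R ≤ |x|) : R ≤ ‖(x, y)‖ :=
  h.trans (norm_fst_le (x, y))

lemma le_norm_mk_of_le_abs_snd {R y : ℝ} (x : ℝ) (h : R ≤ |y|) : R ≤ ‖(x, y)‖ :=
  h.trans (norm_snd_le (x, y))

namespace IsTravelingWave

lemma continuous_sq_wellSpeed (hF : BalancedDoubleWell F) (hu : IsTravelingWave F c u) :
    Continuous fun p : ℝ × ℝ => wellSpeed F (u p.1 p.2) ^ 2 :=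
  (hF.continuous_wellSpeed.comp hu.continuous).pow 2

lemma integral_sq_wellSpeed_le (hF : BalancedDoubleWell F) (hc : 0 < c)
    (hu : IsTravelingWave F c u) {K : ℝ} (hK : ∀ x y, |pdx u x y| ≤ K) {a b y₁ y₂ : ℝ}
    (hab : a ≤ b) (hy : y₁ ≤ y₂) :
    ∫ p in Set.Icc (a, y₁) (b, y₂), wellSpeed F (u p.1 p.2) ^ 2 ≤
      2 * (4 * K * (y₂ - y₁)) + 4 * K / c := by
  have he := (hu.contDiff_waveEnergy hF).continuous
  have h1 : ∫ p in Set.Icc (a, y₁) (b, y₂), waveEnergy F u p.1 p.2 ≤ 4 * K * (y₂ - y₁) := by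
    rw [setIntegral_Icc_prod he hab hy]
    have := intervalIntegral.integral_mono_on hy
      ((continuous_integral_slice he a b).intervalIntegrable (μ := volume) y₁ y₂)
      (intervalIntegrable_const (μ := volume)) (fun t _ => hu.energy_le_const hF hc hK t hab)
    rw [intervalIntegral.integral_const, smul_eq_mul] at this
    linarith
  have h2 : ∫ p in Set.Icc (a, y₁) (b, y₂), pdy u p.1 p.2 ^ 2 ≤ 4 * K / c := by
    rw [le_div_iff₀ hc, mul_comm]
    exact hu.integral_sq_pdy_le hF hc hK hab hy
  have hie : IntegrableOn (fun p : ℝ × ℝ => waveEnergy F u p.1 p.2) (Set.Icc (a, y₁) (b, y₂)) :=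
    he.continuousOn.integrableOn_compact isCompact_Icc
  have hiy := hu.integrableOn_sq_pdy (isCompact_Icc (a := (a, y₁)) (b := (b, y₂)))
  have h3 : ∫ p in Set.Icc (a, y₁) (b, y₂), wellSpeed F (u p.1 p.2) ^ 2 ≤
      ∫ p in Set.Icc (a, y₁) (b, y₂), (2 * waveEnergy F u p.1 p.2 + pdy u p.1 p.2 ^ 2) := by
    refine setIntegral_mono_on ?_ ((hie.const_mul 2).add hiy) measurableSet_Icc fun p _ => ?_
    · exact (hu.continuous_sq_wellSpeed hF).continuousOn.integrableOn_compact isCompact_Icc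
    · rw [hF.wellSpeed_sq (hu.abs_le_one _ _), waveEnergy]
      nlinarith [sq_nonneg (pdx u p.1 p.2)]
  rw [integral_add (hie.const_mul 2) hiy, integral_const_mul] at h3
  linarith

lemma integrableOn_sq_wellSpeed (hF : BalancedDoubleWell F) (hc : 0 < c)
    (hu : IsTravelingWave F c u) {y₁ y₂ : ℝ} (hy : y₁ ≤ y₂) :
    IntegrableOn (fun p : ℝ × ℝ => wellSpeed F (u p.1 p.2) ^ 2) (Set.univ ×ˢ Set.Icc y₁ y₂) := by
  obtain ⟨K, hK, hb⟩ := hu.exists_bound hF hc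
  have hcont := hu.continuous_sq_wellSpeed hF
  refine (aecover_closedBall (x := (0 : ℝ × ℝ)) (r := fun n : ℕ => (n : ℝ))
    tendsto_natCast_atTop_atTop).integrable_of_integral_bounded_of_nonneg_ae
    (2 * (4 * K * (y₂ - y₁)) + 4 * K / c) (fun n => ?_)
    (Eventually.of_forall fun p => sq_nonneg _) (Eventually.of_forall fun n => ?_)
  · exact (hcont.continuousOn.integrableOn_compact (isCompact_closedBall _ _)).restrict
  · rw [Measure.restrict_restrict measurableSet_closedBall]
    have hn : -(n : ℝ) ≤ n := by linarith [(Nat.cast_nonneg n : (0 : ℝ) ≤ n)]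
    refine le_trans (setIntegral_mono_set ?_ (Eventually.of_forall fun p => sq_nonneg _)
      (Eventually.of_forall ?_)) (hu.integral_sq_wellSpeed_le hF hc (fun x y => (hb x y).1) hn hy)
    · exact hcont.continuousOn.integrableOn_compact isCompact_Icc
    · rintro p ⟨hp1, -, hp2⟩
      rw [mem_closedBall_zero_iff] at hp1
      have := abs_le.1 ((norm_fst_le p).trans hp1)
      exact ⟨⟨this.1, hp2.1⟩, ⟨this.2, hp2.2⟩⟩

lemma exists_wellSpeed_le (hF : BalancedDoubleWell F) (hc : 0 < c) (hu : IsTravelingWave F c u)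
    (y : ℝ) {η : ℝ} (hη : 0 < η) : ∃ R : ℝ, ∀ x, R ≤ |x| → wellSpeed F (u x y) ≤ η := by
  obtain ⟨K, hK, hb⟩ := hu.exists_bound hF hc
  obtain ⟨Λ, hΛ, hlip⟩ := hF.exists_lipschitz_wellSpeed
  have hy : y - 1 ≤ y + 1 := by linarith
  have hg : ∀ p q : ℝ × ℝ, |wellSpeed F (u p.1 p.2) - wellSpeed F (u q.1 q.2)| ≤
      Λ * (2 * K) * ‖p - q‖ := fun p q => by
    refine (hlip _ _ (hu.abs_le_one _ _) (hu.abs_le_one _ _)).trans ?_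
    rw [mul_assoc]
    refine mul_le_mul_of_nonneg_left ?_ hΛ.le
    exact abs_sub_le_of_partial_bound hu.differentiable (fun x y => (hb x y).1)
      (fun x y => (hb x y).2.1) p q
  obtain ⟨R, hR⟩ := exists_abs_le_of_integrableOn_sq (S := Set.univ ×ˢ Set.Icc (y - 1) (y + 1))
    (g := fun p : ℝ × ℝ => wellSpeed F (u p.1 p.2)) (K := Λ * (2 * K)) (by positivity)
    (MeasurableSet.univ.prod measurableSet_Icc) hg
    (hu.integrableOn_sq_wellSpeed hF hc hy) hη
  refine ⟨R, fun x hx => (le_abs_self _).trans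
    (hR (x, y) (le_norm_mk_of_le_abs_fst y hx) fun p hp => ⟨trivial, ?_⟩)⟩
  rw [mem_closedBall, dist_eq_norm] at hp
  have := abs_le.1 ((norm_snd_le (p - (x, y))).trans hp)
  exact ⟨by linarith [this.1, show (p - (x, y)).2 = p.2 - y from rfl],
    by linarith [this.2, show (p - (x, y)).2 = p.2 - y from rfl]⟩

lemma wellEnergy_sub_le (hF : BalancedDoubleWell F) (hu : IsTravelingWave F c u) {a b : ℝ}
    (y : ℝ) (hab : a ≤ b) : wellEnergy F (u a y) - wellEnergy F (u b y) ≤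
      (∫ x in a..b, waveEnergy F u x y) + (∫ x in a..b, pdy u x y ^ 2) / 2 := by
  have hcx := hu.continuous_slice_pdx y
  have hcp := hF.continuous_wellSpeed.comp (hu.continuous_slice y)
  have hi : IntervalIntegrable (fun x => wellSpeed F (u x y) * pdx u x y) volume a b :=
    (hcp.mul hcx).intervalIntegrable _ _
  have hie := (hu.continuous_waveEnergy_slice hF y).intervalIntegrable (μ := volume) a b
  have hiy : IntervalIntegrable (fun x => pdy u x y ^ 2 / 2) volume a b :=
    (((hu.continuous_slice_pdy y).pow 2).div_const 2).intervalIntegrable a b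
  have hd : ∀ x, HasDerivAt (fun x => wellEnergy F (u x y)) (wellSpeed F (u x y) * pdx u x y) x :=
    fun x => (hF.hasDerivAt_wellEnergy _).comp x (hu.hasDerivAt_fst x y)
  rw [← neg_sub, ← intervalIntegral.integral_eq_sub_of_hasDerivAt (fun x _ => hd x) hi,
    ← intervalIntegral.integral_neg, ← intervalIntegral.integral_div,
    ← intervalIntegral.integral_add hie hiy]
  refine intervalIntegral.integral_mono_on hab hi.neg (hie.add hiy) fun x _ => ?_
  have h1 := hF.wellSpeed_sq (hu.abs_le_one x y)
  rw [waveEnergy]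
  nlinarith [sq_nonneg (pdx u x y + wellSpeed F (u x y))]

lemma exists_integral_sq_pdy_lt (hF : BalancedDoubleWell F) (hc : 0 < c)
    (hu : IsTravelingWave F c u) {ε : ℝ} (hε : 0 < ε) : ∃ R : ℝ, 0 < R ∧
      ∀ T : Set (ℝ × ℝ), (∀ p ∈ T, R ≤ ‖p‖) → ∫ p in T, pdy u p.1 p.2 ^ 2 < ε := by
  have hi := hu.integrable_sq_pdy hF hc
  obtain ⟨R, hR, h⟩ := exists_norm_tail_le MeasurableSet.univ hi.integrableOn hε
  refine ⟨R, hR, fun T hT => lt_of_le_of_lt ?_ h⟩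
  refine setIntegral_mono_set hi.integrableOn (Eventually.of_forall fun _ => sq_nonneg _)
    (Eventually.of_forall fun p hp => ⟨trivial, fun hb => ?_⟩)
  rw [mem_ball_zero_iff] at hb
  linarith [hT p hp]

/-- The wave cannot converge to `1` at the left end of a horizontal line. -/
lemma not_tendsto_one_atBot (hF : BalancedDoubleWell F) (hc : 0 < c) (hu : IsTravelingWave F c u)
    (y₀ : ℝ) : ¬ Tendsto (fun x => u x y₀) atBot (nhds 1) := by
  intro hlim
  have hall : ∀ y, ∀ ε > 0, ∀ᶠ x in atBot, 1 - ε ≤ u x y := by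
    intro y ε hε
    obtain ⟨R, hR⟩ := hu.exists_pdy_le hF hc (η := ε / (2 * (|y₀ - y| + 1))) (by positivity)
    filter_upwards [hlim.eventually (lt_mem_nhds (show 1 - ε / 2 < 1 by linarith)),
      eventually_le_atBot (-|R|)] with x hx1 hx2
    have hxR : R ≤ |x| := (le_abs_self R).trans
      (by rw [abs_of_nonpos (a := x) (by linarith [abs_nonneg R])]; linarith)
    rcases le_total y y₀ with h | h
    · have h1 := abs_sub_le_of_hasDerivAt h (fun t => hu.hasDerivAt_snd x t)
        (fun t _ => (hR x t (le_norm_mk_of_le_abs_fst t hxR)).1)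
      have h2 : ε / (2 * (|y₀ - y| + 1)) * (y₀ - y) ≤ ε / 2 := by
        rw [div_mul_eq_mul_div, div_le_iff₀ (by positivity)]
        nlinarith [le_abs_self (y₀ - y)]
      linarith [(abs_le.1 h1).2]
    · linarith [(hu.strictMono x).monotone h]
  obtain ⟨K, hK, hb⟩ := hu.exists_bound hF hc
  set m := c * ∫ p in Set.Icc ((-1 : ℝ), (0 : ℝ)) (1, 1), pdy u p.1 p.2 ^ 2 with hm
  have hm0 : 0 < m := by
    refine mul_pos hc ?_
    have hgc : Continuous fun p : ℝ × ℝ => pdy u p.1 p.2 ^ 2 := hu.contDiff_pdy.continuous.pow 2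
    rw [setIntegral_Icc_prod hgc (by norm_num) zero_le_one]
    refine intervalIntegral.intervalIntegral_pos_of_pos
      ((continuous_integral_slice hgc _ _).intervalIntegrable _ _) (fun t => ?_) zero_lt_one
    exact intervalIntegral.intervalIntegral_pos_of_pos
      (((hu.continuous_slice_pdy t).pow 2).intervalIntegrable _ _)
      (fun x => pow_pos (hu.pdy_pos x t) 2) (by norm_num)
  obtain ⟨R₁, hR₁, htail⟩ := hu.exists_integral_sq_pdy_lt hF hc hm0
  obtain ⟨R₂, hmod⟩ := hu.exists_abs_pdx_le hF hc (θ := m / 16) (by positivity)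
  obtain ⟨ε, hε, hεK, hεΦ⟩ : ∃ ε > 0, K * ε ≤ m / 16 ∧
      wellEnergy F 1 - wellEnergy F (1 - ε) ≤ m / 16 := by
    have h1 : Tendsto (fun ε : ℝ => K * ε) (nhdsWithin 0 (Set.Ioi 0)) (nhds 0) := by
      have : Tendsto (fun ε : ℝ => K * ε) (nhds 0) (nhds (K * 0)) :=
        (continuous_const.mul continuous_id).tendsto 0
      rw [mul_zero] at this
      exact this.mono_left nhdsWithin_le_nhds
    have h2 : Tendsto (fun ε : ℝ => wellEnergy F 1 - wellEnergy F (1 - ε))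
        (nhdsWithin 0 (Set.Ioi 0)) (nhds 0) := by
      have : Tendsto (fun ε : ℝ => wellEnergy F 1 - wellEnergy F (1 - ε)) (nhds 0)
          (nhds (wellEnergy F 1 - wellEnergy F (1 - 0))) :=
        (continuous_const.sub (hF.continuous_wellEnergy.comp
          (continuous_const.sub continuous_id))).tendsto 0
      rw [sub_zero, sub_self] at this
      exact this.mono_left nhdsWithin_le_nhds
    obtain ⟨ε, h⟩ := ((h1.eventually (gt_mem_nhds (show 0 < m / 16 by linarith))).and
      ((h2.eventually (gt_mem_nhds (show 0 < m / 16 by linarith))).and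
        self_mem_nhdsWithin)).exists
    exact ⟨ε, h.2.2, h.1.le, h.2.1.le⟩
  set b := |R₂| + 1
  set y₁ := -R₁ - 1
  obtain ⟨a, ha1, ha2⟩ := ((hall y₁ ε hε).and (eventually_le_atBot (-1))).exists
  have hb1 : 1 ≤ b := by simp [b]
  have hab : a ≤ b := by linarith
  obtain ⟨y', hy', hslice⟩ := exists_slice_le (hu.contDiff_pdy.continuous.pow 2) hab y₁
  have hy0 : y' ≤ 0 := by have := hy'.2; simp only [y₁] at this; linarith
  have h1 := htail (Set.Icc (a, y₁) (b, y₁ + 1)) fun p hp => by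
    have hp2 : p.2 ≤ -R₁ := by
      have : p.2 ≤ y₁ + 1 := hp.2.2
      simp only [y₁] at this; linarith
    refine le_trans ?_ (norm_snd_le p)
    rw [Real.norm_eq_abs, abs_of_nonpos (by linarith)]
    linarith
  have hdK : ∀ s, HasDerivAt (fun s => K * s) K s := fun s => by
    simpa using (hasDerivAt_id s).const_mul K
  have hdb : ∀ s, HasDerivAt (fun s => wellEnergy F s + m / 16 * s) (wellSpeed F s + m / 16) s :=
    fun s => ((hF.hasDerivAt_wellEnergy s).add ((hasDerivAt_id s).const_mul (m / 16))).congr_deriv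
      (by simp)
  have hbR : R₂ ≤ |b| := by
    rw [abs_of_nonneg (by linarith)]; linarith [le_abs_self R₂]
  have h2 := hu.energy_add_le hF hc hab hdK continuous_const hdb
    (hF.continuous_wellSpeed.add continuous_const) (fun y _ => (hb a y).1)
    (fun y _ => hmod b y (le_norm_mk_of_le_abs_fst y hbR)) (show y' ≤ 1 by linarith)
  have h3 := hu.wellEnergy_sub_le hF y' hab
  have h4 : m ≤ c * ∫ p in Set.Icc (a, y') (b, 1), pdy u p.1 p.2 ^ 2 := by
    rw [hm]
    refine mul_le_mul_of_nonneg_left (hu.integral_sq_pdy_mono isCompact_Icc ?_) hc.le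
    exact Set.Icc_subset_Icc (Prod.mk_le_mk.2 ⟨ha2, hy0⟩) (Prod.mk_le_mk.2 ⟨hb1, le_rfl⟩)
  have h5 : 1 - ε ≤ u a y' := ha1.trans ((hu.strictMono a).monotone hy'.1)
  have h6 := hF.monotone_wellEnergy h5
  have h7 := hu.neg_one_lt b y'
  have h8 : ∫ x in a..b, pdy u x y' ^ 2 < m := hslice.trans_lt h1
  nlinarith

/-- The wave converges to `-1` along horizontal lines. -/
lemma tendsto_atBot (hF : BalancedDoubleWell F) (hc : 0 < c) (hu : IsTravelingWave F c u)
    (y : ℝ) : Tendsto (fun x => u x y) atBot (nhds (-1)) := by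
  have hsmall : ∀ ε > 0, ∃ X : ℝ, ∀ x ≤ X, u x y < -1 + ε ∨ 1 - ε < u x y := by
    intro ε hε
    obtain ⟨m, hm, hmid⟩ := hF.exists_le_wellSpeed hε
    obtain ⟨R, hR⟩ := hu.exists_wellSpeed_le hF hc y (η := m / 2) (by positivity)
    refine ⟨-|R|, fun x hx => ?_⟩
    have h1 := hR x ((le_abs_self R).trans
      (by rw [abs_of_nonpos (a := x) (by linarith [abs_nonneg R])]; linarith))
    by_contra! h
    linarith [hmid _ h.1 h.2]
  by_contra hcon
  refine hu.not_tendsto_one_atBot hF hc y ?_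
  have hfreq : ∃ ε > 0, ∀ X : ℝ, ∃ x ≤ X, -1 + ε ≤ u x y := by
    by_contra! h
    refine hcon (Metric.tendsto_nhds.2 fun ε hε => ?_)
    obtain ⟨X, hX⟩ := h ε hε
    filter_upwards [eventually_le_atBot X] with x hx
    rw [Real.dist_eq, abs_lt]
    constructor <;> linarith [hX x hx, hu.neg_one_lt x y]
  obtain ⟨ε₀, hε₀, hfreq⟩ := hfreq
  refine Metric.tendsto_nhds.2 fun ε hε => ?_
  set ε₁ := min (min ε ε₀) 1
  have hε₁ : 0 < ε₁ := by positivity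
  have hle : ε₁ ≤ ε := (min_le_left _ _).trans (min_le_left _ _)
  have hle0 : ε₁ ≤ ε₀ := (min_le_left _ _).trans (min_le_right _ _)
  have hle1 : ε₁ ≤ 1 := min_le_right _ _
  obtain ⟨X, hX⟩ := hsmall ε₁ hε₁
  obtain ⟨x₀, hx₀, hux₀⟩ := hfreq X
  have h1 : 1 - ε₁ < u x₀ y := (hX x₀ hx₀).resolve_left (by linarith)
  filter_upwards [eventually_le_atBot x₀] with x hx
  have h2 : 1 - ε₁ < u x y := by
    by_contra! h
    have h3 : u x y < -1 + ε₁ := (hX x (hx.trans hx₀)).resolve_right (by linarith)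
    obtain ⟨z, hz, hz0⟩ := intermediate_value_Icc hx (hu.continuous_slice y).continuousOn
      (show (0 : ℝ) ∈ Set.Icc (u x y) (u x₀ y) from ⟨by linarith, by linarith⟩)
    rcases hX z (hz.2.trans hx₀) with h4 | h4 <;> simp only at hz0 <;> linarith
  rw [Real.dist_eq, abs_lt]
  constructor <;> linarith [hu.lt_one x y]

lemma tendsto_atTop (hF : BalancedDoubleWell F) (hc : 0 < c) (hu : IsTravelingWave F c u)
    (y : ℝ) : Tendsto (fun x => u x y) atTop (nhds (-1)) := by
  have := (hu.reflect.tendsto_atBot hF hc y).comp tendsto_neg_atTop_atBot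
  simpa [Function.comp_def] using this

/-- The wave is close to `-1` far away in a lower half-plane. -/
lemma exists_le_of_le (hF : BalancedDoubleWell F) (hc : 0 < c) (hu : IsTravelingWave F c u)
    (Y : ℝ) {ε : ℝ} (hε : 0 < ε) :
    ∃ R : ℝ, ∀ x y, y ≤ Y → R ≤ ‖(x, y)‖ → u x y ≤ -1 + ε := by
  have hlt : (-1 : ℝ) < -1 + ε := by linarith
  obtain ⟨X₁, hX₁⟩ := eventually_atBot.1 ((hu.tendsto_atBot hF hc Y).eventually (gt_mem_nhds hlt))
  obtain ⟨X₂, hX₂⟩ := eventually_atTop.1 ((hu.tendsto_atTop hF hc Y).eventually (gt_mem_nhds hlt))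
  obtain ⟨Y', hY'⟩ : ∃ Y' : ℝ, ∀ x ∈ Set.Icc X₁ X₂, ∀ y ≤ Y', u x y ≤ -1 + ε := by
    refine isCompact_Icc.induction_on (p := fun s => ∃ Y' : ℝ, ∀ x ∈ s, ∀ y ≤ Y', u x y ≤ -1 + ε)
      ⟨0, by simp⟩ (fun s t hst ⟨Y', h⟩ => ⟨Y', fun x hx => h x (hst hx)⟩) ?_ ?_
    · rintro s t ⟨Y₁, h₁⟩ ⟨Y₂, h₂⟩
      refine ⟨min Y₁ Y₂, fun x hx y hy => hx.elim (fun h => ?_) fun h => ?_⟩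
      · exact h₁ x h y (hy.trans (min_le_left _ _))
      · exact h₂ x h y (hy.trans (min_le_right _ _))
    · intro x _
      obtain ⟨y₁, hy₁⟩ := ((hu.2.2 x).eventually (gt_mem_nhds hlt)).exists
      refine ⟨{z | u z y₁ < -1 + ε}, mem_nhdsWithin_of_mem_nhds
        (((hu.continuous_slice y₁).continuousAt).eventually (gt_mem_nhds hy₁)), y₁, ?_⟩
      intro z hz y hy
      exact ((hu.strictMono z).monotone hy).trans (le_of_lt hz)
  refine ⟨|X₁| + |X₂| + |Y| + |Y'| + 1, fun x y hy hR => ?_⟩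
  have a1 := abs_nonneg X₁
  have a2 := abs_nonneg X₂
  have a3 := abs_nonneg Y
  have a4 := abs_nonneg Y'
  by_cases hx1 : x ≤ X₁
  · exact ((hu.strictMono x).monotone hy).trans (hX₁ x hx1).le
  by_cases hx2 : X₂ ≤ x
  · exact ((hu.strictMono x).monotone hy).trans (hX₂ x hx2).le
  push Not at hx1 hx2
  refine hY' x ⟨hx1.le, hx2.le⟩ y ?_
  rw [Prod.norm_mk, le_max_iff, Real.norm_eq_abs, Real.norm_eq_abs] at hR
  rcases hR with hR | hR
  · exfalso
    have : |x| ≤ |X₁| + |X₂| :=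
      abs_le.2 ⟨by linarith [neg_abs_le X₁], by linarith [le_abs_self X₂]⟩
    linarith
  · rcases le_abs.1 hR with h | h
    · linarith [le_abs_self Y]
    · linarith [neg_abs_le Y']

end IsTravelingWave

end HorizontalLimits

/-! ### Asymptotic profile equation for the horizontal derivative -/

section ProfileEquation

variable {F : ℝ → ℝ} {c : ℝ} {u : ℝ → ℝ → ℝ}

namespace IsTravelingWave

lemma integral_sq_profile (hF : BalancedDoubleWell F) (hu : IsTravelingWave F c u) (a b y : ℝ) :
    ∫ x in a..b, (pdx u x y - wellSpeed F (u x y)) ^ 2 =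
      2 * (∫ x in a..b, waveEnergy F u x y) + (∫ x in a..b, pdy u x y ^ 2) -
        2 * (wellEnergy F (u b y) - wellEnergy F (u a y)) := by
  have hcx := hu.continuous_slice_pdx y
  have hcp : Continuous fun x => wellSpeed F (u x y) :=
    hF.continuous_wellSpeed.comp (hu.continuous_slice y)
  have hi : IntervalIntegrable (fun x => wellSpeed F (u x y) * pdx u x y) volume a b :=
    (hcp.mul hcx).intervalIntegrable _ _
  have hie := (hu.continuous_waveEnergy_slice hF y).intervalIntegrable (μ := volume) a b
  have hiy : IntervalIntegrable (fun x => pdy u x y ^ 2) volume a b :=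
    ((hu.continuous_slice_pdy y).pow 2).intervalIntegrable a b
  have hd : ∀ x, HasDerivAt (fun x => wellEnergy F (u x y)) (wellSpeed F (u x y) * pdx u x y) x :=
    fun x => (hF.hasDerivAt_wellEnergy _).comp x (hu.hasDerivAt_fst x y)
  rw [← intervalIntegral.integral_eq_sub_of_hasDerivAt (fun x _ => hd x) hi,
    ← intervalIntegral.integral_const_mul, ← intervalIntegral.integral_const_mul,
    ← intervalIntegral.integral_add (hie.const_mul 2) hiy,
    ← intervalIntegral.integral_sub ((hie.const_mul 2).add hiy) (hi.const_mul 2)]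
  refine intervalIntegral.integral_congr fun x _ => ?_
  have h1 := hF.wellSpeed_sq (hu.abs_le_one x y)
  simp only [waveEnergy]
  linear_combination h1

lemma integral_sq_profile_le (hF : BalancedDoubleWell F) (hc : 0 < c)
    (hu : IsTravelingWave F c u) {R θ a x₀ b y : ℝ} (hθ : 0 ≤ θ)
    (hR : ∀ x y, R ≤ ‖(x, y)‖ → |pdx u x y| ≤ wellSpeed F (u x y) + θ)
    (ha : R ≤ |a|) (hb : R ≤ |b|) (hax : a ≤ x₀) (hxb : x₀ ≤ b) :
    ∫ x in a..x₀, (pdx u x y - wellSpeed F (u x y)) ^ 2 ≤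
      4 * (wellEnergy F 1 - wellEnergy F (u x₀ y)) + 8 * θ + ∫ x in a..b, pdy u x y ^ 2 := by
  have hd : ∀ s, HasDerivAt (fun s => wellEnergy F s + θ * s) (wellSpeed F s + θ) s :=
    fun s => ((hF.hasDerivAt_wellEnergy s).add ((hasDerivAt_id s).const_mul θ)).congr_deriv
      (by simp)
  have hcont : Continuous fun s => wellSpeed F s + θ :=
    hF.continuous_wellSpeed.add continuous_const
  have h1 := hu.energy_add_le hF hc (hax.trans hxb) hd hcont hd hcont
    (fun t _ => hR a t (le_norm_mk_of_le_abs_fst t ha))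
    (fun t _ => hR b t (le_norm_mk_of_le_abs_fst t hb)) (le_refl y)
  have h2 : 0 ≤ c * ∫ p in Set.Icc (a, y) (b, y), pdy u p.1 p.2 ^ 2 :=
    mul_nonneg hc.le (integral_nonneg fun p => sq_nonneg _)
  have h3 := hu.wellEnergy_sub_le hF y hxb
  have h4 := hu.integral_sq_profile hF a x₀ y
  have hce := hu.continuous_waveEnergy_slice hF y
  have hcy : Continuous fun x => pdy u x y ^ 2 := (hu.continuous_slice_pdy y).pow 2
  have h5 := intervalIntegral.integral_add_adjacent_intervals
    (hce.intervalIntegrable (μ := volume) a x₀) (hce.intervalIntegrable x₀ b)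
  have h6 := intervalIntegral.integral_add_adjacent_intervals
    (hcy.intervalIntegrable (μ := volume) a x₀) (hcy.intervalIntegrable x₀ b)
  have h7 := mul_le_mul_of_nonneg_left (hu.neg_one_lt a y).le hθ
  have h8 := mul_le_mul_of_nonneg_left (hu.neg_one_lt b y).le hθ
  linarith

lemma exists_profile_le_of_le (hF : BalancedDoubleWell F) (hc : 0 < c)
    (hu : IsTravelingWave F c u) (x₀ : ℝ) {θ : ℝ} (hθ : 0 < θ) :
    ∃ Y : ℝ, ∀ x y, x ≤ x₀ → Y ≤ y → wellSpeed F (u x y) - θ ≤ pdx u x y := by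
  obtain ⟨K, hK, hb⟩ := hu.exists_bound hF hc
  obtain ⟨Λ, hΛ, hlip⟩ := hF.exists_lipschitz_wellSpeed
  set K' := K + Λ * K with hK'
  have hK'0 : 0 < K' := by positivity
  set η := θ / (2 + Λ) with hη
  have hη0 : 0 < η := by positivity
  have hηθ : η * (2 + Λ) = θ := by rw [hη]; field_simp
  set T := η ^ 3 / (8 * K') with hT
  have hT0 : 0 < T := by positivity
  obtain ⟨R₁, -, htail⟩ := hu.exists_integral_sq_pdy_lt hF hc (ε := T / 4) (by positivity)
  obtain ⟨R₂, hmod⟩ := hu.exists_abs_pdx_le hF hc (θ := T / 32) (by positivity)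
  obtain ⟨R₃, hsmall⟩ := hu.exists_pdy_le hF hc hη0
  have hΦ : Tendsto (fun y => wellEnergy F (u x₀ y)) atTop (nhds (wellEnergy F 1)) :=
    (hF.continuous_wellEnergy.tendsto 1).comp (hu.2.1 x₀)
  obtain ⟨Y₁, hY₁⟩ := eventually_atTop.1 (hΦ.eventually (lt_mem_nhds
    (show wellEnergy F 1 - T / 32 < wellEnergy F 1 by linarith)))
  refine ⟨max Y₁ (max |R₁| |R₃|), fun x y hx hy => ?_⟩
  have hyY : Y₁ ≤ y := (le_max_left _ _).trans hy
  have hyR₁ : |R₁| ≤ y := (le_max_left _ _).trans ((le_max_right _ _).trans hy)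
  have hyR₃ : |R₃| ≤ y := (le_max_right _ _).trans ((le_max_right _ _).trans hy)
  set l := η / (2 * K') with hl
  have hl0 : 0 < l := by positivity
  set a := min (x - l) (-|R₂|)
  set b := max x₀ |R₂|
  have hax : a ≤ x - l := min_le_left _ _
  have haR : R₂ ≤ |a| := by
    have : a ≤ -|R₂| := min_le_right _ _
    rw [abs_of_nonpos (by linarith [abs_nonneg R₂])]
    linarith [le_abs_self R₂]
  have hbR : R₂ ≤ |b| := (le_abs_self R₂).trans ((le_max_right _ _).trans (le_abs_self b))
  have hxb : x₀ ≤ b := le_max_left _ _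
  have hgc : Continuous fun p : ℝ × ℝ => pdy u p.1 p.2 ^ 2 := hu.contDiff_pdy.continuous.pow 2
  obtain ⟨y', hy', hslice⟩ := exists_slice_le hgc (show a ≤ b by linarith) y
  have h1 := htail (Set.Icc (a, y) (b, y + 1)) fun p hp => by
    have hp2 : y ≤ p.2 := hp.1.2
    exact (le_abs_self R₁).trans ((hyR₁.trans (hp2.trans (le_abs_self _))).trans (norm_snd_le p))
  have h2 := hu.integral_sq_profile_le hF hc (y := y') (show 0 ≤ T / 32 by positivity) hmod haR hbR
    (show a ≤ x₀ by linarith) hxb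
  have h3 := hY₁ y' (hyY.trans hy'.1)
  have hcf : Continuous fun x => pdx u x y' - wellSpeed F (u x y') :=
    (hu.continuous_slice_pdx y').sub (hF.continuous_wellSpeed.comp (hu.continuous_slice y'))
  have h4 : ∫ t in (-x)..(-x + l), (pdx u (-t) y' - wellSpeed F (u (-t) y')) ^ 2 < T := by
    have hcomp := intervalIntegral.integral_comp_neg
      (a := -x) (b := -x + l) (fun t => (pdx u t y' - wellSpeed F (u t y')) ^ 2)
    rw [hcomp]
    have hmono := intervalIntegral.integral_mono_interval (μ := volume)
      (f := fun t => (pdx u t y' - wellSpeed F (u t y')) ^ 2)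
      (c := a) (a := -(-x + l)) (b := - -x) (d := x₀) (by linarith) (by linarith) (by linarith)
      (Eventually.of_forall fun t => sq_nonneg _) ((hcf.pow 2).intervalIntegrable _ _)
    simp only at hslice
    linarith
  have hlipf : ∀ s t, |(pdx u (-s) y' - wellSpeed F (u (-s) y')) -
      (pdx u (-t) y' - wellSpeed F (u (-t) y'))| ≤ K' * |s - t| := by
    have key : ∀ s t, s ≤ t → |(pdx u (-s) y' - wellSpeed F (u (-s) y')) -
        (pdx u (-t) y' - wellSpeed F (u (-t) y'))| ≤ K' * |s - t| := by
      intro s t hst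
      have hst' : -t ≤ -s := by linarith
      have e1 := abs_sub_le_of_hasDerivAt hst' (fun r => hu.hasDerivAt_pdx_fst r y')
        (fun r _ => (hb r y').2.2.1)
      have e2 := abs_sub_le_of_hasDerivAt hst' (fun r => hu.hasDerivAt_fst r y')
        (fun r _ => (hb r y').1)
      have e3 := hlip _ _ (hu.abs_le_one (-s) y') (hu.abs_le_one (-t) y')
      have e4 := mul_le_mul_of_nonneg_left e2 hΛ.le
      rw [abs_of_nonpos (show s - t ≤ 0 by linarith)]
      rw [abs_le] at e1 e3 ⊢
      constructor <;> rw [hK'] <;> nlinarith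
    intro s t
    rcases le_total s t with h | h
    · exact key s t h
    · rw [abs_sub_comm, abs_sub_comm s t]; exact key t s h
  have h5 := abs_le_of_integral_sq_le hK'0 hη0 (hcf.comp continuous_neg) hlipf le_rfl h4
  simp only [Function.comp_apply, neg_neg] at h5
  have hR₃ : ∀ t ∈ Set.Icc y y', R₃ ≤ ‖(x, t)‖ := fun t ht => le_norm_mk_of_le_abs_snd x
    ((le_abs_self R₃).trans (hyR₃.trans (ht.1.trans (le_abs_self t))))
  have e1 := abs_sub_le_of_hasDerivAt hy'.1 (fun r => hu.hasDerivAt_pdx_snd x r)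
    (fun r hr => (hsmall x r (hR₃ r hr)).2.1)
  have e2 := abs_sub_le_of_hasDerivAt hy'.1 (fun r => hu.hasDerivAt_snd x r)
    (fun r hr => (hsmall x r (hR₃ r hr)).1)
  have e3 := hlip _ _ (hu.abs_le_one x y') (hu.abs_le_one x y)
  have e4 := mul_le_mul_of_nonneg_left e2 hΛ.le
  have e5 : η * (y' - y) ≤ η := by nlinarith [hy'.2]
  have e6 := mul_le_mul_of_nonneg_left e5 hΛ.le
  have f1 := (abs_le.1 e1).2
  have f2 := (abs_le.1 e3).1
  have f3 := (abs_le.1 h5).1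
  nlinarith

/-- To the left of any vertical line, the wave asymptotically solves the increasing profile
equation. -/
lemma exists_profile_le (hF : BalancedDoubleWell F) (hc : 0 < c) (hu : IsTravelingWave F c u)
    (x₀ : ℝ) {θ : ℝ} (hθ : 0 < θ) :
    ∃ R : ℝ, ∀ x y, x ≤ x₀ → R ≤ ‖(x, y)‖ → wellSpeed F (u x y) - θ ≤ pdx u x y := by
  obtain ⟨Y, hY⟩ := hu.exists_profile_le_of_le hF hc x₀ hθ
  obtain ⟨Λ, hΛ, hlip⟩ := hF.exists_lipschitz_wellSpeed
  obtain ⟨R₁, h₁⟩ := hu.exists_le_of_le hF hc Y (ε := θ / (4 * Λ)) (by positivity)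
  obtain ⟨R₂, h₂⟩ := hu.exists_abs_pdx_le hF hc (θ := θ / 2) (by positivity)
  refine ⟨max R₁ R₂, fun x y hx hR => ?_⟩
  rcases le_total Y y with h | h
  · exact hY x y hx h
  · have e1 := h₁ x y h ((le_max_left _ _).trans hR)
    have e2 := h₂ x y ((le_max_right _ _).trans hR)
    have e3 := hlip (u x y) (-1) (hu.abs_le_one x y) (by norm_num)
    rw [hF.wellSpeed_neg_one, sub_zero, abs_of_nonneg (wellSpeed_nonneg F _),
      abs_of_nonneg (by linarith [hu.neg_one_lt x y])] at e3
    have e4 : Λ * (u x y - -1) ≤ Λ * (θ / (4 * Λ)) := by gcongr; linarith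
    have e5 : Λ * (θ / (4 * Λ)) = θ / 4 := by field_simp
    linarith [(abs_le.1 e2).1]

/-- To the right of any vertical line, the wave asymptotically solves the decreasing profile
equation. -/
lemma exists_le_profile (hF : BalancedDoubleWell F) (hc : 0 < c) (hu : IsTravelingWave F c u)
    (x₀ : ℝ) {θ : ℝ} (hθ : 0 < θ) :
    ∃ R : ℝ, ∀ x y, x₀ ≤ x → R ≤ ‖(x, y)‖ → pdx u x y ≤ -wellSpeed F (u x y) + θ := by
  obtain ⟨R, h⟩ := hu.reflect.exists_profile_le hF hc (-x₀) hθ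
  refine ⟨R, fun x y hx hR => ?_⟩
  have := h (-x) y (by linarith) (by simpa [Prod.norm_mk] using hR)
  rw [pdx_comp_neg] at this
  simp only [neg_neg] at this
  linarith

end IsTravelingWave

end ProfileEquation

/-! ### Ordering of a slice and its reflection -/

section SliceOrdering

variable {F : ℝ → ℝ} {c : ℝ} {u : ℝ → ℝ → ℝ}

lemma le_const_of_deriv_neg {f f' : ℝ → ℝ} {a k : ℝ} (hf : ∀ x, HasDerivAt f (f' x) x)
    (ha : f a ≤ k) (h : ∀ x, a ≤ x → f x = k → f' x < 0) {x : ℝ} (hx : a ≤ x) : f x ≤ k :=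
  image_le_of_deriv_right_lt_deriv_boundary (f := f) (f' := f') (a := a) (b := x)
    (B := fun _ => k) (B' := fun _ => 0)
    (fun t _ => (hf t).continuousAt.continuousWithinAt) (fun t _ => (hf t).hasDerivWithinAt) ha
    (fun t => hasDerivAt_const t k) (fun t ht => h t ht.1) ⟨hx, le_rfl⟩

/-- A subsolution of the decreasing profile equation reaches the lower well in bounded time. -/
lemma BalancedDoubleWell.exists_decay (hF : BalancedDoubleWell F) {ε : ℝ} (hε : 0 < ε)
    (hε1 : ε < 1) : ∃ θ > 0, ∃ l > 0, ∀ (f f' : ℝ → ℝ) (a : ℝ), (∀ x, HasDerivAt f (f' x) x) →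
      (∀ x, a ≤ x → f' x ≤ -wellSpeed F (f x) + θ) → f a ≤ 1 - ε →
        ∀ x, a + l ≤ x → f x ≤ -1 + ε := by
  obtain ⟨m, hm, hmid⟩ := hF.exists_le_wellSpeed hε
  refine ⟨m / 2, by positivity, (2 - 2 * ε) / (m / 4), div_pos (by linarith) (by positivity),
    fun f f' a hf hf' ha x hx => ?_⟩
  set l := (2 - 2 * ε) / (m / 4) with hl
  have hl0 : 0 < l := div_pos (by linarith) (by positivity)
  have hlm : m / 4 * l = 2 - 2 * ε := by rw [hl]; field_simp
  have hline : ∀ t, HasDerivAt (fun t => 1 - ε - m / 4 * (t - a)) (-(m / 4)) t := fun t =>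
    ((((hasDerivAt_id t).sub_const a).const_mul (m / 4)).const_sub (1 - ε)).congr_deriv (by simp)
  have h1 : f (a + l) ≤ 1 - ε - m / 4 * (a + l - a) := by
    refine image_le_of_deriv_right_lt_deriv_boundary (f := f) (f' := f') (a := a) (b := a + l)
      (fun t _ => (hf t).continuousAt.continuousWithinAt) (fun t _ => (hf t).hasDerivWithinAt)
      (by simpa using ha) hline (fun t ht htB => ?_) ⟨by linarith, le_rfl⟩
    have e1 : m / 4 * (t - a) ≤ m / 4 * l := by
      have := ht.2
      gcongr
      linarith
    have e2 : 0 ≤ m / 4 * (t - a) := mul_nonneg (by positivity) (by linarith [ht.1])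
    linarith [hf' t ht.1, hmid (f t) (by linarith) (by linarith)]
  refine le_const_of_deriv_neg hf (by linarith) (fun t ht htk => ?_) hx
  linarith [hf' t (by linarith), hmid (f t) (by linarith) (by linarith)]

/-- Two approximate solutions of the decreasing profile equation are approximately ordered. -/
lemma BalancedDoubleWell.exists_ordering (hF : BalancedDoubleWell F) {ε : ℝ} (hε : 0 < ε)
    (hε1 : ε < 1) : ∃ θ > 0, ∀ (f f' g g' : ℝ → ℝ) (a : ℝ), (∀ x, HasDerivAt f (f' x) x) →
      (∀ x, HasDerivAt g (g' x) x) → (∀ x, |f x| ≤ 1) → (∀ x, |g x| ≤ 1) →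
      (∀ x, a ≤ x → |f' x + wellSpeed F (f x)| ≤ θ) →
      (∀ x, a ≤ x → |g' x + wellSpeed F (g x)| ≤ θ) →
        (∀ x, a ≤ x → f x ≤ g x + ε) ∨ (∀ x, a ≤ x → g x ≤ f x + ε) := by
  obtain ⟨θ₁, hθ₁, l, hl, hdecay⟩ := hF.exists_decay hε hε1
  obtain ⟨Λ, hΛ, hlip⟩ := hF.exists_lipschitz_wellSpeed
  set θ₂ := ε * Λ / (2 * exp (Λ * l)) with hθ₂
  have hθ₂0 : 0 < θ₂ := by positivity
  refine ⟨min θ₁ θ₂, by positivity, ?_⟩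
  have key : ∀ (f f' g g' : ℝ → ℝ) (a : ℝ), (∀ x, HasDerivAt f (f' x) x) →
      (∀ x, HasDerivAt g (g' x) x) → (∀ x, |f x| ≤ 1) → (∀ x, |g x| ≤ 1) →
      (∀ x, a ≤ x → |f' x + wellSpeed F (f x)| ≤ min θ₁ θ₂) →
      (∀ x, a ≤ x → |g' x + wellSpeed F (g x)| ≤ min θ₁ θ₂) → ∀ x₁ x₂, a ≤ x₁ → x₁ ≤ x₂ →
      f x₁ + ε < g x₁ → g x₂ + ε < f x₂ → False := by
    intro f f' g g' a hf hg hf1 hg1 hf' hg' x₁ x₂ h1 h12 hx₁ hx₂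
    have hlt : x₂ < x₁ + l := by
      by_contra! hcon
      have := hdecay f f' x₁ hf (fun x hx => by
        linarith [(abs_le.1 (hf' x (h1.trans hx))).2, min_le_left θ₁ θ₂])
        (by linarith [(abs_le.1 (hg1 x₁)).2]) x₂ hcon
      linarith [(abs_le.1 (hg1 x₂)).1]
    have hd : ∀ x, HasDerivAt (fun x => f x - g x) (f' x - g' x) x := fun x => (hf x).sub (hg x)
    have hdc : Continuous fun x => f x - g x :=
      continuous_iff_continuousAt.2 fun x => (hd x).continuousAt
    obtain ⟨z, hz, hz0⟩ := intermediate_value_Icc h12 hdc.continuousOn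
      (show (0 : ℝ) ∈ Set.Icc (f x₁ - g x₁) (f x₂ - g x₂) from ⟨by linarith, by linarith⟩)
    have hgr := norm_le_gronwallBound_of_norm_deriv_right_le (f := fun x => f x - g x)
      (f' := fun x => f' x - g' x) (δ := 0) (K := Λ) (ε := 2 * θ₂) (a := z) (b := x₂)
      hdc.continuousOn (fun x _ => (hd x).hasDerivWithinAt) (by simp only at hz0; simp [hz0])
      (fun x hx => by
        have hax : a ≤ x := h1.trans (hz.1.trans hx.1)
        have e1 := abs_le.1 ((hf' x hax).trans (min_le_right _ _))
        have e2 := abs_le.1 ((hg' x hax).trans (min_le_right _ _))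
        have e3 := abs_le.1 (hlip (f x) (g x) (hf1 x) (hg1 x))
        rw [Real.norm_eq_abs, Real.norm_eq_abs, abs_le]
        constructor <;> linarith) x₂ ⟨hz.2, le_rfl⟩
    rw [gronwallBound_of_K_ne_0 hΛ.ne'] at hgr
    simp only [zero_mul, zero_add, Real.norm_eq_abs] at hgr
    have e4 : exp (Λ * (x₂ - z)) ≤ exp (Λ * l) := by
      refine exp_le_exp.2 ?_
      gcongr
      linarith [hz.1]
    have e5 : 2 * θ₂ / Λ * (exp (Λ * (x₂ - z)) - 1) ≤ 2 * θ₂ / Λ * exp (Λ * l) := by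
      gcongr
      linarith
    have e6 : 2 * θ₂ / Λ * exp (Λ * l) = ε := by
      rw [hθ₂]
      have := (exp_pos (Λ * l)).ne'
      field_simp
    linarith [le_abs_self (f x₂ - g x₂)]
  intro f f' g g' a hf hg hf1 hg1 hf' hg'
  by_contra! hcon
  obtain ⟨⟨x₂, hx₂, h2⟩, x₁, hx₁, h1⟩ := hcon
  rcases le_total x₁ x₂ with h | h
  · exact key f f' g g' a hf hg hf1 hg1 hf' hg' x₁ x₂ hx₁ h h1 h2
  · exact key g g' f f' a hg hf hg1 hf1 hg' hf' x₂ x₁ hx₂ h h2 h1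

/-- At arbitrarily large heights, the wave is approximately ordered against its reflection. -/
lemma IsTravelingWave.frequently_le_or_frequently_ge (hF : BalancedDoubleWell F) (hc : 0 < c)
    (hu : IsTravelingWave F c u) (l : ℝ) :
    (∀ ε > 0, ∀ Y : ℝ, ∃ y ≥ Y, ∀ x ≥ l, u x y ≤ u (2 * l - x) y + ε) ∨
      (∀ ε > 0, ∀ Y : ℝ, ∃ y ≥ Y, ∀ x ≥ l, u (2 * l - x) y ≤ u x y + ε) := by
  by_contra! hcon
  obtain ⟨⟨ε₁, hε₁, Y₁, h₁⟩, ε₂, hε₂, Y₂, h₂⟩ := hcon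
  set ε := min (min ε₁ ε₂) (1 / 2)
  have hle₁ : ε ≤ ε₁ := (min_le_left _ _).trans (min_le_left _ _)
  have hle₂ : ε ≤ ε₂ := (min_le_left _ _).trans (min_le_right _ _)
  have hε1 : ε < 1 := (min_le_right _ _).trans_lt (by norm_num)
  obtain ⟨θ, hθ, hord⟩ := hF.exists_ordering (ε := ε) (by positivity) hε1
  obtain ⟨R₁, hR₁⟩ := hu.exists_profile_le hF hc l hθ
  obtain ⟨R₂, hR₂⟩ := hu.exists_le_profile hF hc l hθ
  obtain ⟨R₃, hR₃⟩ := hu.exists_abs_pdx_le hF hc hθ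
  set y := |R₁| + |R₂| + |R₃| + |Y₁| + |Y₂| with hy
  have a1 := abs_nonneg R₁
  have a2 := abs_nonneg R₂
  have a3 := abs_nonneg R₃
  have a4 := abs_nonneg Y₁
  have a5 := abs_nonneg Y₂
  have hfar : ∀ R x, R ≤ y → R ≤ ‖(x, y)‖ := fun R x h =>
    le_norm_mk_of_le_abs_snd x (h.trans (le_abs_self y))
  have e1 : R₁ ≤ y := by linarith [le_abs_self R₁]
  have e2 : R₂ ≤ y := by linarith [le_abs_self R₂]
  have e3 : R₃ ≤ y := by linarith [le_abs_self R₃]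
  have hdr : ∀ x, HasDerivAt (fun x => u (2 * l - x) y) (-pdx u (2 * l - x) y) x := fun x =>
    ((hu.hasDerivAt_fst (2 * l - x) y).comp x
      ((hasDerivAt_id x).const_sub (2 * l))).congr_deriv (by simp)
  rcases hord (fun x => u x y) (fun x => pdx u x y) (fun x => u (2 * l - x) y)
    (fun x => -pdx u (2 * l - x) y) l (fun x => hu.hasDerivAt_fst x y) hdr
    (fun x => hu.abs_le_one x y) (fun x => hu.abs_le_one _ y)
    (fun x hx => abs_le.2 ⟨by linarith [(abs_le.1 (hR₃ x y (hfar _ _ e3))).1],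
      by linarith [hR₂ x y hx (hfar _ _ e2)]⟩)
    (fun x hx => abs_le.2 ⟨by linarith [(abs_le.1 (hR₃ (2 * l - x) y (hfar _ _ e3))).2],
      by linarith [hR₁ (2 * l - x) y (by linarith) (hfar _ _ e1)]⟩) with h | h
  · obtain ⟨x, hx, hlt⟩ := h₁ y (by linarith [le_abs_self Y₁])
    linarith [h x hx]
  · obtain ⟨x, hx, hlt⟩ := h₂ y (by linarith [le_abs_self Y₂])
    linarith [h x hx]

end SliceOrdering

/-! ### A strong maximum principle -/

section StrongMaximumPrinciple

variable {w : ℝ → ℝ → ℝ} {a c M : ℝ}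

/-- The square of the Euclidean distance in the plane. -/
def sqDist (p q : ℝ × ℝ) : ℝ := (p.1 - q.1) ^ 2 + (p.2 - q.2) ^ 2

lemma sqDist_nonneg (p q : ℝ × ℝ) : 0 ≤ sqDist p q := by
  unfold sqDist; positivity

lemma sqDist_pos {p q : ℝ × ℝ} (h : p ≠ q) : 0 < sqDist p q := by
  refine lt_of_le_of_ne (sqDist_nonneg p q) fun h0 => h ?_
  have h1 : (p.1 - q.1) ^ 2 = 0 := by
    unfold sqDist at h0; linarith [sq_nonneg (p.1 - q.1), sq_nonneg (p.2 - q.2)]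
  have h2 : (p.2 - q.2) ^ 2 = 0 := by
    unfold sqDist at h0; linarith [sq_nonneg (p.1 - q.1), sq_nonneg (p.2 - q.2)]
  exact Prod.ext (by simpa [sub_eq_zero] using h1) (by simpa [sub_eq_zero] using h2)

lemma continuous_sqDist (q : ℝ × ℝ) : Continuous fun p => sqDist p q := by
  unfold sqDist; fun_prop

lemma abs_fst_sub_le_of_sqDist_le {p q : ℝ × ℝ} {r : ℝ} (hr : 0 ≤ r) (h : sqDist p q ≤ r ^ 2) :
    |p.1 - q.1| ≤ r := by
  refine abs_le_of_sq_le_sq (by unfold sqDist at h; linarith [sq_nonneg (p.2 - q.2)]) hr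

lemma abs_snd_sub_le_of_sqDist_le {p q : ℝ × ℝ} {r : ℝ} (hr : 0 ≤ r) (h : sqDist p q ≤ r ^ 2) :
    |p.2 - q.2| ≤ r := by
  refine abs_le_of_sq_le_sq (by unfold sqDist at h; linarith [sq_nonneg (p.1 - q.1)]) hr

lemma isCompact_sqDist_le (q : ℝ × ℝ) {r : ℝ} (hr : 0 ≤ r) :
    IsCompact {p : ℝ × ℝ | sqDist p q ≤ r ^ 2} := by
  refine (isCompact_closedBall q r).of_isClosed_subset
    (isClosed_le (continuous_sqDist q) continuous_const) fun p hp => ?_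
  rw [mem_closedBall, Prod.dist_eq, Real.dist_eq, Real.dist_eq]
  exact max_le (abs_fst_sub_le_of_sqDist_le hr hp) (abs_snd_sub_le_of_sqDist_le hr hp)

/-- A nonnegative supersolution cannot vanish at a boundary point of a disc in which it is
positive. -/
lemma ne_zero_of_pos_on_disc (hw : ContDiff ℝ 2 fun p : ℝ × ℝ => w p.1 p.2) (hc : 0 ≤ c)
    (hM : 0 ≤ M) {q z : ℝ × ℝ} {ρ : ℝ} (hρ : 0 < ρ) (hz : sqDist z q = ρ ^ 2)
    (hpos : ∀ p, sqDist p q ≤ ρ ^ 2 → p ≠ z → 0 < w p.1 p.2)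
    (hnn : ∀ p, sqDist p z ≤ (ρ / 2) ^ 2 → 0 ≤ w p.1 p.2)
    (hL : ∀ x y, sqDist (x, y) z ≤ (ρ / 2) ^ 2 →
      pdx (pdx w) x y + pdy (pdy w) x y + c * pdy w x y ≤ M * w x y) : w z.1 z.2 ≠ 0 := by
  intro hwz
  set α := (4 + 4 * c * ρ + M) / ρ ^ 2 + 1 with hα
  have hα1 : 1 ≤ α := by rw [hα]; linarith [show 0 ≤ (4 + 4 * c * ρ + M) / ρ ^ 2 by positivity]
  have hαρ : 4 + 4 * c * ρ + M < α * ρ ^ 2 := by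
    rw [hα, add_mul, div_mul_cancel₀ _ (by positivity)]
    linarith [show 0 < ρ ^ 2 by positivity]
  have hwc : Continuous fun p : ℝ × ℝ => w p.1 p.2 := hw.continuous
  set h : ℝ × ℝ → ℝ := fun p => exp (-α * sqDist p q) - exp (-α * ρ ^ 2) with hh
  have hhc : Continuous h := by
    have := continuous_sqDist q
    fun_prop
  have hh1 : ∀ p, h p ≤ 1 := fun p => by
    have e1 : exp (-α * sqDist p q) ≤ 1 := exp_le_one_iff.2 (by nlinarith [sqDist_nonneg p q])
    have e2 := exp_pos (-α * ρ ^ 2)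
    simp only [hh]; linarith
  have hhneg : ∀ p, ρ ^ 2 < sqDist p q → h p < 0 := fun p hp => by
    have : exp (-α * sqDist p q) < exp (-α * ρ ^ 2) := exp_lt_exp.2 (by nlinarith)
    simp only [hh]; linarith
  obtain ⟨m, hm, hmS⟩ : ∃ m > 0, ∀ p, sqDist p z = (ρ / 2) ^ 2 → sqDist p q ≤ ρ ^ 2 →
      m ≤ w p.1 p.2 := by
    have hcomp : IsCompact ({p | sqDist p q ≤ ρ ^ 2} ∩ {p | sqDist p z = (ρ / 2) ^ 2}) :=
      (isCompact_sqDist_le q hρ.le).inter_right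
        (isClosed_eq (continuous_sqDist z) continuous_const)
    rcases Set.eq_empty_or_nonempty
      ({p | sqDist p q ≤ ρ ^ 2} ∩ {p | sqDist p z = (ρ / 2) ^ 2}) with he | hne
    · refine ⟨1, one_pos, fun p h1 h2 => ?_⟩
      exact absurd (he ▸ (⟨h2, h1⟩ : p ∈ {p | sqDist p q ≤ ρ ^ 2} ∩ {p | sqDist p z = (ρ / 2) ^ 2}))
        (Set.notMem_empty p)
    · obtain ⟨p₀, hp₀, hmin⟩ := hcomp.exists_isMinOn hne hwc.continuousOn
      refine ⟨w p₀.1 p₀.2, hpos p₀ hp₀.1 fun heq => ?_, fun p h1 h2 => hmin ⟨h2, h1⟩⟩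
      have := hp₀.2
      rw [heq, Set.mem_ofPred_eq] at this
      have h0 : sqDist z z = 0 := by simp [sqDist]
      nlinarith
  set η := m / 2
  have hη : 0 < η := by positivity
  obtain ⟨p, hp, hmin⟩ := (isCompact_sqDist_le z (show 0 ≤ ρ / 2 by positivity)).exists_isMinOn
    ⟨z, by simp [sqDist]; positivity⟩ (hwc.sub (hhc.const_mul η)).continuousOn
  have hhz : h z = 0 := by simp [hh, hz]
  have hple : w p.1 p.2 - η * h p ≤ 0 := by
    have := hmin (show z ∈ {p | sqDist p z ≤ (ρ / 2) ^ 2} by simp [sqDist]; positivity)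
    simpa [hhz, hwz] using this
  have hplt : sqDist p z < (ρ / 2) ^ 2 := by
    refine lt_of_le_of_ne hp fun heq => ?_
    rcases le_or_gt (sqDist p q) (ρ ^ 2) with h1 | h1
    · have e1 := hmS p heq h1
      have e2 := mul_le_mul_of_nonneg_left (hh1 p) hη.le
      simp only [η] at e2 hple
      linarith
    · nlinarith [hnn p hp, hhneg p h1]
  have hloc : ∀ᶠ p' in nhds p, w p.1 p.2 - η * h p ≤ w p'.1 p'.2 - η * h p' := by
    filter_upwards [(isOpen_lt (continuous_sqDist z) continuous_const).mem_nhds hplt] with p' hp'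
    exact hmin (le_of_lt hp')
  obtain ⟨x, y⟩ := p
  simp only at hple hloc
  have hp' : (x - z.1) ^ 2 + (y - z.2) ^ 2 ≤ (ρ / 2) ^ 2 := hp
  have hz' : (z.1 - q.1) ^ 2 + (z.2 - q.2) ^ 2 = ρ ^ 2 := hz
  have hlx : IsLocalMin (fun t => w t y - η * h (t, y)) x :=
    (show ContinuousAt (fun t : ℝ => (t, y)) x by fun_prop).eventually hloc
  have hly : IsLocalMin (fun t => w x t - η * h (x, t)) y :=
    (show ContinuousAt (fun t : ℝ => (x, t)) y by fun_prop).eventually hloc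
  set E : ℝ → ℝ → ℝ := fun x y => exp (-α * ((x - q.1) ^ 2 + (y - q.2) ^ 2)) with hE
  have hEx : ∀ t, HasDerivAt (fun t => E t y) (-2 * α * (t - q.1) * E t y) t := fun t =>
    (((((hasDerivAt_id t).sub_const q.1).pow 2).add_const
      ((y - q.2) ^ 2)).const_mul (-α)).exp.congr_deriv (by simp [hE]; ring)
  have hEy : ∀ t, HasDerivAt (fun t => E x t) (-2 * α * (t - q.2) * E x t) t := fun t =>
    (((((hasDerivAt_id t).sub_const q.2).pow 2).const_add
      ((x - q.1) ^ 2)).const_mul (-α)).exp.congr_deriv (by simp [hE]; ring)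
  have hd := hw.differentiable (by norm_num)
  have hdx := (contDiff_pdx hw (m := 1) (by norm_num)).differentiable (by norm_num)
  have hdy := (contDiff_pdy hw (m := 1) (by norm_num)).differentiable (by norm_num)
  have hGx : ∀ t, HasDerivAt (fun t => w t y - η * h (t, y))
      (pdx w t y - η * (-2 * α * (t - q.1) * E t y)) t := fun t =>
    (hasDerivAt_pdx hd t y).sub (((hEx t).sub_const _).const_mul η)
  have hGy : ∀ t, HasDerivAt (fun t => w x t - η * h (x, t))
      (pdy w x t - η * (-2 * α * (t - q.2) * E x t)) t := fun t =>
    (hasDerivAt_pdy hd x t).sub (((hEy t).sub_const _).const_mul η)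
  have hGxx : HasDerivAt (fun t => pdx w t y - η * (-2 * α * (t - q.1) * E t y))
      (pdx (pdx w) x y - η * ((4 * α ^ 2 * (x - q.1) ^ 2 - 2 * α) * E x y)) x :=
    ((hasDerivAt_pdx hdx x y).sub (((((hasDerivAt_id x).sub_const q.1).const_mul (-2 * α)).mul
      (hEx x)).const_mul η)).congr_deriv (by simp only [id]; ring)
  have hGyy : HasDerivAt (fun t => pdy w x t - η * (-2 * α * (t - q.2) * E x t))
      (pdy (pdy w) x y - η * ((4 * α ^ 2 * (y - q.2) ^ 2 - 2 * α) * E x y)) y :=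
    ((hasDerivAt_pdy hdy x y).sub (((((hasDerivAt_id y).sub_const q.2).const_mul (-2 * α)).mul
      (hEy y)).const_mul η)).congr_deriv (by simp only [id]; ring)
  have s1 := second_deriv_nonneg_of_isLocalMin hGx hGxx hlx
  have s2 := second_deriv_nonneg_of_isLocalMin hGy hGyy hly
  have s3 := hly.hasDerivAt_eq_zero (hGy y)
  have s4 := hL x y hp
  have hE0 : 0 < E x y := exp_pos _
  have s5 : w x y ≤ η * E x y := by
    have e1 : h (x, y) ≤ E x y := by
      have := exp_pos (-α * ρ ^ 2)
      simp only [hh, hE, sqDist]; linarith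
    nlinarith
  have s6 : ρ ^ 2 / 4 ≤ (x - q.1) ^ 2 + (y - q.2) ^ 2 := by
    linarith [sq_nonneg (z.1 - q.1 - 2 * (z.1 - x)), sq_nonneg (z.2 - q.2 - 2 * (z.2 - y))]
  have s7 : |y - q.2| ≤ 2 * ρ := by
    refine abs_le_of_sq_le_sq ?_ (by positivity)
    linarith [sq_nonneg (z.2 - q.2 - (y - z.2)), sq_nonneg (x - z.1), sq_nonneg (z.1 - q.1),
      sq_nonneg ρ]
  have s8 : M < 4 * α ^ 2 * ((x - q.1) ^ 2 + (y - q.2) ^ 2) - 4 * α - c * (2 * α * (y - q.2)) := by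
    have e1 : 4 * α ^ 2 * (ρ ^ 2 / 4) ≤ 4 * α ^ 2 * ((x - q.1) ^ 2 + (y - q.2) ^ 2) := by gcongr
    have e2 : c * (2 * α * (y - q.2)) ≤ c * (2 * α * (2 * ρ)) := by
      gcongr
      exact (le_abs_self _).trans s7
    have e3 : α * (4 + 4 * c * ρ + M) < α * (α * ρ ^ 2) := by gcongr
    have e4 : M ≤ α * M := le_mul_of_one_le_left hM hα1
    linarith
  have s9 := mul_lt_mul_of_pos_right s8 (mul_pos hη hE0)
  have s10 := mul_le_mul_of_nonneg_left s5 hM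
  have s11 : c * pdy w x y = c * (η * (-2 * α * (y - q.2) * E x y)) := by
    rw [sub_eq_zero.1 s3]
  linarith

/-- The strong maximum principle on a half-plane. -/
lemma eq_zero_of_nonneg_of_eq_zero (hw : ContDiff ℝ 2 fun p : ℝ × ℝ => w p.1 p.2) (hc : 0 ≤ c)
    (hM : 0 ≤ M) (hnn : ∀ x y, a < x → 0 ≤ w x y)
    (hL : ∀ x y, a < x → pdx (pdx w) x y + pdy (pdy w) x y + c * pdy w x y ≤ M * w x y)
    {x₀ y₀ : ℝ} (hx₀ : a < x₀) (h0 : w x₀ y₀ = 0) {x y : ℝ} (hx : a < x) : w x y = 0 := by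
  have hwc : Continuous fun p : ℝ × ℝ => w p.1 p.2 := hw.continuous
  have hopen : IsOpen {p : ℝ × ℝ | a < p.1 ∧ w p.1 p.2 = 0} := by
    rw [Metric.isOpen_iff]
    rintro p₀ ⟨hp₀, hwp₀⟩
    set r := (p₀.1 - a) / 4 with hr
    have hr0 : 0 < r := by rw [hr]; linarith
    refine ⟨r / 2, by positivity, fun q hq => ?_⟩
    rw [mem_ball, Prod.dist_eq, max_lt_iff, Real.dist_eq, Real.dist_eq, abs_lt, abs_lt] at hq
    have hqp : sqDist p₀ q ≤ r ^ 2 := by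
      unfold sqDist; nlinarith [hq.1.1, hq.1.2, hq.2.1, hq.2.2]
    refine ⟨by linarith [hq.1.1], ?_⟩
    by_contra hne
    have hcomp : IsCompact ({p | sqDist p q ≤ r ^ 2} ∩ {p : ℝ × ℝ | w p.1 p.2 = 0}) :=
      (isCompact_sqDist_le q hr0.le).inter_right (isClosed_eq hwc continuous_const)
    obtain ⟨z, ⟨hzr, hwz⟩, hmin⟩ := hcomp.exists_isMinOn ⟨p₀, hqp, hwp₀⟩
      (continuous_sqDist q).continuousOn
    simp only [Set.mem_ofPred_eq] at hzr hwz
    have hzq : z ≠ q := fun h => hne (h ▸ hwz)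
    set ρ := √(sqDist z q) / 2 with hρ
    have hsq : √(sqDist z q) ^ 2 = sqDist z q := Real.sq_sqrt (sqDist_nonneg z q)
    have hρ0 : 0 < ρ := by have := Real.sqrt_pos.2 (sqDist_pos hzq); positivity
    have hρr : 2 * ρ ≤ r := by
      rw [hρ, mul_div_cancel₀ _ two_ne_zero]; exact Real.sqrt_le_iff.2 ⟨hr0.le, hzr⟩
    have hρz : sqDist z q = (2 * ρ) ^ 2 := by rw [hρ, mul_div_cancel₀ _ two_ne_zero, hsq]
    have hz1 := abs_le.1 (abs_fst_sub_le_of_sqDist_le hr0.le hzr)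
    have hnear : ∀ p : ℝ × ℝ, sqDist p z ≤ (ρ / 2) ^ 2 → a < p.1 := fun p hp => by
      have := abs_le.1 (abs_fst_sub_le_of_sqDist_le (by positivity) hp)
      linarith [hq.1.1, hz1.1]
    refine ne_zero_of_pos_on_disc hw hc hM (q := ((q.1 + z.1) / 2, (q.2 + z.2) / 2)) hρ0 ?_ ?_
      (fun p hp => hnn _ _ (hnear p hp)) (fun x y hp => hL x y (hnear (x, y) hp)) hwz
    · simp only [sqDist] at hρz ⊢
      nlinarith
    · intro p hp hpz
      have e1 := sqDist_pos hpz
      have e2 : sqDist p q < sqDist z q := by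
        simp only [sqDist] at hp e1 hρz ⊢
        nlinarith
      have e3 := abs_le.1 (abs_fst_sub_le_of_sqDist_le hr0.le (e2.le.trans hzr))
      refine lt_of_le_of_ne (hnn _ _ (by linarith [hq.1.1])) fun h => ?_
      exact absurd (hmin ⟨e2.le.trans hzr, h.symm⟩) (not_le.2 e2)
  have hpre : IsPreconnected {p : ℝ × ℝ | a < p.1} :=
    ((convex_halfSpace_gt (𝕜 := ℝ) (f := fun p : ℝ × ℝ => p.1)
      ⟨fun _ _ => rfl, fun _ _ => rfl⟩ a)).isPreconnected
  refine (hpre.subset_of_closure_inter_subset hopen ⟨(x₀, y₀), hx₀, hx₀, h0⟩ ?_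
    (show (x, y) ∈ {p : ℝ × ℝ | a < p.1} from hx)).2
  rintro p ⟨hp, hpa⟩
  refine ⟨hpa, ?_⟩
  have : closure {p : ℝ × ℝ | a < p.1 ∧ w p.1 p.2 = 0} ⊆ {p | w p.1 p.2 = 0} :=
    closure_minimal (fun p hp => hp.2) (isClosed_eq hwc continuous_const)
  exact this hp

end StrongMaximumPrinciple

/-! ### The sliding comparison function -/

section Sliding

variable {F : ℝ → ℝ} {c : ℝ} {u : ℝ → ℝ → ℝ}

/-- The vertical perturbation `ε e^{κ (y - Y)}`. -/
noncomputable def slideHeight (κ ε Y y : ℝ) : ℝ := ε * exp (κ * (y - Y))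

/-- The horizontal shift compensating the vertical perturbation. -/
noncomputable def slideShift (b κ ε Y y : ℝ) : ℝ := b / κ * (ε - slideHeight κ ε Y y)

/-- The perturbed reflection of `u` across the line `x = l`. -/
noncomputable def slideReflection (u : ℝ → ℝ → ℝ) (l b κ ε Y x y : ℝ) : ℝ :=
  u (2 * l + slideShift b κ ε Y y - x) y + slideHeight κ ε Y y

lemma slideHeight_pos {ε : ℝ} (κ Y y : ℝ) (hε : 0 < ε) : 0 < slideHeight κ ε Y y :=
  mul_pos hε (exp_pos _)

lemma slideHeight_le {κ ε Y y : ℝ} (hκ : 0 ≤ κ) (hε : 0 ≤ ε) (hy : y ≤ Y) :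
    slideHeight κ ε Y y ≤ ε :=
  mul_le_of_le_one_right hε (exp_le_one_iff.2 (mul_nonpos_of_nonneg_of_nonpos hκ (by linarith)))

lemma slideHeight_self (κ ε Y : ℝ) : slideHeight κ ε Y Y = ε := by simp [slideHeight]

lemma slideShift_self (b κ ε Y : ℝ) : slideShift b κ ε Y Y = 0 := by
  simp [slideShift, slideHeight_self]

lemma slideShift_nonneg {b κ ε Y y : ℝ} (hb : 0 ≤ b) (hκ : 0 ≤ κ) (hε : 0 ≤ ε) (hy : y ≤ Y) :
    0 ≤ slideShift b κ ε Y y :=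
  mul_nonneg (div_nonneg hb hκ) (sub_nonneg.2 (slideHeight_le hκ hε hy))

lemma slideShift_le {b κ ε : ℝ} (Y y : ℝ) (hb : 0 ≤ b) (hκ : 0 ≤ κ) (hε : 0 < ε) :
    slideShift b κ ε Y y ≤ b / κ * ε :=
  mul_le_mul_of_nonneg_left (by linarith [slideHeight_pos κ Y y hε]) (div_nonneg hb hκ)

lemma continuous_slideHeight (κ ε Y : ℝ) : Continuous (slideHeight κ ε Y) := by
  unfold slideHeight; fun_prop

lemma continuous_slideShift (b κ ε Y : ℝ) : Continuous (slideShift b κ ε Y) :=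
  continuous_const.mul (continuous_const.sub (continuous_slideHeight κ ε Y))

lemma hasDerivAt_slideHeight (κ ε Y y : ℝ) :
    HasDerivAt (slideHeight κ ε Y) (κ * slideHeight κ ε Y y) y :=
  (((((hasDerivAt_id y).sub_const Y).const_mul κ).exp).const_mul ε).congr_deriv
    (by simp [slideHeight]; ring)

lemma hasDerivAt_slideShift {κ : ℝ} (b ε Y y : ℝ) (hκ : κ ≠ 0) :
    HasDerivAt (slideShift b κ ε Y) (-b * slideHeight κ ε Y y) y :=
  (((hasDerivAt_slideHeight κ ε Y y).const_sub ε).const_mul (b / κ)).congr_deriv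
    (by field_simp)

lemma hasDerivAt_along_graph (h : Differentiable ℝ fun p : ℝ × ℝ => u p.1 p.2) {γ : ℝ → ℝ}
    {γ' t : ℝ} (hγ : HasDerivAt γ γ' t) :
    HasDerivAt (fun t => u (γ t) t) (pdx u (γ t) t * γ' + pdy u (γ t) t) t := by
  have hp : HasDerivAt (fun t => (γ t, t)) (γ', 1) t := hγ.prodMk (hasDerivAt_id t)
  refine (HasFDerivAt.comp_hasDerivAt (l := fun p : ℝ × ℝ => u p.1 p.2)
    (f := fun t => (γ t, t)) t (h (γ t, t)).hasFDerivAt hp).congr_deriv ?_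
  rw [pdx_eq_fderiv h, pdy_eq_fderiv h, mul_comm, ← smul_eq_mul, ← map_smul, ← map_add]
  simp

namespace IsTravelingWave

/-- The differential inequality at a point where the perturbed reflection touches a vertical
translate of the wave from above. -/
lemma deriv_le_of_isLocalMin (hu : IsTravelingWave F c u) {l b κ ε Y s x y : ℝ} (hκ : κ ≠ 0)
    (hx : IsLocalMin (fun t => slideReflection u l b κ ε Y t y - u t (y - s)) x)
    (hy : IsLocalMin (fun t => slideReflection u l b κ ε Y x t - u x (t - s)) y) :
    deriv F (u x (y - s)) ≤ deriv F (u (2 * l + slideShift b κ ε Y y - x) y) +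
      slideHeight κ ε Y y *
        (b ^ 2 * slideHeight κ ε Y y * pdx (pdx u) (2 * l + slideShift b κ ε Y y - x) y -
          2 * b * pdx (pdy u) (2 * l + slideShift b κ ε Y y - x) y -
          b * (κ + c) * pdx u (2 * l + slideShift b κ ε Y y - x) y + κ * (κ + c)) := by
  set γ : ℝ → ℝ := fun t => 2 * l + slideShift b κ ε Y t - x with hγ
  set q := slideHeight κ ε Y with hq
  have hγd : ∀ t, HasDerivAt γ (-b * q t) t := fun t =>
    ((hasDerivAt_slideShift b ε Y t hκ).const_add (2 * l)).sub_const x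
  have hqd : ∀ t, HasDerivAt q (κ * q t) t := hasDerivAt_slideHeight κ ε Y
  have hrefl : ∀ t, HasDerivAt (fun t => 2 * l + slideShift b κ ε Y y - t) (-1) t := fun t =>
    (hasDerivAt_id t).const_sub _
  have hGx : ∀ t, HasDerivAt (fun t => slideReflection u l b κ ε Y t y - u t (y - s))
      (-pdx u (2 * l + slideShift b κ ε Y y - t) y - pdx u t (y - s)) t := fun t =>
    ((((hu.hasDerivAt_fst (2 * l + slideShift b κ ε Y y - t) y).comp t (hrefl t)).add_const
      (q y)).sub (hu.hasDerivAt_fst t (y - s))).congr_deriv (by ring)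
  have hGxx : HasDerivAt (fun t => -pdx u (2 * l + slideShift b κ ε Y y - t) y - pdx u t (y - s))
      (pdx (pdx u) (γ y) y - pdx (pdx u) x (y - s)) x :=
    ((((hu.hasDerivAt_pdx_fst (2 * l + slideShift b κ ε Y y - x) y).comp x (hrefl x)).neg).sub
      (hu.hasDerivAt_pdx_fst x (y - s))).congr_deriv (by simp only [hγ]; ring)
  have hsub : ∀ t, HasDerivAt (fun t => t - s) 1 t := fun t => (hasDerivAt_id t).sub_const s
  have hGy : ∀ t, HasDerivAt (fun t => slideReflection u l b κ ε Y x t - u x (t - s))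
      (pdx u (γ t) t * (-b * q t) + pdy u (γ t) t + κ * q t - pdy u x (t - s)) t := fun t =>
    (((hasDerivAt_along_graph hu.differentiable (hγd t)).add (hqd t)).sub
      ((hu.hasDerivAt_snd x (t - s)).comp t (hsub t))).congr_deriv (by ring)
  have hdx := hu.contDiff_pdx.differentiable (by norm_num)
  have hdy := hu.contDiff_pdy.differentiable (by norm_num)
  have hGyy : HasDerivAt
      (fun t => pdx u (γ t) t * (-b * q t) + pdy u (γ t) t + κ * q t - pdy u x (t - s))
      ((pdx (pdx u) (γ y) y * (-b * q y) + pdx (pdy u) (γ y) y) * (-b * q y) +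
        pdx u (γ y) y * (-b * (κ * q y)) + (pdx (pdy u) (γ y) y * (-b * q y) +
          pdy (pdy u) (γ y) y) + κ * (κ * q y) - pdy (pdy u) x (y - s)) y := by
    have h1 := hasDerivAt_along_graph hdx (hγd y)
    rw [hu.pdy_pdx] at h1
    exact ((((h1.mul ((hqd y).const_mul (-b))).add
      (hasDerivAt_along_graph hdy (hγd y))).add ((hqd y).const_mul κ)).sub
        ((hu.hasDerivAt_pdy_snd x (y - s)).comp y (hsub y))).congr_deriv (by ring)
  have s1 := second_deriv_nonneg_of_isLocalMin hGx hGxx hx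
  have s2 := second_deriv_nonneg_of_isLocalMin hGy hGyy hy
  have s3 := hy.hasDerivAt_eq_zero (hGy y)
  have s4 := hu.equation (γ y) y
  have s5 := hu.equation x (y - s)
  change deriv F (u x (y - s)) ≤ deriv F (u (γ y) y) + q y *
    (b ^ 2 * q y * pdx (pdx u) (γ y) y - 2 * b * pdx (pdy u) (γ y) y -
      b * (κ + c) * pdx u (γ y) y + κ * (κ + c))
  linear_combination s1 + s2 - c * s3 + s4 - s5

end IsTravelingWave

/-- Constants making the perturbed reflection a strict supersolution away from a compact set. -/
lemma BalancedDoubleWell.exists_slide_constants (hF : BalancedDoubleWell F) (hc : 0 < c) {K : ℝ}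
    (hK : 0 < K) : ∃ b > 0, ∃ κ > 0, ∃ θ > 0, ∃ ε₀ > 0, ∃ δ > 0, b / κ * ε₀ ≤ 1 ∧
      ∀ q A B X p z : ℝ, 0 < q → q ≤ ε₀ → |A| ≤ K → |B| ≤ θ → wellSpeed F p - θ ≤ X → -1 ≤ p →
        z ≤ 1 → p + q ≤ z → (p + q = z ∨ z ≤ -1 + δ) →
          deriv F p + q * (b ^ 2 * q * A - 2 * b * B - b * (κ + c) * X + κ * (κ + c)) <
            deriv F z := by
  obtain ⟨μ, hμ, δ, hδ, hδ1, hlow, hup⟩ := hF.exists_well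
  obtain ⟨M, hM, hbd⟩ := hF.exists_bound
  obtain ⟨m, hm, hmid⟩ := hF.exists_le_wellSpeed (δ := δ / 2) (by positivity)
  set b := (M + μ) / (c * m) with hb
  have hb0 : 0 < b := by positivity
  have hbm : b * c * m = M + μ := by rw [hb]; field_simp
  set κ := min 1 (μ / (8 * (1 + c))) with hκ
  have hκ0 : 0 < κ := by positivity
  have hκ1 : κ ≤ 1 := min_le_left _ _
  have hκμ : κ * (1 + c) ≤ μ / 8 := by
    have : κ ≤ μ / (8 * (1 + c)) := min_le_right _ _
    rw [le_div_iff₀ (by positivity)] at this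
    linarith
  set θ := μ / (8 * b * (3 + c)) with hθ
  have hθ0 : 0 < θ := by positivity
  have hθμ : b * θ * (3 + c) = μ / 8 := by rw [hθ]; field_simp
  set ε₀ := min (min (δ / 2) (μ / (8 * b ^ 2 * K))) (κ / b) with hε₀
  have hε₀0 : 0 < ε₀ := by positivity
  have hε₀δ : ε₀ ≤ δ / 2 := (min_le_left _ _).trans (min_le_left _ _)
  have hε₀μ : b ^ 2 * ε₀ * K ≤ μ / 8 := by
    have : ε₀ ≤ μ / (8 * b ^ 2 * K) := (min_le_left _ _).trans (min_le_right _ _)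
    rw [le_div_iff₀ (by positivity)] at this
    linarith
  refine ⟨b, hb0, κ, hκ0, θ, hθ0, ε₀, hε₀0, δ, hδ, ?_, ?_⟩
  · have : ε₀ ≤ κ / b := min_le_right _ _
    calc b / κ * ε₀ ≤ b / κ * (κ / b) := by gcongr
      _ = 1 := by field_simp
  intro q A B X p z hq hqε hA hB hX hp hz hpz hcase
  have e1 : b ^ 2 * q * A ≤ μ / 8 := by
    have hAK : A ≤ K := (le_abs_self A).trans hA
    calc b ^ 2 * q * A ≤ b ^ 2 * q * K := by gcongr
      _ ≤ b ^ 2 * ε₀ * K := by gcongr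
      _ ≤ μ / 8 := hε₀μ
  have e2 : -(2 * b * B) ≤ 2 * b * θ := by
    have := mul_le_mul_of_nonneg_left (abs_le.1 hB).1 (show 0 ≤ 2 * b by positivity)
    linarith
  have e3 : b * (κ + c) * (wellSpeed F p - θ) ≤ b * (κ + c) * X := by gcongr
  have e4 : b * c * wellSpeed F p ≤ b * (κ + c) * wellSpeed F p := by
    have := wellSpeed_nonneg F p
    gcongr
    linarith
  have e5 : b * (κ + c) * θ ≤ b * (1 + c) * θ := by gcongr
  have e6 : κ * (κ + c) ≤ κ * (1 + c) := by gcongr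
  have e7 : b ^ 2 * q * A - 2 * b * B - b * (κ + c) * X + κ * (κ + c) ≤
      3 * μ / 8 - b * c * wellSpeed F p := by nlinarith
  have e8 := mul_le_mul_of_nonneg_left e7 hq.le
  have hphi : 0 ≤ q * (b * c * wellSpeed F p) :=
    mul_nonneg hq.le (mul_nonneg (by positivity) (wellSpeed_nonneg F p))
  have hqμ : 0 < q * μ := mul_pos hq hμ
  by_cases hlowcase : z ≤ -1 + δ
  · have f1 := hlow p (p + q) hp (by linarith) (by linarith)
    have f2 := hlow (p + q) z (by linarith) hpz hlowcase
    have f3 : 0 ≤ μ * (z - (p + q)) := mul_nonneg hμ.le (by linarith)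
    linarith
  have heq : p + q = z := hcase.resolve_right hlowcase
  push Not at hlowcase
  by_cases hupcase : 1 - δ ≤ p
  · have f1 := hup p z hupcase (by linarith) hz
    have f2 : μ * (z - p) = q * μ := by rw [← heq]; ring
    linarith
  push Not at hupcase
  have f1 := hmid p (by linarith) (by linarith)
  have f2 := hF.abs_deriv_sub_le (fun s hs => (hbd s hs).2.2)
    (abs_le.2 ⟨hp, by linarith⟩) (abs_le.2 ⟨by linarith, hz⟩) (s := p) (t := z)
  rw [show z - p = q by linarith, abs_of_pos hq] at f2
  have f3 := (abs_le.1 f2).1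
  have f4 : q * (b * c * m) ≤ q * (b * c * wellSpeed F p) := by gcongr
  rw [hbm] at f4
  linarith

end Sliding

/-! ### Touching the perturbed reflection from below -/

section Touching

variable {F : ℝ → ℝ} {c : ℝ} {u : ℝ → ℝ → ℝ}

/-- The region to the right of the perturbed axis and below height `Y`. -/
def slideDomain (l b κ ε Y : ℝ) : Set (ℝ × ℝ) :=
  {p | l + slideShift b κ ε Y p.2 / 2 ≤ p.1 ∧ p.2 ≤ Y}

/-- The difference of the perturbed reflection and the vertical translate by `s`. -/
noncomputable def slideGap (u : ℝ → ℝ → ℝ) (l b κ ε Y s : ℝ) (p : ℝ × ℝ) : ℝ :=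
  slideReflection u l b κ ε Y p.1 p.2 - u p.1 (p.2 - s)

lemma isClosed_slideDomain (l b κ ε Y : ℝ) : IsClosed (slideDomain l b κ ε Y) := by
  have h := continuous_slideShift b κ ε Y
  exact (isClosed_le (by fun_prop) continuous_fst).inter
    (isClosed_le continuous_snd continuous_const)

namespace IsTravelingWave

lemma continuous_comp {α : Type*} [TopologicalSpace α] (hu : IsTravelingWave F c u)
    {f g : α → ℝ} (hf : Continuous f) (hg : Continuous g) : Continuous fun a => u (f a) (g a) :=
  hu.contDiff.continuous.comp (hf.prodMk hg)

lemma continuous_slideGap (hu : IsTravelingWave F c u) (l b κ ε Y : ℝ) :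
    Continuous fun r : (ℝ × ℝ) × ℝ => slideGap u l b κ ε Y r.2 r.1 := by
  have h1 := continuous_slideShift b κ ε Y
  have h2 := continuous_slideHeight κ ε Y
  unfold slideGap slideReflection
  exact ((hu.continuous_comp (by fun_prop) (by fun_prop)).add (by fun_prop)).sub
    (hu.continuous_comp (by fun_prop) (by fun_prop))

lemma neg_one_le (hu : IsTravelingWave F c u) (x y : ℝ) : -1 ≤ u x y := (hu.neg_one_lt x y).le

lemma lt_of_slideGap_nonpos (hu : IsTravelingWave F c u) {l b κ ε Y s : ℝ} {p : ℝ × ℝ}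
    (hε : 0 < ε) (hs : 0 < s) (hY : ∀ x, l ≤ x → u x Y ≤ u (2 * l - x) Y + ε)
    (hp : p ∈ slideDomain l b κ ε Y) (hgap : slideGap u l b κ ε Y s p ≤ 0) :
    l + slideShift b κ ε Y p.2 / 2 < p.1 ∧ p.2 < Y := by
  obtain ⟨x, y⟩ := p
  obtain ⟨hpx, hpy⟩ := hp
  simp only [slideGap, slideReflection] at hpx hpy hgap ⊢
  constructor
  · refine lt_of_le_of_ne hpx fun h => ?_
    have h1 : 2 * l + slideShift b κ ε Y y - x = x := by linarith
    rw [h1] at hgap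
    linarith [hu.strictMono x (show y - s < y by linarith), slideHeight_pos κ Y y hε]
  · refine lt_of_le_of_ne hpy fun h => ?_
    subst h
    rw [slideShift_self] at hgap hpx
    rw [slideHeight_self, add_zero] at hgap
    linarith [hu.strictMono x (show y - s < y by linarith), hY x (by linarith)]

lemma exists_isMinOn_slideGap (hF : BalancedDoubleWell F) (hc : 0 < c)
    (hu : IsTravelingWave F c u) {l b κ ε Y s : ℝ} {p₀ : ℝ × ℝ} (hε : 0 < ε) (hs : 0 ≤ s)
    (hp₀ : p₀ ∈ slideDomain l b κ ε Y) (hgap : slideGap u l b κ ε Y s p₀ < 0) :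
    ∃ p ∈ slideDomain l b κ ε Y,
      IsMinOn (slideGap u l b κ ε Y s) (slideDomain l b κ ε Y) p := by
  have hcont : Continuous (slideGap u l b κ ε Y s) :=
    Continuous.comp (f := fun p : ℝ × ℝ => (p, s)) (hu.continuous_slideGap l b κ ε Y)
      (by fun_prop)
  refine hcont.continuousOn.exists_isMinOn' (isClosed_slideDomain l b κ ε Y) hp₀ ?_
  obtain ⟨R, hR⟩ := hu.exists_le_of_le hF hc Y (neg_pos.2 hgap)
  rw [eventually_inf_principal]
  filter_upwards [(tendsto_norm_cocompact_atTop (E := ℝ × ℝ)).eventually_ge_atTop (R + s)]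
    with p hp hpD
  have h1 : R ≤ ‖(p.1, p.2 - s)‖ := by
    have h2 : ‖p‖ ≤ ‖(p.1, p.2 - s)‖ + ‖((0 : ℝ), s)‖ := by
      refine le_of_eq_of_le ?_ (norm_add_le _ _)
      simp
    have h3 : ‖((0 : ℝ), s)‖ = s := by simp [Prod.norm_def, abs_of_nonneg hs, hs]
    linarith
  have h4 := hR p.1 (p.2 - s) (by linarith [hpD.2]) h1
  have h5 : slideGap u l b κ ε Y s p = u (2 * l + slideShift b κ ε Y p.2 - p.1) p.2 +
    slideHeight κ ε Y p.2 - u p.1 (p.2 - s) := rfl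
  linarith [hu.neg_one_le (2 * l + slideShift b κ ε Y p.2 - p.1) p.2,
    slideHeight_pos κ Y p.2 hε]

lemma isLocalMin_of_isMinOn_slideGap {l b κ ε Y s x y : ℝ}
    (hmin : IsMinOn (slideGap u l b κ ε Y s) (slideDomain l b κ ε Y) (x, y))
    (hx : l + slideShift b κ ε Y y / 2 < x) (hy : y < Y) :
    IsLocalMin (fun t => slideReflection u l b κ ε Y t y - u t (y - s)) x ∧
      IsLocalMin (fun t => slideReflection u l b κ ε Y x t - u x (t - s)) y := by
  constructor
  · filter_upwards [lt_mem_nhds hx] with t ht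
    exact isMinOn_iff.1 hmin (t, y) ⟨ht.le, hy.le⟩
  · have hcont : Continuous fun t => l + slideShift b κ ε Y t / 2 := by
      have h := continuous_slideShift b κ ε Y
      fun_prop
    filter_upwards [hcont.continuousAt.eventually_lt_const hx, gt_mem_nhds hy] with t ht htY
    exact isMinOn_iff.1 hmin (x, t) ⟨ht.le, htY.le⟩

/-- Minimum points of the gap stay in a compact set, unless the translated wave is away from the
lower well there. -/
lemma exists_slide_alternative (hF : BalancedDoubleWell F) (hc : 0 < c)
    (hu : IsTravelingWave F c u) (l : ℝ) : ∃ b > 0, ∃ κ > 0, ∃ ε₀ > 0, ∃ δ > 0, ∃ R : ℝ,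
      ∀ ε Y s : ℝ, ∀ p : ℝ × ℝ, 0 < ε → ε ≤ ε₀ → 0 < s →
        (∀ x, l ≤ x → u x Y ≤ u (2 * l - x) Y + ε) → p ∈ slideDomain l b κ ε Y →
        IsMinOn (slideGap u l b κ ε Y s) (slideDomain l b κ ε Y) p →
        slideGap u l b κ ε Y s p ≤ 0 →
        ‖(2 * l + slideShift b κ ε Y p.2 - p.1, p.2)‖ ≤ R ∨
          slideGap u l b κ ε Y s p ≠ 0 ∧ -1 + δ ≤ u p.1 (p.2 - s) := by
  obtain ⟨K, hK, hbd⟩ := hu.exists_bound hF hc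
  obtain ⟨b, hb, κ, hκ, θ, hθ, ε₀, hε₀, δ, hδ, hbκ, H⟩ := hF.exists_slide_constants hc hK
  obtain ⟨R₁, hR₁⟩ := hu.exists_pdy_le hF hc hθ
  obtain ⟨R₂, hR₂⟩ := hu.exists_profile_le hF hc (l + 1) hθ
  refine ⟨b, hb, κ, hκ, ε₀, hε₀, δ, hδ, max R₁ R₂, ?_⟩
  rintro ε Y s ⟨x, y⟩ hε hεε₀ hs hY hp hmin hgap
  obtain ⟨hx, hy⟩ := hu.lt_of_slideGap_nonpos hε hs hY hp hgap
  obtain ⟨hlx, hly⟩ := isLocalMin_of_isMinOn_slideGap hmin hx hy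
  simp only at hx hy ⊢
  by_contra! hcon
  obtain ⟨hR, halt⟩ := hcon
  have hτ : slideShift b κ ε Y y ≤ 1 := (slideShift_le Y y hb.le hκ.le hε).trans
    ((mul_le_mul_of_nonneg_left hεε₀ (by positivity)).trans hbκ)
  have hle := hu.deriv_le_of_isLocalMin hκ.ne' hlx hly
  have hgap' : u (2 * l + slideShift b κ ε Y y - x) y + slideHeight κ ε Y y ≤ u x (y - s) :=
    sub_nonpos.1 hgap
  refine absurd hle (not_le.2 (H _ _ _ _ _ _ (slideHeight_pos κ Y y hε)
    ((slideHeight_le hκ.le hε.le hy.le).trans hεε₀) (hbd _ _).2.2.1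
    (hR₁ _ _ ((le_max_left _ _).trans hR.le)).2.1
    (hR₂ _ _ (by linarith) ((le_max_right _ _).trans hR.le)) (hu.neg_one_le _ _)
    (hu.lt_one _ _).le hgap' ?_))
  by_cases h0 : slideGap u l b κ ε Y s (x, y) = 0
  · exact Or.inl (sub_eq_zero.1 h0)
  · exact Or.inr (halt h0).le

lemma exists_le_of_norm_le (hu : IsTravelingWave F c u) (R : ℝ) :
    ∃ m > 0, ∀ x y, ‖(x, y)‖ ≤ R → -1 + m ≤ u x y := by
  by_cases hne : (closedBall (0 : ℝ × ℝ) R).Nonempty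
  · obtain ⟨p, -, hp⟩ := (isCompact_closedBall (0 : ℝ × ℝ) R).exists_isMinOn hne
      hu.contDiff.continuous.continuousOn
    refine ⟨u p.1 p.2 + 1, by linarith [hu.neg_one_lt p.1 p.2], fun x y hxy => ?_⟩
    have := isMinOn_iff.1 hp (x, y) (mem_closedBall_zero_iff.2 hxy)
    simp only at this
    linarith
  · exact ⟨1, one_pos, fun x y hxy => absurd ⟨(x, y), mem_closedBall_zero_iff.2 hxy⟩ hne⟩

/-- If a vertical translate of the wave crosses the perturbed reflection, then a further
translate touches it from below, at a point whose reflection lies in a fixed compact set. -/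
lemma exists_touching (hF : BalancedDoubleWell F) (hc : 0 < c)
    (hu : IsTravelingWave F c u) (l : ℝ) : ∃ b > 0, ∃ κ > 0, ∃ ε₀ > 0, ∃ R : ℝ,
      ∀ ε Y s₀ : ℝ, ∀ p₀ ∈ slideDomain l b κ ε Y, 0 < ε → ε ≤ ε₀ → 0 < s₀ →
        (∀ x, l ≤ x → u x Y ≤ u (2 * l - x) Y + ε) → slideGap u l b κ ε Y s₀ p₀ < 0 →
        ∃ s, s₀ ≤ s ∧ ∃ p ∈ slideDomain l b κ ε Y,
          ‖(2 * l + slideShift b κ ε Y p.2 - p.1, p.2)‖ ≤ R ∧ slideGap u l b κ ε Y s p = 0 ∧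
            ∀ p' ∈ slideDomain l b κ ε Y, 0 ≤ slideGap u l b κ ε Y s p' := by
  obtain ⟨b, hb, κ, hκ, ε₀, hε₀, δ, hδ, R, H⟩ := hu.exists_slide_alternative hF hc l
  refine ⟨b, hb, κ, hκ, ε₀, hε₀, R, ?_⟩
  intro ε Y s₀ p₀ hp₀ hε hεε₀ hs₀ hY hgap₀
  have hcont := hu.continuous_slideGap l b κ ε Y
  have hτ := continuous_slideShift b κ ε Y
  have hξ : Continuous fun p : ℝ × ℝ => (2 * l + slideShift b κ ε Y p.2 - p.1, p.2) := by
    fun_prop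
  set C : Set ((ℝ × ℝ) × ℝ) := {r | r.1 ∈ slideDomain l b κ ε Y ∧ s₀ ≤ r.2 ∧
    slideGap u l b κ ε Y r.2 r.1 ≤ 0 ∧
      (‖(2 * l + slideShift b κ ε Y r.1.2 - r.1.1, r.1.2)‖ ≤ R ∨
        -1 + δ ≤ u r.1.1 (r.1.2 - r.2))} with hC
  have hclosed : IsClosed C := by
    refine ((isClosed_slideDomain l b κ ε Y).preimage continuous_fst).inter
      ((isClosed_le continuous_const continuous_snd).inter
        ((isClosed_le hcont continuous_const).inter (IsClosed.union ?_ ?_)))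
    · exact isClosed_le (hξ.comp continuous_fst).norm continuous_const
    · exact isClosed_le continuous_const (hu.continuous_comp (by fun_prop) (by fun_prop))
  have hmem : ∀ s p, s₀ ≤ s → p ∈ slideDomain l b κ ε Y → slideGap u l b κ ε Y s p < 0 →
      ∃ p', (p', s) ∈ C := by
    intro s p hs hp hneg
    obtain ⟨p', hp', hmin⟩ := hu.exists_isMinOn_slideGap hF hc hε (hs₀.le.trans hs) hp hneg
    have hle : slideGap u l b κ ε Y s p' ≤ 0 := (isMinOn_iff.1 hmin p hp).trans hneg.le
    exact ⟨p', hp', hs, hle,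
      (H ε Y s p' hε hεε₀ (hs₀.trans_le hs) hY hp' hmin hle).imp id fun h => h.2⟩
  obtain ⟨m, hm, hmle⟩ := hu.exists_le_of_norm_le R
  obtain ⟨R₁, hR₁⟩ := hu.exists_le_of_le hF hc Y (half_pos (lt_min hm hδ))
  have hbounded : Bornology.IsBounded C := by
    refine ((isBounded_Icc (-R₁) R₁).prod (isBounded_Icc (s₀ - R₁) Y)).prod
      (isBounded_Icc s₀ (Y + R₁)) |>.subset ?_
    rintro ⟨⟨x, y⟩, s⟩ ⟨hD, hs, hle, halt⟩
    simp only at hs hle halt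
    have hyY : y ≤ Y := hD.2
    have hz : -1 + min m δ ≤ u x (y - s) := by
      rcases halt with h | h
      · have h1 := hmle _ _ h
        have h2 : u (2 * l + slideShift b κ ε Y y - x) y + slideHeight κ ε Y y ≤ u x (y - s) :=
          sub_nonpos.1 hle
        linarith [min_le_left m δ, slideHeight_pos κ Y y hε]
      · linarith [min_le_right m δ]
    have hnorm : ‖(x, y - s)‖ < R₁ := by
      by_contra! h
      linarith [hR₁ x (y - s) (by linarith) h, lt_min hm hδ]
    rw [Prod.norm_def, max_lt_iff, Real.norm_eq_abs, Real.norm_eq_abs, abs_lt, abs_lt] at hnorm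
    obtain ⟨⟨h1, h2⟩, h3, h4⟩ := hnorm
    simp only at h1 h2 h3 h4
    exact ⟨⟨⟨by linarith, by linarith⟩, by constructor <;> simp only <;> linarith⟩,
      by constructor <;> simp only <;> linarith⟩
  have hcompact : IsCompact C := Metric.isCompact_of_isClosed_isBounded hclosed hbounded
  obtain ⟨p₁, hp₁⟩ := hmem s₀ p₀ le_rfl hp₀ hgap₀
  obtain ⟨⟨p, s⟩, ⟨hpD, hs, hple, -⟩, hmax⟩ :=
    hcompact.exists_isMaxOn ⟨_, hp₁⟩ continuous_snd.continuousOn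
  simp only at hs hple hpD
  have hnn : ∀ p' ∈ slideDomain l b κ ε Y, 0 ≤ slideGap u l b κ ε Y s p' := by
    intro p' hp'
    by_contra! hneg
    have hct : Continuous fun t => slideGap u l b κ ε Y t p' :=
      Continuous.comp (f := fun t : ℝ => (p', t)) hcont (by fun_prop)
    obtain ⟨t, ht, hst⟩ := ((hct.continuousAt.eventually_lt_const hneg).filter_mono
      nhdsWithin_le_nhds |>.and (self_mem_nhdsWithin (s := Set.Ioi s))).exists
    obtain ⟨p'', hp''⟩ := hmem t p' (hs.trans (le_of_lt hst)) hp' ht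
    have h1 : t ≤ s := isMaxOn_iff.1 hmax (p'', t) hp''
    exact absurd hst (not_lt.2 h1)
  have heq : slideGap u l b κ ε Y s p = 0 := le_antisymm hple (hnn p hpD)
  have hmin : IsMinOn (slideGap u l b κ ε Y s) (slideDomain l b κ ε Y) p :=
    isMinOn_iff.2 fun p' hp' => heq.trans_le (hnn p' hp')
  exact ⟨s, hs, p, hpD, (H ε Y s p hε hεε₀ (hs₀.trans_le hs) hY hpD hmin hple).resolve_right
    fun h => h.1 heq, heq, hnn⟩

end IsTravelingWave

end Touching

/-! ### Comparison of the wave with its reflections -/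

section Comparison

variable {F : ℝ → ℝ} {c : ℝ} {u : ℝ → ℝ → ℝ}

namespace IsTravelingWave

lemma exists_approximate_touching (hF : BalancedDoubleWell F) (hc : 0 < c)
    (hu : IsTravelingWave F c u) {l x₀ y₀ : ℝ}
    (H : ∀ ε > 0, ∀ Y, ∃ y ≥ Y, ∀ x ≥ l, u x y ≤ u (2 * l - x) y + ε) (hx₀ : l < x₀)
    (h : u (2 * l - x₀) y₀ < u x₀ y₀) :
    ∃ s₀ > 0, ∃ B : ℝ, ∀ η > 0, ∃ x y s : ℝ, |x| ≤ B ∧ |y| ≤ B ∧ s₀ ≤ s ∧ s ≤ B ∧ l ≤ x ∧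
      |u (2 * l - x) y - u x (y - s)| ≤ η ∧
        ∀ x' y', l + η ≤ x' → y' ≤ 1 / η → u x' (y' - s) ≤ u (2 * l - x') y' + η := by
  obtain ⟨s₀, hs₀, hgap⟩ : ∃ s₀ > 0, u (2 * l - x₀) y₀ < u x₀ (y₀ - s₀) := by
    have hcont : Continuous fun t => u x₀ (y₀ - t) :=
      hu.continuous_comp continuous_const (by fun_prop)
    have h0 : u (2 * l - x₀) y₀ < u x₀ (y₀ - 0) := by rwa [sub_zero]
    obtain ⟨t, ht, hpos⟩ := ((hcont.continuousAt.eventually_const_lt h0).filter_mono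
      nhdsWithin_le_nhds |>.and (self_mem_nhdsWithin (s := Set.Ioi (0 : ℝ)))).exists
    exact ⟨t, hpos, ht⟩
  obtain ⟨K, hK, hbd⟩ := hu.exists_bound hF hc
  obtain ⟨b, hb, κ, hκ, ε₀, hε₀, R, T⟩ := hu.exists_touching hF hc l
  obtain ⟨m, hm, hmle⟩ := hu.exists_le_of_norm_le R
  obtain ⟨R₁, hR₁⟩ := hu.exists_le_of_le hF hc R (half_pos hm)
  set g := u x₀ (y₀ - s₀) - u (2 * l - x₀) y₀ with hg
  have hg0 : 0 < g := sub_pos.2 hgap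
  refine ⟨s₀, hs₀, |R| + 2 * |l| + (x₀ - l) + |R₁|, fun η hη => ?_⟩
  have hbκ : 0 < b / κ := div_pos hb hκ
  set N := K * (b / κ) + 1 with hN
  have hN0 : 0 < N := by positivity
  set ε := min ε₀ (min (min η (g / 2) / N) (min η (x₀ - l) / (b / κ))) with hεdef
  have hx₀l : 0 < x₀ - l := sub_pos.2 hx₀
  have hε : 0 < ε := by positivity
  have hεε₀ : ε ≤ ε₀ := min_le_left _ _
  have hε1 : N * ε ≤ min η (g / 2) := by
    have : ε ≤ min η (g / 2) / N := (min_le_right _ _).trans (min_le_left _ _)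
    rw [le_div_iff₀ hN0] at this
    linarith
  have hε2 : b / κ * ε ≤ min η (x₀ - l) := by
    have : ε ≤ min η (x₀ - l) / (b / κ) := (min_le_right _ _).trans (min_le_right _ _)
    rw [le_div_iff₀ hbκ] at this
    linarith
  obtain ⟨Y, hYge, hY⟩ := H ε hε (max y₀ (1 / η))
  have hτ0 : ∀ y ≤ Y, 0 ≤ slideShift b κ ε Y y := fun y hy =>
    slideShift_nonneg hb.le hκ.le hε.le hy
  have hτ1 : ∀ y, slideShift b κ ε Y y ≤ b / κ * ε := fun y => slideShift_le Y y hb.le hκ.le hε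
  have hclose : ∀ x y, y ≤ Y →
      |slideReflection u l b κ ε Y x y - u (2 * l - x) y| ≤ N * ε := by
    intro x y hy
    have h1 := abs_sub_le_of_hasDerivAt
      (show 2 * l - x ≤ 2 * l + slideShift b κ ε Y y - x by linarith [hτ0 y hy])
      (fun t => hu.hasDerivAt_fst t y) (fun t _ => (hbd t y).1)
    have h2 : K * (2 * l + slideShift b κ ε Y y - x - (2 * l - x)) ≤ K * (b / κ * ε) :=
      mul_le_mul_of_nonneg_left (by linarith [hτ1 y]) hK.le
    have h3 := slideHeight_le hκ.le hε.le hy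
    have h4 := slideHeight_pos κ Y y hε
    have h5 : N * ε = K * (b / κ * ε) + ε := by rw [hN]; ring
    have h6 := abs_le.1 (h1.trans h2)
    rw [slideReflection, h5, abs_le]
    constructor <;> linarith [h6.1, h6.2]
  have hminη := min_le_left η (g / 2)
  have hming := min_le_right η (g / 2)
  have hminη' := min_le_left η (x₀ - l)
  have hminx := min_le_right η (x₀ - l)
  have hy₀Y : y₀ ≤ Y := (le_max_left _ _).trans hYge
  have hp₀ : (x₀, y₀) ∈ slideDomain l b κ ε Y :=
    ⟨by simp only; linarith [hτ0 y₀ hy₀Y, hτ1 y₀], hy₀Y⟩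
  have hneg : slideGap u l b κ ε Y s₀ (x₀, y₀) < 0 := by
    have h1 := (abs_le.1 (hclose x₀ y₀ hy₀Y)).2
    simp only [slideGap]
    linarith
  obtain ⟨s, hs, ⟨x, y⟩, ⟨hxD, hyY⟩, hR, heq, hnn⟩ := T ε Y s₀ _ hp₀ hε hεε₀ hs₀ hY hneg
  simp only at hxD hyY hR
  have heq' : slideReflection u l b κ ε Y x y = u x (y - s) := sub_eq_zero.1 heq
  have hz : -1 + m ≤ u x (y - s) := by
    rw [← heq', slideReflection]
    linarith [hmle _ _ hR, slideHeight_pos κ Y y hε]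
  have hR' := hR
  rw [Prod.norm_def, max_le_iff, Real.norm_eq_abs, Real.norm_eq_abs] at hR'
  simp only at hR'
  obtain ⟨hξR, hyR⟩ := hR'
  have hyR' := abs_le.1 hyR
  have hξR' := abs_le.1 hξR
  have hnorm : ‖(x, y - s)‖ < R₁ := by
    by_contra! hcon
    linarith [hR₁ x (y - s) (by linarith) hcon]
  rw [Prod.norm_def, max_lt_iff, Real.norm_eq_abs, Real.norm_eq_abs, abs_lt, abs_lt] at hnorm
  simp only at hnorm
  have a1 := le_abs_self R
  have a2 := le_abs_self R₁
  have a3 := le_abs_self l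
  have a4 := neg_abs_le l
  have a5 := abs_nonneg R
  have a6 := abs_nonneg R₁
  refine ⟨x, y, s, ?_, ?_, hs, ?_, ?_, ?_, ?_⟩
  · rw [abs_le]
    constructor <;> linarith [hτ0 y hyY, hτ1 y, hξR'.1, hξR'.2]
  · linarith [abs_nonneg l]
  · linarith [hnorm.2.1, abs_nonneg l]
  · linarith [hτ0 y hyY]
  · rw [← heq', abs_sub_comm]
    exact (hclose x y hyY).trans (hε1.trans hminη)
  · intro x' y' hx' hy'
    have hy'Y : y' ≤ Y := (hy'.trans (le_max_right _ _)).trans hYge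
    have h1 := hnn (x', y') ⟨by simp only; linarith [hτ0 y' hy'Y, hτ1 y'], hy'Y⟩
    simp only [slideGap] at h1
    linarith [(abs_le.1 (hclose x' y' hy'Y)).2]

/-- Passing to the limit in the approximate touching points. -/
lemma exists_touching_reflection (hF : BalancedDoubleWell F) (hc : 0 < c)
    (hu : IsTravelingWave F c u) {l x₀ y₀ : ℝ}
    (H : ∀ ε > 0, ∀ Y, ∃ y ≥ Y, ∀ x ≥ l, u x y ≤ u (2 * l - x) y + ε) (hx₀ : l < x₀)
    (h : u (2 * l - x₀) y₀ < u x₀ y₀) :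
    ∃ s > 0, ∃ x y, l ≤ x ∧ u (2 * l - x) y = u x (y - s) ∧
      ∀ x' y', l < x' → u x' (y' - s) ≤ u (2 * l - x') y' := by
  obtain ⟨s₀, hs₀, B, hB⟩ := hu.exists_approximate_touching hF hc H hx₀ h
  choose x y s hx hy hs hsB hlx heq hle using
    fun n : ℕ => hB (1 / ((n : ℝ) + 1)) Nat.one_div_pos_of_nat
  have hcompact : IsCompact (Set.Icc (-B) B ×ˢ (Set.Icc (-B) B ×ˢ Set.Icc s₀ B)) :=
    isCompact_Icc.prod (isCompact_Icc.prod isCompact_Icc)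
  obtain ⟨⟨a, d, σ⟩, ⟨-, -, hσ⟩, φ, hφ, hlim⟩ := hcompact.tendsto_subseq
    (x := fun n => (x n, y n, s n))
    (fun n => ⟨abs_le.1 (hx n), abs_le.1 (hy n), hs n, hsB n⟩)
  have hxl : Tendsto (fun n => x (φ n)) atTop (nhds a) := hlim.fst_nhds
  have hyl : Tendsto (fun n => y (φ n)) atTop (nhds d) := hlim.snd_nhds.fst_nhds
  have hsl : Tendsto (fun n => s (φ n)) atTop (nhds σ) := hlim.snd_nhds.snd_nhds
  have hη : Tendsto (fun n => 1 / ((φ n : ℝ) + 1)) atTop (nhds 0) :=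
    tendsto_one_div_add_atTop_nhds_zero_nat.comp hφ.tendsto_atTop
  have hcomp : ∀ {f g : ℕ → ℝ} {f₀ g₀ : ℝ}, Tendsto f atTop (nhds f₀) →
      Tendsto g atTop (nhds g₀) → Tendsto (fun n => u (f n) (g n)) atTop (nhds (u f₀ g₀)) :=
    fun {f g f₀ g₀} hf hg =>
      (hu.contDiff.continuous.tendsto (f₀, g₀)).comp (hf.prodMk_nhds hg)
  refine ⟨σ, hs₀.trans_le hσ.1, a, d, ge_of_tendsto' hxl fun n => hlx _, ?_, ?_⟩
  · have h1 := ((hcomp (hxl.const_sub (2 * l)) hyl).sub (hcomp hxl (hyl.sub hsl))).abs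
    have h2 := le_of_tendsto_of_tendsto' h1 hη fun n => heq (φ n)
    exact sub_eq_zero.1 (abs_nonpos_iff.1 h2)
  · intro x' y' hx'
    have h1 : Tendsto (fun n => u x' (y' - s (φ n))) atTop (nhds (u x' (y' - σ))) :=
      hcomp tendsto_const_nhds (hsl.const_sub y')
    have h2 : Tendsto (fun n => u (2 * l - x') y' + 1 / ((φ n : ℝ) + 1)) atTop
        (nhds (u (2 * l - x') y' + 0)) := hη.const_add _
    rw [add_zero] at h2
    refine le_of_tendsto_of_tendsto h1 h2 ?_
    have h3 : Tendsto (fun n => (φ n : ℝ)) atTop atTop :=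
      tendsto_natCast_atTop_atTop.comp hφ.tendsto_atTop
    filter_upwards [hη.eventually_le_const (sub_pos.2 hx'), h3.eventually_ge_atTop y']
      with n hn1 hn2
    exact hle (φ n) x' y' (by linarith) (by rw [one_div_one_div]; linarith)

/-- The vertical translates of the wave do not touch its reflection from below. -/
lemma not_touching_reflection (hF : BalancedDoubleWell F) (hc : 0 < c)
    (hu : IsTravelingWave F c u) {l s x y : ℝ} (hs : 0 < s) (hx : l ≤ x)
    (heq : u (2 * l - x) y = u x (y - s)) :
    ¬ ∀ x' y', l < x' → u x' (y' - s) ≤ u (2 * l - x') y' := by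
  intro hle
  have hpos : ∀ y, u l (y - s) < u (2 * l - l) y := fun y => by
    rw [show 2 * l - l = l by ring]
    exact hu.strictMono l (by linarith)
  rcases hx.eq_or_lt with rfl | hlx
  · exact (hpos y).ne' heq
  obtain ⟨M, hM, hbd⟩ := hF.exists_bound
  set w : ℝ → ℝ → ℝ := fun x y => u (2 * l - x) y - u x (y - s) with hw
  have hrefl : ∀ t, HasDerivAt (fun t => 2 * l - t) (-1) t := fun t =>
    (hasDerivAt_id t).const_sub _
  have hsub : ∀ t, HasDerivAt (fun t => t - s) 1 t := fun t => (hasDerivAt_id t).sub_const s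
  have hwx : pdx w = fun x y => -pdx u (2 * l - x) y - pdx u x (y - s) := by
    funext x y
    exact ((((hu.hasDerivAt_fst (2 * l - x) y).comp x (hrefl x)).sub
      (hu.hasDerivAt_fst x (y - s))).congr_deriv (by ring)).deriv
  have hwxx : pdx (pdx w) = fun x y => pdx (pdx u) (2 * l - x) y - pdx (pdx u) x (y - s) := by
    rw [hwx]
    funext x y
    exact ((((hu.hasDerivAt_pdx_fst (2 * l - x) y).comp x (hrefl x)).neg.sub
      (hu.hasDerivAt_pdx_fst x (y - s))).congr_deriv (by ring)).deriv
  have hwy : pdy w = fun x y => pdy u (2 * l - x) y - pdy u x (y - s) := by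
    funext x y
    exact (((hu.hasDerivAt_snd (2 * l - x) y).sub
      ((hu.hasDerivAt_snd x (y - s)).comp y (hsub y))).congr_deriv (by ring)).deriv
  have hwyy : pdy (pdy w) = fun x y => pdy (pdy u) (2 * l - x) y - pdy (pdy u) x (y - s) := by
    rw [hwy]
    funext x y
    exact (((hu.hasDerivAt_pdy_snd (2 * l - x) y).sub
      ((hu.hasDerivAt_pdy_snd x (y - s)).comp y (hsub y))).congr_deriv (by ring)).deriv
  have hw2 : ContDiff ℝ 2 fun p : ℝ × ℝ => w p.1 p.2 :=
    (ContDiff.comp (f := fun p : ℝ × ℝ => (2 * l - p.1, p.2)) hu.contDiff_two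
      (by fun_prop)).sub
      (ContDiff.comp (f := fun p : ℝ × ℝ => (p.1, p.2 - s)) hu.contDiff_two (by fun_prop))
  have hzero : ∀ x', l < x' → w x' y = 0 := fun x' hx' => by
    refine eq_zero_of_nonneg_of_eq_zero hw2 hc.le hM.le
      (fun x y hx => sub_nonneg.2 (hle x y hx)) (fun x y hx => ?_) hlx (sub_eq_zero.2 heq) hx'
    have e1 := hu.equation (2 * l - x) y
    have e2 := hu.equation x (y - s)
    have e3 := hF.abs_deriv_sub_le (fun s hs => (hbd s hs).2.2) (hu.abs_le_one x (y - s))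
      (hu.abs_le_one (2 * l - x) y)
    rw [abs_of_nonneg (sub_nonneg.2 (hle x y hx))] at e3
    rw [hwxx, hwyy, hwy]
    simp only [hw]
    linarith [le_of_abs_le e3]
  have hcont : Continuous fun t => w t y :=
    (hu.continuous_comp (by fun_prop) continuous_const).sub
      (hu.continuous_comp continuous_id continuous_const)
  obtain ⟨t, ht, hlt⟩ := ((hcont.continuousAt.eventually_const_lt
    (show 0 < w l y from sub_pos.2 (hpos y))).filter_mono nhdsWithin_le_nhds |>.and
      (self_mem_nhdsWithin (s := Set.Ioi l))).exists
  exact ht.ne' (hzero t hlt)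

lemma le_reflection (hF : BalancedDoubleWell F) (hc : 0 < c) (hu : IsTravelingWave F c u) {l : ℝ}
    (H : ∀ ε > 0, ∀ Y, ∃ y ≥ Y, ∀ x ≥ l, u x y ≤ u (2 * l - x) y + ε) {x : ℝ} (y : ℝ)
    (hx : l ≤ x) : u x y ≤ u (2 * l - x) y := by
  rcases hx.eq_or_lt with rfl | hlx
  · rw [show 2 * l - l = l by ring]
  by_contra! hcon
  obtain ⟨s, hs, a, d, hla, heq, hle⟩ := hu.exists_touching_reflection hF hc H hlx hcon
  exact hu.not_touching_reflection hF hc hs hla heq hle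

/-- On each vertical axis the wave compares with its reflection in one direction. -/
lemma le_reflection_or_reflection_le (hF : BalancedDoubleWell F) (hc : 0 < c)
    (hu : IsTravelingWave F c u) (l : ℝ) :
    (∀ x y, l ≤ x → u x y ≤ u (2 * l - x) y) ∨ ∀ x y, l ≤ x → u (2 * l - x) y ≤ u x y := by
  rcases hu.frequently_le_or_frequently_ge hF hc l with H | H
  · exact Or.inl fun x y hx => hu.le_reflection hF hc H y hx
  · refine Or.inr fun x y hx => ?_
    have h := hu.reflect.le_reflection hF hc (l := -l) (x := x - 2 * l) (fun ε hε Y => ?_) y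
      (by linarith)
    · convert h using 2 <;> ring
    · obtain ⟨y, hy, h⟩ := H ε hε Y
      refine ⟨y, hy, fun x hx => ?_⟩
      have h1 := h (x + 2 * l) (by linarith)
      convert h1 using 2
      · ring_nf
      · ring_nf

end IsTravelingWave

end Comparison

/-! ### Symmetry -/

section Symmetry

variable {F : ℝ → ℝ} {c : ℝ} {u : ℝ → ℝ → ℝ}

namespace IsTravelingWave

lemma exists_even_axis (hF : BalancedDoubleWell F) (hc : 0 < c) (hu : IsTravelingWave F c u) :
    ∃ x₀ : ℝ, ∀ x y : ℝ, u (x₀ + x) y = u (x₀ - x) y := by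
  set A : Set ℝ := {l | ∀ t y, 0 ≤ t → u (l + t) y ≤ u (l - t) y} with hA
  set B : Set ℝ := {l | ∀ t y, 0 ≤ t → u (l - t) y ≤ u (l + t) y} with hB
  have hAB : ∀ l, l ∈ A ∨ l ∈ B := fun l => by
    refine (hu.le_reflection_or_reflection_le hF hc l).imp (fun h t y ht => ?_)
      fun h t y ht => ?_
    all_goals
      have h1 := h (l + t) y (by linarith)
      rwa [show 2 * l - (l + t) = l - t by ring] at h1
  have hAclosed : IsClosed A := by
    simp only [hA, Set.ofPred_forall]
    exact isClosed_iInter fun t => isClosed_iInter fun y => isClosed_iInter fun _ =>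
      isClosed_le (hu.continuous_comp (by fun_prop) continuous_const)
        (hu.continuous_comp (by fun_prop) continuous_const)
  have hBclosed : IsClosed B := by
    simp only [hB, Set.ofPred_forall]
    exact isClosed_iInter fun t => isClosed_iInter fun y => isClosed_iInter fun _ =>
      isClosed_le (hu.continuous_comp (by fun_prop) continuous_const)
        (hu.continuous_comp (by fun_prop) continuous_const)
  have hAne : A.Nonempty := by
    by_contra! hempty
    refine absurd (hu.neg_one_lt 0 0) (not_lt.2 ?_)
    refine ge_of_tendsto (hu.tendsto_atTop hF hc 0) ?_
    filter_upwards [eventually_ge_atTop 0] with x hx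
    have hmem : x / 2 ∈ B := (hAB (x / 2)).resolve_left (by simp [hempty])
    have h1 := hmem (x / 2) 0 (by linarith)
    rwa [sub_self, add_halves] at h1
  have hBne : B.Nonempty := by
    by_contra! hempty
    refine absurd (hu.neg_one_lt 0 0) (not_lt.2 ?_)
    refine ge_of_tendsto (hu.tendsto_atBot hF hc 0) ?_
    filter_upwards [eventually_le_atBot 0] with x hx
    have hmem : x / 2 ∈ A := (hAB (x / 2)).resolve_right (by simp [hempty])
    have h1 := hmem (-(x / 2)) 0 (by linarith)
    rwa [add_neg_cancel, sub_neg_eq_add, add_halves] at h1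
  obtain ⟨x₀, -, hxA, hxB⟩ := isPreconnected_closed_iff.1 isPreconnected_univ A B hAclosed hBclosed
    (fun l _ => hAB l) (by simpa using hAne) (by simpa using hBne)
  refine ⟨x₀, fun x y => ?_⟩
  rcases le_total 0 x with hx | hx
  · exact le_antisymm (hxA x y hx) (hxB x y hx)
  · have h1 := le_antisymm (hxA (-x) y (by linarith)) (hxB (-x) y (by linarith))
    rw [sub_neg_eq_add, ← sub_eq_add_neg] at h1
    exact h1.symm

lemma antitoneOn_of_even (hF : BalancedDoubleWell F) (hc : 0 < c) (hu : IsTravelingWave F c u)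
    {x₀ : ℝ} (heven : ∀ x y : ℝ, u (x₀ + x) y = u (x₀ - x) y) (y : ℝ) :
    AntitoneOn (fun x => u x y) (Set.Ioi x₀) := by
  intro a ha b hb hab
  have hl : x₀ < (a + b) / 2 := by
    have h1 : x₀ < a := ha
    linarith
  rcases hu.le_reflection_or_reflection_le hF hc ((a + b) / 2) with h | h
  · have h1 := h b y (by linarith)
    rwa [show 2 * ((a + b) / 2) - b = a by ring] at h1
  exfalso
  set l := (a + b) / 2 with hldef
  have hstep : ∀ x, l ≤ x → u (x - 2 * (l - x₀)) y ≤ u x y := fun x hx => by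
    have h1 := heven (2 * l - x - x₀) y
    rw [show x₀ + (2 * l - x - x₀) = 2 * l - x by ring,
      show x₀ - (2 * l - x - x₀) = x - 2 * (l - x₀) by ring] at h1
    exact h1 ▸ h x y hx
  have hd : 0 < 2 * (l - x₀) := by linarith
  have hiter : ∀ n : ℕ, u l y ≤ u (l + n * (2 * (l - x₀))) y := fun n => by
    induction n with
    | zero => simp
    | succ n ih =>
      have h1 := hstep (l + (n + 1 : ℕ) * (2 * (l - x₀))) (by
        have : 0 ≤ ((n + 1 : ℕ) : ℝ) * (2 * (l - x₀)) := by positivity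
        linarith)
      rw [show l + (n + 1 : ℕ) * (2 * (l - x₀)) - 2 * (l - x₀) = l + n * (2 * (l - x₀)) by
        push_cast; ring] at h1
      exact ih.trans h1
  have hlim : Tendsto (fun n : ℕ => l + (n : ℝ) * (2 * (l - x₀))) atTop atTop :=
    tendsto_atTop_add_const_left _ _ (tendsto_natCast_atTop_atTop.atTop_mul_const hd)
  exact absurd (hu.neg_one_lt l y)
    (not_lt.2 (ge_of_tendsto' ((hu.tendsto_atTop hF hc y).comp hlim) hiter))

lemma pdx_neg_of_even (hF : BalancedDoubleWell F) (hc : 0 < c) (hu : IsTravelingWave F c u)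
    {x₀ : ℝ} (heven : ∀ x y : ℝ, u (x₀ + x) y = u (x₀ - x) y) {x : ℝ} (y : ℝ) (hx : x₀ < x) :
    pdx u x y < 0 := by
  have hle : ∀ x y, x₀ < x → pdx u x y ≤ 0 := fun x y hx => by
    have h1 := (hu.antitoneOn_of_even hF hc heven y).derivWithin_nonpos (x := x)
    rwa [derivWithin_of_isOpen isOpen_Ioi hx] at h1
  refine lt_of_le_of_ne (hle x y hx) fun h0 => ?_
  obtain ⟨M, hM, hbd⟩ := hF.exists_bound
  set w : ℝ → ℝ → ℝ := fun x y => -pdx u x y with hw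
  have hwx : pdx w = fun x y => -pdx (pdx u) x y := by
    funext x y
    exact (hu.hasDerivAt_pdx_fst x y).neg.deriv
  have hwy : pdy w = fun x y => -pdy (pdx u) x y := by
    funext x y
    exact (hasDerivAt_pdy (hu.contDiff_pdx.differentiable (by norm_num)) x y).neg.deriv
  have hwxx : pdx (pdx w) = fun x y => -pdx (pdx (pdx u)) x y := by
    rw [hwx]
    funext x y
    exact deriv.fun_neg
  have hwyy : pdy (pdy w) = fun x y => -pdy (pdy (pdx u)) x y := by
    rw [hwy]
    funext x y
    exact deriv.fun_neg
  have hzero : ∀ t, x₀ < t → pdx u t y = 0 := fun t ht => by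
    refine neg_eq_zero.1 (eq_zero_of_nonneg_of_eq_zero (w := w) hu.contDiff_pdx.neg hc.le hM.le
      (fun x y hx => neg_nonneg.2 (hle x y hx)) (fun x y hx => ?_) hx (neg_eq_zero.2 h0) ht)
    have e1 : pdx (pdx (pdx u)) x y + pdy (pdy (pdx u)) x y + c * pdy (pdx u) x y =
        deriv (deriv F) (u x y) * pdx u x y := hu.equation_pdx hF x y
    have e2 := mul_le_mul_of_nonneg_right
      (le_of_abs_le (hbd (u x y) (hu.abs_le_one x y)).2.2) (neg_nonneg.2 (hle x y hx))
    rw [hwxx, hwyy, hwy]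
    simp only [hw]
    linarith
  refine absurd (hu.neg_one_lt x y) (not_lt.2 (ge_of_tendsto (hu.tendsto_atTop hF hc y) ?_))
  filter_upwards [eventually_ge_atTop x] with t ht
  have h1 := abs_sub_le_of_hasDerivAt ht (fun t => hu.hasDerivAt_fst t y) (C := 0)
    (fun t ht => by rw [hzero t (hx.trans_le ht.1), abs_zero])
  rw [zero_mul, abs_nonpos_iff, sub_eq_zero] at h1
  exact h1.ge

end IsTravelingWave

end Symmetry

/-- Even symmetry of monotone traveling wave solutions of the balanced
Allen-Cahn equation in the plane (Theorem 1.1). -/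
theorem even_symmetry_of_traveling_wave
    (F : ℝ → ℝ) (hF : BalancedDoubleWell F) (c : ℝ) (hc : 0 < c)
    (u : ℝ → ℝ → ℝ) (hu : IsTravelingWave F c u) :
    ∃ x₀ : ℝ, (∀ x y : ℝ, u (x₀ + x) y = u (x₀ - x) y) ∧
      (∀ x y : ℝ, x₀ < x → pdx u x y < 0) := by
  obtain ⟨x₀, heven⟩ := hu.exists_even_axis hF hc
  exact ⟨x₀, heven, fun x y hx => hu.pdx_neg_of_even hF hc heven y hx⟩
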